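/- For every n ≥ 2, the group K_n has cohomological dimension n−1; that is, for every ℤ-linear representation M of K_n the group cohomology H^i(K_n; M) vanishes for all i ≥ n, and there exists a ℤ-linear representation M of K_n with H^{n−1}(K_n; M) ≠ 0. -/

import Mathlib

open FreeGroup

/-- The free group on `n` generators. -/
abbrev FG (n : ℕ) : Type := FreeGroup (Fin n)

/-- The pure symmetric automorphism group `PΣ_n`: automorphisms sending each
generator to a conjugate of itself. -/
def PSigmaAut (n : ℕ) : Subgroup (MulAut (FG n)) where
  carrier := {φ | ∀ i : Fin n, ∃ w : FG n, φ (of i) = w * of i * w⁻¹}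
  one_mem' := fun i => ⟨1, by simp⟩
  mul_mem' := by
    rintro φ ψ hφ hψ i
    obtain ⟨w, hw⟩ := hψ i
    obtain ⟨v, hv⟩ := hφ i
    refine ⟨φ w * v, ?_⟩
    simp only [MulAut.mul_apply, hw, _root_.map_mul, _root_.map_inv, hv, mul_inv_rev, mul_assoc]
  inv_mem' := by
    intro φ hφ i
    obtain ⟨w, hw⟩ := hφ i
    refine ⟨(φ⁻¹ w)⁻¹, ?_⟩
    refine φ.injective ?_
    simp only [MulAut.apply_inv_self, _root_.map_mul, _root_.map_inv, inv_inv, hw]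
    group

/-- The projection `F_n → F_{n-1}` sending `x_n ↦ 1` and `x_i ↦ x_i` for `i < n-1`. -/
def projHom (n : ℕ) : FG n →* FG (n - 1) :=
  FreeGroup.lift fun i => if h : (i : ℕ) < n - 1 then of (⟨i, h⟩ : Fin (n - 1)) else 1

/-- The inclusion `F_{n-1} → F_n`. -/
def castHom (n : ℕ) : FG (n - 1) →* FG n :=
  FreeGroup.lift fun i => of (Fin.castLE (Nat.sub_le n 1) i)

/-- The endomorphism of `F_{n-1}` induced by an automorphism of `F_n`. -/
def desc (n : ℕ) (φ : MulAut (FG n)) : FG (n - 1) →* FG (n - 1) :=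
  (projHom n).comp ((φ : FG n ≃* FG n).toMonoidHom.comp (castHom n))

lemma desc_proj {n : ℕ} {φ : MulAut (FG n)} (hφ : φ ∈ PSigmaAut n) (x : FG n) :
    desc n φ (projHom n x) = projHom n (φ x) := by
  have : (desc n φ).comp (projHom n) = (projHom n).comp (φ : FG n ≃* FG n).toMonoidHom := by
    apply FreeGroup.ext_hom
    intro i
    by_cases h : (i : ℕ) < n - 1
    · simp only [MonoidHom.comp_apply, projHom, FreeGroup.lift_apply_of, dif_pos h]
      simp only [desc, MonoidHom.comp_apply, castHom, FreeGroup.lift_apply_of]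
      congr 2
    · obtain ⟨w, hw⟩ := hφ i
      simp only [MonoidHom.comp_apply, projHom, FreeGroup.lift_apply_of, dif_neg h,
        MulEquiv.coe_toMonoidHom, hw, _root_.map_mul, _root_.map_inv, _root_.map_one]
      simp
  exact DFunLike.congr_fun this x

lemma desc_mul {n : ℕ} {φ : MulAut (FG n)} (hφ : φ ∈ PSigmaAut n) (ψ : MulAut (FG n)) :
    desc n (φ * ψ) = (desc n φ).comp (desc n ψ) := by
  apply FreeGroup.ext_hom
  intro i
  simp only [desc, MonoidHom.comp_apply, MulEquiv.coe_toMonoidHom, MulAut.mul_apply]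
  exact (desc_proj hφ _).symm

lemma desc_one (n : ℕ) : desc n 1 = MonoidHom.id (FG (n - 1)) := by
  apply FreeGroup.ext_hom
  intro i
  simp only [desc, MonoidHom.comp_apply, MulEquiv.coe_toMonoidHom, MulAut.one_apply,
    castHom, FreeGroup.lift_apply_of, projHom, MonoidHom.id_apply]
  rw [dif_pos (show ((Fin.castLE (Nat.sub_le n 1) i : Fin n) : ℕ) < n - 1 from i.isLt)]
  exact congrArg of (Fin.ext rfl)

/-- The automorphism of `F_{n-1}` induced by an element of `PΣ_n`. -/
def descAut (n : ℕ) (φ : PSigmaAut n) : MulAut (FG (n - 1)) :=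
  MonoidHom.toMulEquiv (desc n ↑φ) (desc n ↑(φ⁻¹))
    (by
      rw [← desc_mul (φ⁻¹).2 ↑φ]
      norm_num [desc_one])
    (by
      rw [← desc_mul φ.2 ↑(φ⁻¹)]
      norm_num [desc_one])

lemma descAut_mem (n : ℕ) (φ : PSigmaAut n) : descAut n φ ∈ PSigmaAut (n - 1) := by
  intro i
  obtain ⟨w, hw⟩ := φ.2 (Fin.castLE (Nat.sub_le n 1) i)
  refine ⟨projHom n w, ?_⟩
  have : descAut n φ (of i) = projHom n ((φ : MulAut (FG n)) (of (Fin.castLE (Nat.sub_le n 1) i))) := by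
    simp only [descAut, MonoidHom.toMulEquiv, MulEquiv.coe_mk, Equiv.coe_fn_mk, desc,
      MonoidHom.comp_apply, MulEquiv.coe_toMonoidHom, castHom, FreeGroup.lift_apply_of]
  rw [this, hw]
  simp only [_root_.map_mul, _root_.map_inv, projHom, FreeGroup.lift_apply_of]
  rw [dif_pos (show ((Fin.castLE (Nat.sub_le n 1) i : Fin n) : ℕ) < n - 1 from i.isLt)]
  congr 2

/-- The homomorphism `π_n : PΣ_n → PΣ_{n-1}` induced by killing the last generator. -/
def piHom (n : ℕ) : PSigmaAut n →* PSigmaAut (n - 1) :=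
  MonoidHom.mk' (fun φ => ⟨descAut n φ, descAut_mem n φ⟩)
    (by
      intro φ ψ
      refine Subtype.ext (MulEquiv.ext fun x => ?_)
      show desc n ↑(φ * ψ) x = (descAut n φ * descAut n ψ) x
      rw [MulAut.mul_apply]
      show _ = desc n ↑φ (desc n ↑ψ x)
      rw [Subgroup.coe_mul, desc_mul φ.2]
      rfl)

/-- The kernel `K_n` of `π_n : PΣ_n → PΣ_{n-1}`. -/
def Kn (n : ℕ) : Subgroup (PSigmaAut n) := (piHom n).ker

/-- The monoid hom underlying `α_{ij}`: sends `x_i ↦ x_j x_i x_j⁻¹` and fixes the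
other generators. -/
def alphaHom (n : ℕ) (i j : Fin n) : FG n →* FG n :=
  FreeGroup.lift fun r => if r = i then of j * of i * (of j)⁻¹ else of r

/-- The inverse of `alphaHom`. -/
def alphaInvHom (n : ℕ) (i j : Fin n) : FG n →* FG n :=
  FreeGroup.lift fun r => if r = i then (of j)⁻¹ * of i * of j else of r

/-- The McCool generator `α_{ij} ∈ Aut(F_n)`, sending `x_i ↦ x_j x_i x_j⁻¹` and fixing
the other generators (defined to be the identity if `i = j`). -/
def alphaAut (n : ℕ) (i j : Fin n) : MulAut (FG n) :=
  if h : i = j then 1 else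
    MonoidHom.toMulEquiv (alphaHom n i j) (alphaInvHom n i j)
      (by
        apply FreeGroup.ext_hom
        intro r
        by_cases hr : r = i
        · subst hr
          simp [alphaHom, alphaInvHom, Ne.symm h, mul_assoc]
        · simp [alphaHom, alphaInvHom, hr])
      (by
        apply FreeGroup.ext_hom
        intro r
        by_cases hr : r = i
        · subst hr
          simp [alphaHom, alphaInvHom, Ne.symm h, mul_assoc]
        · simp [alphaHom, alphaInvHom, hr])

lemma alphaAut_apply_of (n : ℕ) {i j : Fin n} (hij : i ≠ j) (r : Fin n) :
    alphaAut n i j (of r) = if r = i then of j * of i * (of j)⁻¹ else of r := by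
  simp only [alphaAut, dif_neg hij]
  show alphaHom n i j (of r) = _
  simp [alphaHom]

lemma alphaAut_mem (n : ℕ) (i j : Fin n) : alphaAut n i j ∈ PSigmaAut n := by
  by_cases h : i = j
  · simp only [alphaAut, dif_pos h]
    exact (PSigmaAut n).one_mem
  · intro r
    rw [alphaAut_apply_of n h r]
    by_cases hr : r = i
    · subst hr
      exact ⟨of j, by simp⟩
    · exact ⟨1, by simp [hr]⟩

/-- `α_{ij}` as an element of `PΣ_n`. -/
def alphaP (n : ℕ) (i j : Fin n) : PSigmaAut n := ⟨alphaAut n i j, alphaAut_mem n i j⟩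

/-!
Twisting by a power of `x_i` conjugates some of the generators by that power. Cells are the finite
sets of elements of `PΣ_n` obtained from one element by a box of commuting twists. A chain of cells
has at most `n` members, and left multiplication by `PΣ_n` is free on nonempty chains. Hence, once
the order complex of the poset of cells is known to be acyclic, its chains form a free resolution of
the trivial module `ℤ` of length `n - 1` over every subgroup of `PΣ_n`.

Acyclicity is a peak reduction argument. The height of `g` is the lexicographic vector of the
lengths of the words `g⁻¹ y`. Adding the elements of `PΣ_n` in order of increasing height, the new
cells at `g` are given by the sets of pairwise compatible cuts whose twists lower the height. If one
of two crossing cuts lowers the height as much as any cut does and the other one lowers it, then so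
does a corner of the two; pushing the crossing cuts into corners contracts the complex of compatible
sets. If no cut lowers the height, no edge is added, and the connectedness of the whole complex
comes from McCool's generators of `PΣ_n`.

The bound is attained since the twists by `x_n` form a subgroup `ℤ ^ (n - 1)` of `K_n`, on whose
fundamental class the product of the `n - 1` conjugation exponents takes the value `1`.
-/

/-! ### Simplicial chains of a partial order -/

section OrderComplex

open Finset
open scoped Classical

variable {P Q : Type*} [PartialOrder P] [PartialOrder Q]

/-- The sign `(-1)^k` attached to the face opposite to the `k`-th vertex `x` of the simplex `s`. -/
noncomputable def simplexSign (s : Finset P) (x : P) : ℤ := (-1) ^ #{y ∈ s | y < x}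

/-- The simplicial boundary. The vertices of a simplex are ordered by `P`, so this is the boundary
of the augmented chain complex of the order complex only on chains of `P`. -/
noncomputable def boundary : (Finset P →₀ ℤ) →ₗ[ℤ] (Finset P →₀ ℤ) :=
  Finsupp.linearCombination ℤ fun s => ∑ x ∈ s, Finsupp.single (s.erase x) (simplexSign s x)

/-- The operator adjoining the vertex `c` to a simplex; it is a contracting homotopy on simplices
comparable with `c`. -/
noncomputable def cone (c : P) : (Finset P →₀ ℤ) →ₗ[ℤ] (Finset P →₀ ℤ) :=
  Finsupp.linearCombination ℤ fun s =>
    if c ∈ s then 0 else Finsupp.single (insert c s) (simplexSign s c)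

/-- The operator removing the vertex `c` from the simplices containing it and killing the others;
it is a one-sided inverse of `cone c`. -/
noncomputable def uncone (c : P) : (Finset P →₀ ℤ) →ₗ[ℤ] (Finset P →₀ ℤ) :=
  Finsupp.linearCombination ℤ fun s =>
    if c ∈ s then Finsupp.single (s.erase c) (simplexSign s c) else 0

lemma boundary_single (s : Finset P) :
    boundary (Finsupp.single s 1) =
      ∑ x ∈ s, Finsupp.single (s.erase x) (simplexSign s x) := by
  simp [boundary]

lemma boundary_single_empty : boundary (Finsupp.single (∅ : Finset P) 1) = 0 := by
  simp [boundary_single]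

lemma cone_single_of_mem {c : P} {s : Finset P} (h : c ∈ s) (a : ℤ) :
    cone c (Finsupp.single s a) = 0 := by
  simp [cone, h]

lemma cone_single_of_notMem {c : P} {s : Finset P} (h : c ∉ s) (a : ℤ) :
    cone c (Finsupp.single s a) = Finsupp.single (insert c s) (a * simplexSign s c) := by
  simp [cone, h]

lemma uncone_single_of_mem {c : P} {s : Finset P} (h : c ∈ s) (a : ℤ) :
    uncone c (Finsupp.single s a) = Finsupp.single (s.erase c) (a * simplexSign s c) := by
  simp [uncone, h]

lemma uncone_single_of_notMem {c : P} {s : Finset P} (h : c ∉ s) (a : ℤ) :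
    uncone c (Finsupp.single s a) = 0 := by
  simp [uncone, h]

lemma simplexSign_mul_self (s : Finset P) (x : P) : simplexSign s x * simplexSign s x = 1 := by
  rw [simplexSign, ← mul_pow]
  norm_num

lemma simplexSign_insert {s : Finset P} {c : P} (x : P) (hc : c ∉ s) :
    simplexSign (insert c s) x = if c < x then -simplexSign s x else simplexSign s x := by
  unfold simplexSign
  rw [filter_insert]
  split_ifs with h
  · rw [card_insert_of_notMem (by simp [hc]), pow_succ, mul_neg_one]
  · rfl

lemma simplexSign_erase {s : Finset P} {c : P} (x : P) (hc : c ∈ s) :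
    simplexSign (s.erase c) x = if c < x then -simplexSign s x else simplexSign s x := by
  have h := simplexSign_insert x (notMem_erase c s)
  rw [insert_erase hc] at h
  split_ifs at h ⊢ <;> simp [h]

lemma simplexSign_insert_self {s : Finset P} {c : P} (hc : c ∉ s) :
    simplexSign (insert c s) c = simplexSign s c := by
  rw [simplexSign_insert c hc, if_neg (lt_irrefl c)]

lemma simplexSign_erase_self {s : Finset P} {c : P} (hc : c ∈ s) :
    simplexSign (s.erase c) c = simplexSign s c := by
  rw [simplexSign_erase c hc, if_neg (lt_irrefl c)]

lemma uncone_cone_single {c : P} {s : Finset P} (h : c ∉ s) :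
    uncone c (cone c (Finsupp.single s 1)) = Finsupp.single s 1 := by
  rw [cone_single_of_notMem h, uncone_single_of_mem (mem_insert_self c s),
    simplexSign_insert_self h, erase_insert h, one_mul, simplexSign_mul_self]

lemma cone_uncone_single {c : P} {s : Finset P} (h : c ∈ s) :
    cone c (uncone c (Finsupp.single s 1)) = Finsupp.single s 1 := by
  rw [uncone_single_of_mem h, cone_single_of_notMem (notMem_erase c s), insert_erase h,
    simplexSign_erase_self h, one_mul, simplexSign_mul_self]

/-- The chains of `k` elements of `S`, that is, the `(k - 1)`-simplices of the order complex. -/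
def orderSimplices (S : Set P) (k : ℕ) : Set (Finset P) :=
  {s | ↑s ⊆ S ∧ IsChain (· ≤ ·) (s : Set P) ∧ #s = k}

/-- The augmented simplicial chains of the order complex of `S`, indexed by the number `k` of
vertices of the simplices. -/
noncomputable def orderChains (S : Set P) (k : ℕ) : Submodule ℤ (Finset P →₀ ℤ) :=
  Finsupp.supported ℤ ℤ (orderSimplices S k)

lemma orderSimplices_mono {S T : Set P} (h : S ⊆ T) (k : ℕ) :
    orderSimplices S k ⊆ orderSimplices T k :=
  fun _ hs => ⟨hs.1.trans h, hs.2⟩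

lemma erase_mem_orderSimplices {S : Set P} {k : ℕ} {s : Finset P}
    (hs : s ∈ orderSimplices S (k + 1)) {x : P} (hx : x ∈ s) :
    s.erase x ∈ orderSimplices S k := by
  have hsub : ((s.erase x : Finset P) : Set P) ⊆ s := coe_subset.2 (erase_subset x s)
  exact ⟨hsub.trans hs.1, hs.2.1.mono hsub, by rw [card_erase_of_mem hx, hs.2.2]; rfl⟩

lemma insert_mem_orderSimplices {S : Set P} {k : ℕ} {s : Finset P} (hs : s ∈ orderSimplices S k)
    {c : P} (hc : c ∉ s) (hS : ∀ x ∈ S, x ≤ c ∨ c ≤ x) :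
    insert c s ∈ orderSimplices (insert c S) (k + 1) := by
  refine ⟨?_, ?_, by rw [card_insert_of_notMem hc, hs.2.2]⟩
  · rw [coe_insert]
    exact Set.insert_subset_insert hs.1
  · rw [coe_insert]
    exact hs.2.1.insert fun x hx _ => (hS x (hs.1 hx)).symm

lemma single_mem_orderChains {S : Set P} {k : ℕ} {s : Finset P} (hs : s ∈ orderSimplices S k)
    (a : ℤ) : Finsupp.single s a ∈ orderChains S k :=
  Finsupp.single_mem_supported ℤ a hs

lemma eqOn_orderChains {S : Set P} {k : ℕ} {V : Type*} [AddCommGroup V]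
    {f g : (Finset P →₀ ℤ) →ₗ[ℤ] V}
    (h : ∀ s ∈ orderSimplices S k, f (Finsupp.single s 1) = g (Finsupp.single s 1))
    {z : Finset P →₀ ℤ} (hz : z ∈ orderChains S k) : f z = g z := by
  rw [orderChains, Finsupp.supported_eq_span_single] at hz
  exact LinearMap.eqOn_span (Set.forall_mem_image.2 h) hz

lemma map_mem_of_mem_orderChains {S : Set P} {k : ℕ} {V : Type*} [AddCommGroup V]
    {f : (Finset P →₀ ℤ) →ₗ[ℤ] V} {W : Submodule ℤ V}
    (h : ∀ s ∈ orderSimplices S k, f (Finsupp.single s 1) ∈ W)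
    {z : Finset P →₀ ℤ} (hz : z ∈ orderChains S k) : f z ∈ W := by
  rw [orderChains, Finsupp.supported_eq_span_single] at hz
  exact (Submodule.span_le (p := W.comap f)).2 (Set.image_subset_iff.2 h) hz

lemma orderChains_mono {S T : Set P} (h : S ⊆ T) (k : ℕ) : orderChains S k ≤ orderChains T k :=
  Finsupp.supported_mono (orderSimplices_mono h k)

lemma boundary_mem_orderChains {S : Set P} {k : ℕ} {z : Finset P →₀ ℤ}
    (hz : z ∈ orderChains S (k + 1)) : boundary z ∈ orderChains S k := by
  refine map_mem_of_mem_orderChains (fun s hs => ?_) hz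
  rw [boundary_single]
  exact Submodule.sum_mem _ fun x hx =>
    single_mem_orderChains (erase_mem_orderSimplices hs hx) _

lemma boundary_eq_zero_of_mem_orderChains_zero {S : Set P} {z : Finset P →₀ ℤ}
    (hz : z ∈ orderChains S 0) : boundary z = 0 :=
  eqOn_orderChains (f := boundary) (g := 0)
    (fun s hs => by rw [card_eq_zero.1 hs.2.2, boundary_single_empty]; rfl) hz

lemma cone_mem_orderChains {S : Set P} {k : ℕ} {c : P} (hS : ∀ x ∈ S, x ≤ c ∨ c ≤ x)
    {z : Finset P →₀ ℤ} (hz : z ∈ orderChains S k) :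
    cone c z ∈ orderChains (insert c S) (k + 1) := by
  refine map_mem_of_mem_orderChains (fun s hs => ?_) hz
  by_cases hc : c ∈ s
  · rw [cone_single_of_mem hc]
    exact Submodule.zero_mem _
  · rw [cone_single_of_notMem hc]
    exact single_mem_orderChains (insert_mem_orderSimplices hs hc hS) _

lemma uncone_cone_of_mem_orderChains {S : Set P} {k : ℕ} {c : P} (hc : c ∉ S)
    {z : Finset P →₀ ℤ} (hz : z ∈ orderChains S k) : uncone c (cone c z) = z :=
  eqOn_orderChains (f := uncone c ∘ₗ cone c) (g := LinearMap.id)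
    (fun _ hs => uncone_cone_single fun h => hc (hs.1 h)) hz

lemma uncone_eq_zero_of_mem_orderChains {S : Set P} {k : ℕ} {c : P} (hc : c ∉ S)
    {z : Finset P →₀ ℤ} (hz : z ∈ orderChains S k) : uncone c z = 0 :=
  eqOn_orderChains (f := uncone c) (g := 0)
    (fun _ hs => uncone_single_of_notMem (fun h => hc (hs.1 h)) 1) hz

lemma boundary_cone_single_add {c : P} {s : Finset P} (hs : ∀ x ∈ s, x ≤ c ∨ c ≤ x) :
    boundary (cone c (Finsupp.single s 1)) + cone c (boundary (Finsupp.single s 1)) =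
      Finsupp.single s 1 := by
  rw [boundary_single, map_sum]
  by_cases hc : c ∈ s
  · rw [cone_single_of_mem hc, _root_.map_zero, zero_add, sum_eq_single_of_mem c hc]
    · rw [cone_single_of_notMem (notMem_erase c s), insert_erase hc, simplexSign_erase_self hc,
        simplexSign_mul_self]
    · exact fun x _ hxc => cone_single_of_mem (mem_erase.2 ⟨hxc.symm, hc⟩) _
  · have hscale : (Finsupp.single (insert c s) (1 * simplexSign s c) : Finset P →₀ ℤ) =
        simplexSign s c • Finsupp.single (insert c s) 1 := by simp
    rw [cone_single_of_notMem hc, hscale, map_smul, boundary_single, sum_insert hc,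
      erase_insert hc, simplexSign_insert_self hc, smul_add, Finset.smul_sum, add_assoc,
      ← sum_add_distrib, sum_eq_zero]
    · simp [simplexSign_mul_self]
    · intro x hx
      have hxc : x ≠ c := fun h => hc (h ▸ hx)
      rw [cone_single_of_notMem (fun h => hc (mem_of_mem_erase h)), erase_insert_of_ne hxc.symm,
        simplexSign_insert x hc, simplexSign_erase c hx, Finsupp.smul_single, ← Finsupp.single_add]
      rcases hs x hx with h | h
      · have hlt : x < c := lt_of_le_of_ne h hxc
        simp [hlt, hlt.asymm, mul_comm]
      · have hlt : c < x := lt_of_le_of_ne h hxc.symm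
        simp [hlt, hlt.asymm, mul_comm]

lemma boundary_cone_add {S : Set P} {k : ℕ} {c : P} (hS : ∀ x ∈ S, x ≤ c ∨ c ≤ x)
    {z : Finset P →₀ ℤ} (hz : z ∈ orderChains S k) :
    boundary (cone c z) + cone c (boundary z) = z :=
  eqOn_orderChains (f := boundary ∘ₗ cone c + cone c ∘ₗ boundary) (g := LinearMap.id)
    (fun _ hs => boundary_cone_single_add fun x hx => hS x (hs.1 hx)) hz

/- A nonempty simplex is, up to sign, a cone `c * t`, and `∂(c * t) = t - c * ∂t`; applying `∂`
once more gives `∂t - (∂t - c * ∂∂t)`, which vanishes by induction. -/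
lemma boundary_boundary {S : Set P} {k : ℕ} {z : Finset P →₀ ℤ} (hz : z ∈ orderChains S k) :
    boundary (boundary z) = 0 := by
  induction k generalizing S z with
  | zero => rw [boundary_eq_zero_of_mem_orderChains_zero hz, _root_.map_zero]
  | succ k ih =>
    suffices hsimplex : ∀ s ∈ orderSimplices S (k + 1),
        (boundary ∘ₗ boundary) (Finsupp.single s (1 : ℤ)) = (0 : Finset P →₀ ℤ) from
      map_mem_of_mem_orderChains (W := ⊥) (f := boundary ∘ₗ boundary)
        (fun s hs => (Submodule.mem_bot ℤ).2 (hsimplex s hs)) hz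
    intro s hs
    obtain ⟨c, hc⟩ : s.Nonempty := by rw [← card_pos, hs.2.2]; omega
    have hcomp : ∀ x ∈ (s : Set P), x ≤ c ∨ c ≤ x := fun x hx => hs.2.1.total hx hc
    have ht : uncone c (Finsupp.single s 1) ∈ orderChains (s : Set P) k := by
      rw [uncone_single_of_mem hc]
      exact single_mem_orderChains (erase_mem_orderSimplices ⟨subset_rfl, hs.2⟩ hc) _
    set t := uncone c (Finsupp.single s 1) with t_def
    have hdt : boundary (cone c (boundary t)) = boundary t := by
      cases k with
      | zero => simp [boundary_eq_zero_of_mem_orderChains_zero ht]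
      | succ k =>
        have h := boundary_cone_add hcomp (boundary_mem_orderChains ht)
        rwa [ih ht, _root_.map_zero, add_zero] at h
    rw [LinearMap.comp_apply, ← cone_uncone_single hc, ← t_def,
      eq_sub_of_add_eq (boundary_cone_add hcomp ht), map_sub, hdt, sub_self]

/-- Every cycle of the augmented chain complex of the order complex of `S` is a boundary; in
particular `S` is nonempty. -/
def OrderAcyclic (S : Set P) : Prop :=
  ∀ k, ∀ z ∈ orderChains S k, boundary z = 0 → ∃ w ∈ orderChains S (k + 1), boundary w = z

/-- Every cycle of `S` is homologous in `S` to a cycle of `T`. -/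
def PushesInto (S T : Set P) : Prop :=
  ∀ k, ∀ z ∈ orderChains S k, boundary z = 0 →
    ∃ w ∈ orderChains S (k + 1), z + boundary w ∈ orderChains T k ∧ boundary (z + boundary w) = 0

lemma PushesInto.refl (S : Set P) : PushesInto S S :=
  fun _ z hz h => ⟨0, Submodule.zero_mem _, by simp [hz, h]⟩

lemma PushesInto.trans {S T U : Set P} (hTS : T ⊆ S) (hST : PushesInto S T)
    (hTU : PushesInto T U) : PushesInto S U := by
  intro k z hz h
  obtain ⟨w, hw, hzw, hdzw⟩ := hST k z hz h
  obtain ⟨v, hv, hzwv⟩ := hTU k _ hzw hdzw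
  refine ⟨w + v, Submodule.add_mem _ hw (orderChains_mono hTS _ hv), ?_⟩
  rwa [_root_.map_add, ← add_assoc]

lemma OrderAcyclic.of_pushesInto {S T : Set P} (hTS : T ⊆ S) (hST : PushesInto S T)
    (hT : OrderAcyclic T) : OrderAcyclic S := by
  intro k z hz h
  obtain ⟨w, hw, hzw, hdzw⟩ := hST k z hz h
  obtain ⟨v, hv, hdv⟩ := hT k _ hzw hdzw
  exact ⟨v - w, Submodule.sub_mem _ (orderChains_mono hTS _ hv) hw, by
    rw [_root_.map_sub, hdv, add_sub_cancel_right]⟩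

lemma OrderAcyclic.of_comparable {S : Set P} {c : P} (hc : c ∈ S)
    (hS : ∀ x ∈ S, x ≤ c ∨ c ≤ x) : OrderAcyclic S := by
  intro k z hz h
  refine ⟨cone c z, ?_, ?_⟩
  · simpa only [Set.insert_eq_of_mem hc] using cone_mem_orderChains hS hz
  · simpa only [h, _root_.map_zero, add_zero] using boundary_cone_add hS hz

end OrderComplex

section Pushing

open Finset
open scoped Classical

variable {P : Type*} [PartialOrder P]

/-- The link of `c` in `S`: the elements of `S` that are comparable with `c` and differ from it. -/
def link (S : Set P) (c : P) : Set P := {x ∈ S | x < c ∨ c < x}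

lemma notMem_link_self (S : Set P) (c : P) : c ∉ link S c :=
  fun h => h.2.elim (lt_irrefl c) (lt_irrefl c)

lemma link_subset_sdiff (S : Set P) (c : P) : link S c ⊆ S \ {c} :=
  fun _ hx => ⟨hx.1, fun h => notMem_link_self S c (h ▸ hx)⟩

lemma le_or_ge_of_mem_link {S : Set P} {c x : P} (hx : x ∈ link S c) : x ≤ c ∨ c ≤ x :=
  hx.2.imp le_of_lt le_of_lt

lemma uncone_mem_orderChains_link {S : Set P} {c : P} {k : ℕ} {z : Finset P →₀ ℤ}
    (hz : z ∈ orderChains S (k + 1)) : uncone c z ∈ orderChains (link S c) k := by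
  refine map_mem_of_mem_orderChains (fun s hs => ?_) hz
  by_cases hc : c ∈ s
  · rw [uncone_single_of_mem hc]
    have herase := erase_mem_orderSimplices hs hc
    refine single_mem_orderChains ⟨fun x hx => ?_, herase.2⟩ _
    obtain ⟨hne, hxs⟩ := mem_erase.1 (mem_coe.1 hx)
    exact ⟨hs.1 hxs, (hs.2.1.total hxs hc).imp (·.lt_of_ne hne) (·.lt_of_ne' hne)⟩
  · rw [uncone_single_of_notMem hc]
    exact Submodule.zero_mem _

lemma sub_cone_uncone_mem_orderChains {S : Set P} {c : P} {k : ℕ} {z : Finset P →₀ ℤ}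
    (hz : z ∈ orderChains S k) : z - cone c (uncone c z) ∈ orderChains (S \ {c}) k := by
  refine map_mem_of_mem_orderChains (f := LinearMap.id - cone c ∘ₗ uncone c) (fun s hs => ?_) hz
  simp only [LinearMap.sub_apply, LinearMap.id_apply, LinearMap.comp_apply]
  by_cases hc : c ∈ s
  · rw [cone_uncone_single hc, sub_self]
    exact Submodule.zero_mem _
  · rw [uncone_single_of_notMem hc, _root_.map_zero, sub_zero]
    exact single_mem_orderChains ⟨Set.subset_sdiff_singleton hs.1 hc, hs.2⟩ _

/- Writing `b = uncone c z`, the equation `0 = ∂z = ∂(z - c * b) + b - c * ∂b` shows that `∂b` is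
the part of `0` involving `c`. -/
lemma boundary_uncone_eq_zero {S : Set P} {c : P} {k : ℕ} {z : Finset P →₀ ℤ}
    (hz : z ∈ orderChains S (k + 1)) (hdz : boundary z = 0) : boundary (uncone c z) = 0 := by
  have hb := uncone_mem_orderChains_link (c := c) hz
  have hrest := boundary_mem_orderChains (sub_cone_uncone_mem_orderChains (c := c) hz)
  have hcone := boundary_cone_add (fun _ => le_or_ge_of_mem_link) hb
  cases k with
  | zero => exact boundary_eq_zero_of_mem_orderChains_zero hb
  | succ k =>
    have hsum : boundary (z - cone c (uncone c z)) + uncone c z =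
        cone c (boundary (uncone c z)) := by
      rw [_root_.map_sub, hdz, zero_sub, neg_add_eq_sub, sub_eq_iff_eq_add, add_comm, hcone]
    rw [← uncone_cone_of_mem_orderChains (notMem_link_self S c) (boundary_mem_orderChains hb),
      ← hsum, _root_.map_add,
      uncone_eq_zero_of_mem_orderChains (fun h : c ∈ S \ {c} => h.2 rfl) hrest,
      uncone_eq_zero_of_mem_orderChains (notMem_link_self S c) hb, add_zero]

lemma PushesInto.sdiff_singleton {S : Set P} {c : P} (hlink : OrderAcyclic (link S c)) :
    PushesInto S (S \ {c}) := by
  rintro (_ | k) z hz hdz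
  · refine ⟨0, Submodule.zero_mem _, ?_⟩
    rw [_root_.map_zero, add_zero]
    refine ⟨?_, hdz⟩
    refine map_mem_of_mem_orderChains (f := LinearMap.id) (fun s hs => ?_) hz
    exact single_mem_orderChains ⟨by simp [card_eq_zero.1 hs.2.2], hs.2⟩ 1
  by_cases hc : c ∈ S
  · have hb := uncone_mem_orderChains_link (c := c) hz
    have hdb := boundary_uncone_eq_zero (c := c) hz hdz
    obtain ⟨e, he, hde⟩ := hlink k _ hb hdb
    have hconeb := boundary_cone_add (fun _ => le_or_ge_of_mem_link) hb
    have hconee := boundary_cone_add (fun _ => le_or_ge_of_mem_link) he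
    rw [hdb, _root_.map_zero, add_zero] at hconeb
    rw [hde] at hconee
    have hpush : z + boundary (cone c e) = (z - cone c (uncone c z)) + e := by
      rw [eq_sub_of_add_eq hconee]
      abel
    refine ⟨cone c e, ?_, ?_, ?_⟩
    · refine orderChains_mono ?_ _ (cone_mem_orderChains (fun _ => le_or_ge_of_mem_link) he)
      exact Set.insert_subset hc fun x hx => hx.1
    · rw [hpush]
      exact Submodule.add_mem _ (sub_cone_uncone_mem_orderChains hz)
        (orderChains_mono (link_subset_sdiff S c) _ he)
    · rw [hpush, _root_.map_add, _root_.map_sub, hdz, hconeb, hde, zero_sub, neg_add_cancel]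
  · rw [Set.sdiff_singleton_eq_self hc]
    exact PushesInto.refl S (k + 1) z hz hdz

lemma PushesInto.sdiff_singleton_of_comparable {S : Set P} {x m : P} (hm : m ∈ link S x)
    (h : ∀ y ∈ link S x, y ≤ m ∨ m ≤ y) : PushesInto S (S \ {x}) :=
  .sdiff_singleton (.of_comparable hm h)

/-- A closure operator or an interior operator on `S`: the monotone maps to which Quillen's fibre
lemma applies in its simplest form. -/
structure IsMonotoneRetraction (φ : P → P) (S : Set P) : Prop where
  mapsTo : Set.MapsTo φ S S
  monotoneOn : MonotoneOn φ S
  idem : ∀ x ∈ S, φ (φ x) = φ x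
  le_or_ge : (∀ x ∈ S, x ≤ φ x) ∨ ∀ x ∈ S, φ x ≤ x

lemma IsMonotoneRetraction.sdiff_singleton {φ : P → P} {S : Set P}
    (hφ : IsMonotoneRetraction φ S) {x : P} (hx : φ x ≠ x) :
    IsMonotoneRetraction φ (S \ {x}) where
  mapsTo y hy := ⟨hφ.mapsTo hy.1, fun h => hx (by
    rw [← Set.mem_singleton_iff.1 h, hφ.idem y hy.1])⟩
  monotoneOn := hφ.monotoneOn.mono Set.sdiff_subset
  idem y hy := hφ.idem y hy.1
  le_or_ge := hφ.le_or_ge.imp (fun h y hy => h y hy.1) fun h y hy => h y hy.1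

/- If `φ` is increasing, a maximal moved point `x` has a link that is a cone with apex `φ x`: the
elements of `S` above `x` are fixed by `φ`, hence above `φ x`. -/
lemma IsMonotoneRetraction.exists_pushesInto_sdiff_singleton {φ : P → P} {S : Set P}
    (hφ : IsMonotoneRetraction φ S) (hfin : {x ∈ S | φ x ≠ x}.Finite)
    (hne : {x ∈ S | φ x ≠ x}.Nonempty) : ∃ x ∈ S, φ x ≠ x ∧ PushesInto S (S \ {x}) := by
  rcases hφ.le_or_ge with hle | hge
  · obtain ⟨x, ⟨hxS, hx⟩, hmax⟩ := hfin.exists_maximal hne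
    refine ⟨x, hxS, hx, .sdiff_singleton_of_comparable
      ⟨hφ.mapsTo hxS, Or.inr ((hle x hxS).lt_of_ne' hx)⟩ ?_⟩
    rintro y ⟨hyS, hyx | hxy⟩
    · exact Or.inl (hyx.le.trans (hle x hxS))
    · have hy : φ y = y := by_contra fun h => (hmax ⟨hyS, h⟩ hxy.le).not_gt hxy
      exact Or.inr (hy ▸ hφ.monotoneOn hxS hyS hxy.le)
  · obtain ⟨x, ⟨hxS, hx⟩, hmin⟩ := hfin.exists_minimal hne
    refine ⟨x, hxS, hx, .sdiff_singleton_of_comparable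
      ⟨hφ.mapsTo hxS, Or.inl ((hge x hxS).lt_of_ne hx)⟩ ?_⟩
    rintro y ⟨hyS, hyx | hxy⟩
    · have hy : φ y = y := by_contra fun h => (hmin ⟨hyS, h⟩ hyx.le).not_gt hyx
      exact Or.inl (hy ▸ hφ.monotoneOn hyS hxS hyx.le)
    · exact Or.inr ((hge x hxS).trans hxy.le)

lemma IsMonotoneRetraction.pushesInto {φ : P → P} {S : Set P} (hφ : IsMonotoneRetraction φ S)
    (hfin : {x ∈ S | φ x ≠ x}.Finite) : PushesInto S {x ∈ S | φ x = x} := by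
  induction hN : {x ∈ S | φ x ≠ x}.ncard generalizing S with
  | zero =>
    rw [Set.ncard_eq_zero hfin] at hN
    have hfix : {x ∈ S | φ x = x} = S :=
      Set.sep_eq_self_iff_mem_true.2 fun x hx =>
        by_contra fun h => Set.eq_empty_iff_forall_notMem.1 hN x ⟨hx, h⟩
    rw [hfix]
    exact .refl S
  | succ N ih =>
    obtain ⟨x, hxS, hx, hpush⟩ := hφ.exists_pushesInto_sdiff_singleton hfin
      ((Set.ncard_pos hfin).1 (by omega))
    have hmoved : {y ∈ S \ {x} | φ y ≠ y} = {y ∈ S | φ y ≠ y} \ {x} := by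
      ext y
      simp only [Set.mem_sdiff, Set.mem_ofPred_eq, Set.mem_singleton_iff]
      tauto
    have hfixed : {y ∈ S \ {x} | φ y = y} = {y ∈ S | φ y = y} := by
      ext y
      simp only [Set.mem_sdiff, Set.mem_ofPred_eq, Set.mem_singleton_iff]
      exact ⟨fun h => ⟨h.1.1, h.2⟩, fun h => ⟨⟨h.1, fun hyx => hx (hyx ▸ h.2)⟩, h.2⟩⟩
    rw [← hfixed]
    refine hpush.trans Set.sdiff_subset (ih (hφ.sdiff_singleton hx) ?_ ?_)
    · rw [hmoved]
      exact hfin.sdiff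
    · rw [hmoved, Set.ncard_sdiff_singleton_of_mem (show x ∈ {y ∈ S | φ y ≠ y} from ⟨hxS, hx⟩), hN]
      rfl

end Pushing

section ChainMap

open Finset
open scoped Classical

variable {P Q : Type*}

/-- The map on chains induced by a map of vertices; it is only used for order embeddings, which
send simplices to simplices of the same dimension. -/
noncomputable def chainMap (f : P → Q) : (Finset P →₀ ℤ) →ₗ[ℤ] (Finset Q →₀ ℤ) :=
  Finsupp.lmapDomain ℤ ℤ (Finset.image f)

lemma chainMap_single (f : P → Q) (s : Finset P) (a : ℤ) :
    chainMap f (Finsupp.single s a) = Finsupp.single (s.image f) a := by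
  simp [chainMap]

variable [PartialOrder P] [PartialOrder Q]

lemma simplexSign_image {f : P → Q} {s : Finset P} (hf : ∀ x ∈ s, ∀ y ∈ s, f x < f y ↔ x < y)
    (hinj : Set.InjOn f s) {x : P} (hx : x ∈ s) :
    simplexSign (s.image f) (f x) = simplexSign s x := by
  have hfilter : {y ∈ s.image f | y < f x} = {y ∈ s | y < x}.image f := by
    rw [filter_image]
    congr 1
    exact filter_congr fun y hy => hf y hy x hx
  rw [simplexSign, hfilter, card_image_of_injOn (hinj.mono (coe_subset.2 (filter_subset _ s)))]
  rfl

lemma injOn_of_le_iff_le {S : Set P} {f : P → Q} (hf : ∀ x ∈ S, ∀ y ∈ S, f x ≤ f y ↔ x ≤ y) :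
    Set.InjOn f S :=
  fun x hx y hy h => le_antisymm ((hf x hx y hy).1 h.le) ((hf y hy x hx).1 h.ge)

lemma boundary_chainMap {S : Set P} {k : ℕ} {f : P → Q}
    (hf : ∀ x ∈ S, ∀ y ∈ S, f x ≤ f y ↔ x ≤ y) {z : Finset P →₀ ℤ} (hz : z ∈ orderChains S k) :
    boundary (chainMap f z) = chainMap f (boundary z) := by
  refine eqOn_orderChains (f := boundary ∘ₗ chainMap f) (g := chainMap f ∘ₗ boundary)
    (fun s hs => ?_) hz
  have hinj : Set.InjOn f s := (injOn_of_le_iff_le hf).mono hs.1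
  have hlt : ∀ x ∈ s, ∀ y ∈ s, f x < f y ↔ x < y := fun x hx y hy => by
    rw [lt_iff_le_not_ge, lt_iff_le_not_ge, hf x (hs.1 hx) y (hs.1 hy), hf y (hs.1 hy) x (hs.1 hx)]
  rw [LinearMap.comp_apply, LinearMap.comp_apply, chainMap_single, boundary_single,
    boundary_single, _root_.map_sum, sum_image hinj]
  refine sum_congr rfl fun x hx => ?_
  rw [chainMap_single, simplexSign_image hlt hinj hx, erase_eq, erase_eq,
    image_sdiff_of_injOn hinj (singleton_subset_iff.2 hx), image_singleton]

lemma chainMap_mem_orderChains {S : Set P} {T : Set Q} {k : ℕ} {f : P → Q}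
    (hf : ∀ x ∈ S, ∀ y ∈ S, f x ≤ f y ↔ x ≤ y) (hST : Set.MapsTo f S T) {z : Finset P →₀ ℤ}
    (hz : z ∈ orderChains S k) : chainMap f z ∈ orderChains T k := by
  refine map_mem_of_mem_orderChains (fun s hs => ?_) hz
  rw [chainMap_single]
  refine single_mem_orderChains ⟨?_, ?_, ?_⟩ 1
  · rw [coe_image]
    exact (hST.mono_left hs.1).image_subset
  · rw [coe_image]
    rintro _ ⟨x, hx, rfl⟩ _ ⟨y, hy, rfl⟩ _
    exact (hs.2.1.total hx hy).imp (hf x (hs.1 hx) y (hs.1 hy)).2 (hf y (hs.1 hy) x (hs.1 hx)).2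
  · rw [card_image_of_injOn ((injOn_of_le_iff_le hf).mono hs.1), hs.2.2]

lemma OrderAcyclic.nonempty {S : Set P} (h : OrderAcyclic S) : S.Nonempty := by
  by_contra hS
  rw [Set.not_nonempty_iff_eq_empty] at hS
  subst hS
  obtain ⟨w, hw, hdw⟩ := h 0 (Finsupp.single ∅ 1)
    (single_mem_orderChains ⟨by simp, by simp, rfl⟩ 1) boundary_single_empty
  have hw0 : w = 0 := eqOn_orderChains (f := LinearMap.id) (g := 0) (fun s hs => by
    have hs0 : s = ∅ := by simpa using hs.1
    exact absurd hs.2.2 (by simp [hs0])) hw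
  rw [hw0, _root_.map_zero] at hdw
  exact one_ne_zero (Finsupp.single_eq_zero.1 hdw.symm)

lemma OrderAcyclic.image {S : Set P} {f : P → Q} (hf : ∀ x ∈ S, ∀ y ∈ S, f x ≤ f y ↔ x ≤ y)
    (h : OrderAcyclic S) : OrderAcyclic (f '' S) := by
  have : Nonempty P := ⟨h.nonempty.some⟩
  have hmaps : Set.MapsTo (Function.invFunOn f S) (f '' S) S :=
    fun y hy => Function.invFunOn_mem hy
  have hinv : ∀ y ∈ f '' S, f (Function.invFunOn f S y) = y := fun y hy => Function.invFunOn_eq hy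
  set g := Function.invFunOn f S
  have hg : ∀ x ∈ f '' S, ∀ y ∈ f '' S, g x ≤ g y ↔ x ≤ y := fun x hx y hy => by
    rw [← hf _ (hmaps hx) _ (hmaps hy), hinv x hx, hinv y hy]
  intro k z hz hdz
  obtain ⟨w, hw, hdw⟩ := h k (chainMap g z) (chainMap_mem_orderChains hg hmaps hz)
    (by rw [boundary_chainMap hg hz, hdz, _root_.map_zero])
  refine ⟨chainMap f w, chainMap_mem_orderChains hf (Set.mapsTo_image f S) hw, ?_⟩
  rw [boundary_chainMap hf hw, hdw]
  refine eqOn_orderChains (f := chainMap f ∘ₗ chainMap g) (g := LinearMap.id) (fun s hs => ?_) hz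
  simp only [LinearMap.comp_apply, LinearMap.id_apply, chainMap_single]
  rw [image_image, image_congr (g := id) (f := f ∘ g) fun y hy => hinv y (hs.1 hy), image_id]

end ChainMap

section CompatibleSubsets

open Finset
open scoped Classical

variable {α : Type*} {comp : α → α → Prop} {R : Finset α}

/-- The face poset of the flag complex of the relation `comp` on `R`. -/
def compatibleSubsets (comp : α → α → Prop) (R : Finset α) : Set (Finset α) :=
  {σ | σ.Nonempty ∧ σ ⊆ R ∧ ∀ a ∈ σ, ∀ b ∈ σ, comp a b}

lemma compatibleSubsets_finite (comp : α → α → Prop) (R : Finset α) :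
    (compatibleSubsets comp R).Finite :=
  R.powerset.finite_toSet.subset fun _ hσ => mem_coe.2 (mem_powerset.2 hσ.2.1)

lemma insert_mem_compatibleSubsets [Std.Refl comp] [Std.Symm comp] {σ : Finset α}
    (hσ : σ ∈ compatibleSubsets comp R) {D : α} (hD : D ∈ R) (h : ∀ a ∈ σ, comp a D) :
    insert D σ ∈ compatibleSubsets comp R := by
  refine ⟨insert_nonempty D σ, insert_subset hD hσ.2.1, ?_⟩
  simp only [forall_mem_insert]
  exact ⟨⟨Std.Refl.refl D, fun b hb => Std.Symm.symm _ _ (h b hb)⟩,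
    fun a ha => ⟨h a ha, hσ.2.2 a ha⟩⟩

lemma OrderAcyclic.compatibleSubsets_of_forall [Std.Refl comp] [Std.Symm comp] {D₀ : α}
    (hD₀ : D₀ ∈ R) (hcomp : ∀ D ∈ R, comp D D₀) : OrderAcyclic (compatibleSubsets comp R) := by
  have hins : IsMonotoneRetraction (insert D₀) (compatibleSubsets comp R) :=
    { mapsTo := fun σ hσ => insert_mem_compatibleSubsets hσ hD₀ fun a ha => hcomp a (hσ.2.1 ha)
      monotoneOn := fun _ _ _ _ h => insert_subset_insert D₀ h
      idem := fun σ _ => insert_idem D₀ σ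
      le_or_ge := Or.inl fun σ _ => subset_insert D₀ σ }
  have hpush := hins.pushesInto ((compatibleSubsets_finite comp R).subset (Set.sep_subset _ _))
  refine .of_pushesInto (Set.sep_subset _ _) hpush (.of_comparable (c := {D₀}) ?_ ?_)
  · refine ⟨⟨singleton_nonempty D₀, singleton_subset_iff.2 hD₀, ?_⟩, by simp⟩
    simpa using Std.Refl.refl D₀
  · exact fun σ hσ => Or.inr (singleton_subset_iff.2 (insert_eq_self.1 hσ.2))

/- First add `D'` to the sets containing `D`, which is possible since everything compatible with `D`
is compatible with `D'`; then remove `D` from all sets, which leaves them nonempty. -/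
lemma PushesInto.compatibleSubsets_erase [Std.Refl comp] [Std.Symm comp] {D D' : α} (hD' : D' ∈ R)
    (hne : D' ≠ D) (hdom : ∀ E ∈ R, comp E D → comp E D') :
    PushesInto (compatibleSubsets comp R) (compatibleSubsets comp (R.erase D)) := by
  have hadd : IsMonotoneRetraction (fun σ => if D ∈ σ then insert D' σ else σ)
      (compatibleSubsets comp R) := by
    refine ⟨fun σ hσ => ?_, fun σ _ τ _ h => ?_, fun σ _ => ?_, Or.inl fun σ _ => ?_⟩
    · split_ifs with h
      · exact insert_mem_compatibleSubsets hσ hD' fun a ha =>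
          hdom a (hσ.2.1 ha) (hσ.2.2 a ha D h)
      · exact hσ
    · split_ifs with h₁ h₂ h₂
      exacts [insert_subset_insert D' h, absurd (h h₁) h₂, h.trans (subset_insert D' τ), h]
    · by_cases h : D ∈ σ <;> simp [h]
    · split_ifs
      exacts [subset_insert D' σ, le_rfl]
  let T : Set (Finset α) := {σ ∈ compatibleSubsets comp R | D ∈ σ → D' ∈ σ}
  have hT : {σ ∈ compatibleSubsets comp R | (if D ∈ σ then insert D' σ else σ) = σ} = T := by
    ext σ
    by_cases h : D ∈ σ <;> simp [T, h]
  have hremove : IsMonotoneRetraction (fun σ => σ.erase D) T := by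
    refine ⟨fun σ hσ => ⟨⟨?_, (erase_subset D σ).trans hσ.1.2.1, fun a ha b hb =>
      hσ.1.2.2 a (mem_of_mem_erase ha) b (mem_of_mem_erase hb)⟩, fun h => ?_⟩,
      fun σ _ τ _ h => erase_subset_erase D h, fun σ _ => erase_idem,
      Or.inr fun σ _ => erase_subset D σ⟩
    · by_cases h : D ∈ σ
      · exact ⟨D', mem_erase.2 ⟨hne, hσ.2 h⟩⟩
      · rw [erase_eq_of_notMem h]
        exact hσ.1.1
    · exact absurd h (notMem_erase D σ)
  have hfin := compatibleSubsets_finite comp R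
  have hfixed : {σ ∈ T | σ.erase D = σ} = compatibleSubsets comp (R.erase D) := by
    ext σ
    simp only [T, compatibleSubsets, Set.mem_ofPred_eq, erase_eq_self, subset_erase]
    tauto
  have hpush := hadd.pushesInto (hfin.subset (Set.sep_subset _ _))
  rw [hT] at hpush
  rw [← hfixed]
  exact hpush.trans (Set.sep_subset _ _)
    (hremove.pushesInto ((hfin.subset (Set.sep_subset _ _)).subset (Set.sep_subset _ _)))

/- The elements `D` incompatible with `D₀` are removed one at a time, in order of increasing
`size`. -/
theorem OrderAcyclic.compatibleSubsets [Std.Refl comp] [Std.Symm comp] (size : α → ℕ) {D₀ : α}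
    (hD₀ : D₀ ∈ R)
    (hdom : ∀ D ∈ R, ¬ comp D D₀ → ∃ D' ∈ R, comp D' D₀ ∧ comp D' D ∧
      ∀ E ∈ R, comp E D → E ≠ D → (¬ comp E D₀ → size D ≤ size E) → comp E D') :
    OrderAcyclic (compatibleSubsets comp R) := by
  induction hN : #{D ∈ R | ¬ comp D D₀} generalizing R with
  | zero =>
    refine .compatibleSubsets_of_forall hD₀ ?_
    simpa [filter_eq_empty_iff] using hN
  | succ N ih =>
    obtain ⟨D, hD, hmin⟩ := exists_min_image {D ∈ R | ¬ comp D D₀} size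
      (by rw [← card_pos]; omega)
    obtain ⟨hDR, hDD₀⟩ := mem_filter.1 hD
    obtain ⟨D', hD'R, hD'D₀, hD'D, hE⟩ := hdom D hDR hDD₀
    have hne : D' ≠ D := fun h => hDD₀ (h ▸ hD'D₀)
    have hdomD : ∀ E ∈ R, comp E D → comp E D' := fun E hER hED => by
      by_cases hEq : E = D
      · exact hEq ▸ Std.Symm.symm _ _ hD'D
      · exact hE E hER hED hEq fun h => hmin E (mem_filter.2 ⟨hER, h⟩)
    refine .of_pushesInto ?_ (.compatibleSubsets_erase hD'R hne hdomD) (ih ?_ ?_ ?_)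
    · exact fun σ hσ => ⟨hσ.1, hσ.2.1.trans (erase_subset D R), hσ.2.2⟩
    · exact mem_erase.2 ⟨fun h => hDD₀ (h ▸ Std.Refl.refl D₀), hD₀⟩
    · intro D₂ hD₂ hD₂D₀
      obtain ⟨D₂', hR, hcomp, hcomp', hdom'⟩ := hdom D₂ (mem_of_mem_erase hD₂) hD₂D₀
      exact ⟨D₂', mem_erase.2 ⟨fun h => hDD₀ (h ▸ hcomp), hR⟩, hcomp, hcomp',
        fun E hE => hdom' E (mem_of_mem_erase hE)⟩
    · rw [filter_erase, card_erase_of_mem hD, hN]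
      rfl

end CompatibleSubsets

/-! ### Twists of a free group and crossing numbers of cuts -/

section Twist

variable {α : Type*}

/-- The endomorphism of a free group conjugating each generator `b` by the power `u b` of the
generator `i`. -/
def twistHom (i : α) (u : α → ℤ) : FreeGroup α →* FreeGroup α :=
  FreeGroup.lift fun b => of i ^ u b * of b * (of i ^ u b)⁻¹

lemma twistHom_of (i : α) (u : α → ℤ) (b : α) :
    twistHom i u (of b) = of i ^ u b * of b * (of i ^ u b)⁻¹ := by
  simp [twistHom]

lemma twistHom_of_self (i : α) (u : α → ℤ) : twistHom i u (of i) = of i := by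
  rw [twistHom_of, ((Commute.refl (of i)).zpow_left (u i)).eq, mul_inv_cancel_right]

lemma twistHom_zero_apply (i : α) (y : FreeGroup α) : twistHom i 0 y = y := by
  have h : twistHom i 0 = MonoidHom.id (FreeGroup α) := FreeGroup.ext_hom _ _ fun b => by
    simp [twistHom_of]
  rw [h, MonoidHom.id_apply]

lemma twistHom_twistHom (i : α) (u v : α → ℤ) (y : FreeGroup α) :
    twistHom i u (twistHom i v y) = twistHom i (u + v) y := by
  have h : (twistHom i u).comp (twistHom i v) = twistHom i (u + v) :=
    FreeGroup.ext_hom _ _ fun b => by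
      rw [MonoidHom.comp_apply, twistHom_of, twistHom_of, _root_.map_mul, _root_.map_mul,
        _root_.map_inv, _root_.map_zpow, twistHom_of_self, twistHom_of, Pi.add_apply, add_comm,
        zpow_add]
      group
  exact DFunLike.congr_fun h y

/-- The twist as an automorphism. -/
def twistAut (i : α) (u : α → ℤ) : MulAut (FreeGroup α) where
  toFun := twistHom i u
  invFun := twistHom i (-u)
  left_inv y := by rw [twistHom_twistHom, neg_add_cancel, twistHom_zero_apply]
  right_inv y := by rw [twistHom_twistHom, add_neg_cancel, twistHom_zero_apply]
  map_mul' := _root_.map_mul _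

/-- The twist as an element of `PΣ_n`. -/
def twist {n : ℕ} (i : Fin n) (u : Fin n → ℤ) : PSigmaAut n :=
  ⟨twistAut i u, fun b => ⟨of i ^ u b, twistHom_of i u b⟩⟩

lemma twist_smul {n : ℕ} (i : Fin n) (u : Fin n → ℤ) (y : FG n) :
    twist i u • y = twistHom i u y :=
  rfl

lemma twist_add {n : ℕ} (i : Fin n) (u v : Fin n → ℤ) : twist i (u + v) = twist i u * twist i v :=
  Subtype.ext (MulEquiv.ext fun y => (twistHom_twistHom i u v y).symm)

lemma twist_zero {n : ℕ} (i : Fin n) : twist i (0 : Fin n → ℤ) = 1 :=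
  Subtype.ext (MulEquiv.ext fun y => twistHom_zero_apply i y)

lemma twist_neg {n : ℕ} (i : Fin n) (u : Fin n → ℤ) : twist i (-u) = (twist i u)⁻¹ := by
  rw [eq_inv_iff_mul_eq_one, ← twist_add, neg_add_cancel, twist_zero]

end Twist

section Words

variable {α : Type*}

lemma isReduced_cons_cons_of_ne {b c : α × Bool} {L : List (α × Bool)} (hcb : c.1 ≠ b.1)
    (hL : FreeGroup.IsReduced (b :: L)) : FreeGroup.IsReduced (c :: b :: L) :=
  FreeGroup.isReduced_cons_cons.2 ⟨fun h => absurd h hcb, hL⟩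

variable [DecidableEq α]

/-- The inverse of a letter `(x, ε)`, which stands for `x` or `x⁻¹`. -/
def invLetter (b : α × Bool) : α × Bool := (b.1, !b.2)

/-- The number of times the path of a word, started in the state `p` and closed up by the state
`false`, changes sides with respect to the set of letters `D`. -/
def crossings (D : Finset (α × Bool)) : Bool → List (α × Bool) → ℕ
  | p, [] => p.toNat
  | p, b :: L => (if p = decide (b ∈ D) then 0 else 1) + crossings D (decide (invLetter b ∈ D)) L

lemma crossings_inter_add_crossings_union_le (D E : Finset (α × Bool)) (L : List (α × Bool))
    (p q : Bool) :
    crossings (D ∩ E) (p && q) L + crossings (D ∪ E) (p || q) L ≤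
      crossings D p L + crossings E q L := by
  induction L generalizing p q with
  | nil => cases p <;> cases q <;> simp [crossings]
  | cons b L ih =>
    have hstep : ∀ p q x y : Bool, (if (p && q) = (x && y) then 0 else 1) +
        (if (p || q) = (x || y) then 0 else 1) ≤
        (if p = x then 0 else 1) + if q = y then 0 else 1 := by
      decide
    have hb := hstep p q (decide (b ∈ D)) (decide (b ∈ E))
    have hL := ih (decide (invLetter b ∈ D)) (decide (invLetter b ∈ E))
    simp only [crossings, Finset.mem_inter, Finset.mem_union, Bool.decide_and, Bool.decide_or]
    omega

lemma crossings_sdiff_add_crossings_sdiff_le (D E : Finset (α × Bool)) (L : List (α × Bool))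
    (p q : Bool) :
    crossings (D \ E) (p && !q) L + crossings (E \ D) (q && !p) L ≤
      crossings D p L + crossings E q L := by
  induction L generalizing p q with
  | nil => cases p <;> cases q <;> simp [crossings]
  | cons b L ih =>
    have hstep : ∀ p q x y : Bool, (if (p && !q) = (x && !y) then 0 else 1) +
        (if (q && !p) = (y && !x) then 0 else 1) ≤
        (if p = x then 0 else 1) + if q = y then 0 else 1 := by
      decide
    have hb := hstep p q (decide (b ∈ D)) (decide (b ∈ E))
    have hL := ih (decide (invLetter b ∈ D)) (decide (invLetter b ∈ E))
    simp only [crossings, Finset.mem_sdiff, Bool.decide_and, decide_not]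
    omega

/-- The number of occurrences of the generator `i` and its inverse in the reduced word of `y`. -/
def letterCount (i : α) (y : FreeGroup α) : ℕ := (y.toWord.map Prod.fst).count i

lemma norm_eq_sum_letterCount [Fintype α] (y : FreeGroup α) : y.norm = ∑ i, letterCount i y := by
  have h := Multiset.sum_count_eq_card (s := Finset.univ)
    (m := ((y.toWord.map Prod.fst : List α) : Multiset α)) fun _ _ => Finset.mem_univ _
  simpa [letterCount, FreeGroup.norm] using h.symm

/-- The integer `±1` represented by a Boolean exponent. -/
def boolSign (ε : Bool) : ℤ := if ε then 1 else -1

/-- The vector `±1_B`. -/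
def signVector (ε : Bool) (B : Finset α) : α → ℤ := fun b => if b ∈ B then boolSign ε else 0

omit [DecidableEq α] in
lemma mk_cons (b : α × Bool) (L : List (α × Bool)) :
    (FreeGroup.mk (b :: L) : FreeGroup α) = of b.1 ^ boolSign b.2 * FreeGroup.mk L := by
  rw [← List.singleton_append, ← FreeGroup.mul_mk]
  congr 1
  obtain ⟨x, _ | _⟩ := b <;> simp [boolSign, of, FreeGroup.inv_mk, FreeGroup.invRev]

end Words

/-- A cut of the star of generators and inverse generators: it separates the letter
`base ^ sign` together with all letters in `side` from the remaining ones. It encodes the twist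
conjugating the generators in `side` by `base ^ sign`. -/
@[ext]
structure Cut (α : Type*) where
  base : α
  sign : Bool
  side : Finset α
  base_notMem_side : base ∉ side

namespace Cut

variable {α : Type*} [DecidableEq α]

omit [DecidableEq α] in
lemma injective_prod :
    Function.Injective fun a : Cut α => (a.base, a.sign, a.side) := fun a b h => by
  simp only [Prod.mk.injEq] at h
  exact Cut.ext h.1 h.2.1 h.2.2

instance [Finite α] : Finite (Cut α) := Finite.of_injective _ injective_prod

noncomputable instance [Finite α] : Fintype (Cut α) := Fintype.ofFinite _

/-- The letters on the side of the cut containing `base ^ sign`. -/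
def letters (a : Cut α) : Finset (α × Bool) := insert (a.base, a.sign) (a.side ×ˢ Finset.univ)

/-- The exponent vector of the twist of a cut. -/
def vec (a : Cut α) : α → ℤ := signVector a.sign a.side

lemma vec_base (a : Cut α) : a.vec a.base = 0 := if_neg a.base_notMem_side

lemma mem_letters {a : Cut α} {b : α × Bool} :
    b ∈ a.letters ↔ b.1 ∈ a.side ∨ b = (a.base, a.sign) := by
  simp [letters, or_comm]

lemma base_mem_letters (a : Cut α) (s : Bool) : (a.base, s) ∈ a.letters ↔ s = a.sign := by
  simp [mem_letters, a.base_notMem_side]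

lemma mem_letters_of_ne {a : Cut α} {b : α × Bool} (hb : b.1 ≠ a.base) :
    b ∈ a.letters ↔ b.1 ∈ a.side := by
  rw [mem_letters, or_iff_left fun h => hb (congrArg Prod.fst h)]

/-- The letter at which the path of a word changes sides when it leaves the state `p`. -/
def pivot (a : Cut α) (p : Bool) : α × Bool := (a.base, xor p a.sign)

/-- The image of a word under the twist of the cut `a`: a letter `base ^ ±1` is written for every
crossing of the cut, where `p` records the side on which the path currently is. -/
def twistWord (a : Cut α) : Bool → List (α × Bool) → List (α × Bool)
  | p, [] => if p then [a.pivot p] else []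
  | p, b :: L => (if p = decide (b ∈ a.letters) then [] else [a.pivot p]) ++
      ((if b.1 = a.base then [] else [b]) ++ twistWord a (decide (invLetter b ∈ a.letters)) L)

lemma count_base_twistWord (a : Cut α) (p : Bool) (L : List (α × Bool)) :
    ((a.twistWord p L).map Prod.fst).count a.base = crossings a.letters p L := by
  induction L generalizing p with
  | nil => cases p <;> simp [twistWord, crossings, pivot]
  | cons b L ih =>
    have hb : ((if b.1 = a.base then [] else [b]).map Prod.fst).count a.base = 0 := by
      split_ifs with h <;> simp [h]
    rw [twistWord, List.map_append, List.map_append, List.count_append, List.count_append, ih, hb,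
      crossings, zero_add]
    split_ifs <;> simp [pivot]

lemma count_twistWord_of_ne {a : Cut α} {j : α} (hj : j ≠ a.base) (p : Bool)
    (L : List (α × Bool)) :
    ((a.twistWord p L).map Prod.fst).count j = (L.map Prod.fst).count j := by
  induction L generalizing p with
  | nil => cases p <;> simp [twistWord, pivot, hj.symm]
  | cons b L ih =>
    have hpivot : ((if p = decide (b ∈ a.letters) then [] else [a.pivot p]).map Prod.fst).count j
        = 0 := by
      split_ifs <;> simp [pivot, hj.symm]
    rw [twistWord, List.map_append, List.map_append, List.count_append, List.count_append, ih,
      hpivot, zero_add]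
    by_cases hb : b.1 = a.base
    · simp [hb, hj.symm]
    · simp [hb, List.count_cons, add_comm]

lemma eq_pivot_or (a : Cut α) (p : Bool) (b : α × Bool) :
    b = a.pivot p ∨ b = a.pivot !p ∨ (b.1 ≠ a.base ∧ p = decide (b.1 ∈ a.side)) ∨
      (b.1 ≠ a.base ∧ (!p) = decide (b.1 ∈ a.side)) := by
  by_cases hb : b.1 = a.base
  · obtain ⟨x, s⟩ := b
    obtain rfl : x = a.base := hb
    cases p <;> cases s <;> cases h : a.sign <;> simp [pivot, h]
  · cases p <;> by_cases h : b.1 ∈ a.side <;> simp [hb, h]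

lemma decide_pivot_mem_letters (a : Cut α) (p : Bool) :
    decide (a.pivot p ∈ a.letters) = !p := by
  simp only [pivot, base_mem_letters]
  cases p <;> cases a.sign <;> rfl

lemma decide_invLetter_pivot_mem_letters (a : Cut α) (p : Bool) :
    decide (invLetter (a.pivot p) ∈ a.letters) = p := by
  simp only [pivot, invLetter, base_mem_letters]
  cases p <;> cases a.sign <;> rfl

lemma twistWord_pivot_cons (a : Cut α) (p : Bool) (L : List (α × Bool)) :
    a.twistWord p (a.pivot p :: L) = a.pivot p :: a.twistWord p L := by
  simp [twistWord, decide_pivot_mem_letters, decide_invLetter_pivot_mem_letters,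
    show (a.pivot p).1 = a.base from rfl]

lemma twistWord_pivot_not_cons (a : Cut α) (p : Bool) (L : List (α × Bool)) :
    a.twistWord p (a.pivot (!p) :: L) = a.twistWord (!p) L := by
  simp [twistWord, decide_pivot_mem_letters, decide_invLetter_pivot_mem_letters,
    show (a.pivot (!p)).1 = a.base from rfl]

lemma twistWord_cons_of_eq {a : Cut α} {p : Bool} {b : α × Bool} (hb : b.1 ≠ a.base)
    (hp : p = decide (b.1 ∈ a.side)) (L : List (α × Bool)) :
    a.twistWord p (b :: L) = b :: a.twistWord p L := by
  simp [twistWord, hb, mem_letters_of_ne hb,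
    mem_letters_of_ne (show (invLetter b).1 ≠ a.base from hb), hp,
    show (invLetter b).1 = b.1 from rfl]

lemma twistWord_cons_of_not_eq {a : Cut α} {p : Bool} {b : α × Bool} (hb : b.1 ≠ a.base)
    (hp : (!p) = decide (b.1 ∈ a.side)) (L : List (α × Bool)) :
    a.twistWord p (b :: L) = a.pivot p :: b :: a.twistWord (!p) L := by
  simp [twistWord, hb, mem_letters_of_ne hb,
    mem_letters_of_ne (show (invLetter b).1 ≠ a.base from hb), ← hp,
    show (invLetter b).1 = b.1 from rfl]

lemma isReduced_cons_twistWord_nil (a : Cut α) {c : α × Bool} {p : Bool}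
    (hc : c = a.pivot p ∨ c.1 ≠ a.base) : IsReduced (c :: a.twistWord p []) := by
  rw [twistWord]
  split_ifs
  · rcases hc with rfl | hc
    · simp [FreeGroup.isReduced_cons_cons]
    · exact isReduced_cons_cons_of_ne hc .singleton
  · exact .singleton

/- Both parts are proved together by induction: the second one covers the moment after a letter
`pivot q` has been absorbed by a change of state. -/
lemma isReduced_cons_twistWord (a : Cut α) (L : List (α × Bool)) :
    (∀ c p, IsReduced (c :: L) → (c = a.pivot p ∨ c.1 ≠ a.base ∧ p = decide (c.1 ∈ a.side)) →
      IsReduced (c :: a.twistWord p L)) ∧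
    ∀ c q, IsReduced (a.pivot q :: L) → c.1 ≠ a.base → (!q) = decide (c.1 ∈ a.side) →
      IsReduced (c :: a.twistWord q L) := by
  induction L with
  | nil =>
    exact ⟨fun c p _ hc => a.isReduced_cons_twistWord_nil (hc.imp_right And.left),
      fun c q _ hc _ => a.isReduced_cons_twistWord_nil (Or.inr hc)⟩
  | cons b L ih =>
    have pivot_step : ∀ {p}, b.1 ≠ a.base → (!p) = decide (b.1 ∈ a.side) → IsReduced (b :: L) →
        IsReduced (a.pivot p :: b :: a.twistWord (!p) L) := fun hb hp h =>
      isReduced_cons_cons_of_ne (Ne.symm hb) (ih.1 b _ h (Or.inr ⟨hb, hp⟩))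
    refine ⟨fun c p hcb hc => ?_, fun c q hqb hc hcq => ?_⟩
    · obtain ⟨hsign, hbL⟩ := FreeGroup.isReduced_cons_cons.1 hcb
      rcases a.eq_pivot_or p b with rfl | rfl | ⟨hb, hp⟩ | ⟨hb, hp⟩
      · rw [twistWord_pivot_cons, FreeGroup.isReduced_cons_cons]
        exact ⟨hsign, ih.1 _ p hbL (Or.inl rfl)⟩
      · rw [twistWord_pivot_not_cons]
        rcases hc with rfl | ⟨hc, hp⟩
        · simp [pivot] at hsign
        · exact ih.2 c _ hbL hc (by rw [Bool.not_not, hp])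
      · rw [twistWord_cons_of_eq hb hp, FreeGroup.isReduced_cons_cons]
        exact ⟨hsign, ih.1 b p hbL (Or.inr ⟨hb, hp⟩)⟩
      · rw [twistWord_cons_of_not_eq hb hp]
        rcases hc with rfl | ⟨hc, -⟩
        · exact FreeGroup.isReduced_cons_cons.2 ⟨fun _ => rfl, pivot_step hb hp hbL⟩
        · exact isReduced_cons_cons_of_ne hc (pivot_step hb hp hbL)
    · obtain ⟨hsign, hbL⟩ := FreeGroup.isReduced_cons_cons.1 hqb
      rcases a.eq_pivot_or q b with rfl | rfl | ⟨hb, hp⟩ | ⟨hb, hp⟩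
      · rw [twistWord_pivot_cons]
        exact isReduced_cons_cons_of_ne hc (ih.1 _ q hbL (Or.inl rfl))
      · simp [pivot] at hsign
      · rw [twistWord_cons_of_eq hb hp]
        refine isReduced_cons_cons_of_ne (fun h => ?_) (ih.1 b q hbL (Or.inr ⟨hb, hp⟩))
        rw [h, ← hp] at hcq
        exact Bool.not_ne_self q hcq
      · rw [twistWord_cons_of_not_eq hb hp]
        exact isReduced_cons_cons_of_ne hc (pivot_step hb hp hbL)

lemma isReduced_twistWord (a : Cut α) {L : List (α × Bool)} (hL : IsReduced L) :
    IsReduced (a.twistWord false L) := by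
  cases L with
  | nil => exact .nil
  | cons b L =>
    have hcons := (a.isReduced_cons_twistWord L).1 b
    rcases a.eq_pivot_or false b with rfl | rfl | ⟨hb, hp⟩ | ⟨hb, hp⟩
    · rw [twistWord_pivot_cons]
      exact hcons false hL (Or.inl rfl)
    · rw [twistWord_pivot_not_cons]
      exact List.IsChain.tail (hcons true hL (Or.inl rfl))
    · rw [twistWord_cons_of_eq hb hp]
      exact hcons false hL (Or.inr ⟨hb, hp⟩)
    · rw [twistWord_cons_of_not_eq hb hp, FreeGroup.isReduced_cons_cons]
      exact ⟨fun h => absurd h.symm hb, hcons true hL (Or.inr ⟨hb, hp⟩)⟩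

lemma mk_twistWord (a : Cut α) (p : Bool) (L : List (α × Bool)) :
    (FreeGroup.mk (a.twistWord p L) : FreeGroup α) =
      of a.base ^ (if p then -boolSign a.sign else 0) *
        twistHom a.base a.vec (FreeGroup.mk L) := by
  induction L generalizing p with
  | nil =>
    cases p <;> cases h : a.sign <;>
      simp [twistWord, ← FreeGroup.one_eq_mk, mk_cons, boolSign, pivot, h]
  | cons b L ih =>
    rw [mk_cons b L, _root_.map_mul, _root_.map_zpow]
    rcases a.eq_pivot_or p b with rfl | rfl | ⟨hb, hp⟩ | ⟨hb, hp⟩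
    · rw [twistWord_pivot_cons, mk_cons, ih]
      simp only [pivot, twistHom_of_self, ← mul_assoc, ← zpow_add]
      rw [add_comm]
    · rw [twistWord_pivot_not_cons, ih]
      simp only [pivot, twistHom_of_self, ← mul_assoc, ← zpow_add]
      congr 2
      cases p <;> cases a.sign <;> simp [boolSign]
    · rw [twistWord_cons_of_eq hb hp, mk_cons, ih, twistHom_of]
      by_cases hside : b.1 ∈ a.side
      · have hvec : a.vec b.1 = boolSign a.sign := if_pos hside
        rw [conj_zpow, hvec]
        simp [hp, hside, mul_assoc]
      · simp [hp, hside, vec, signVector]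
    · rw [twistWord_cons_of_not_eq hb hp, mk_cons, mk_cons, ih, twistHom_of]
      obtain rfl : p = !decide (b.1 ∈ a.side) := by rw [← hp, Bool.not_not]
      by_cases hside : b.1 ∈ a.side
      · have hvec : a.vec b.1 = boolSign a.sign := if_pos hside
        rw [conj_zpow, hvec]
        simp [hside, mul_assoc, pivot]
      · cases h : a.sign <;> simp [hside, vec, signVector, boolSign, pivot, h]

lemma toWord_twistHom (a : Cut α) (y : FreeGroup α) :
    (twistHom a.base a.vec y).toWord = a.twistWord false y.toWord := by
  have h := a.mk_twistWord false y.toWord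
  rw [FreeGroup.mk_toWord] at h
  simp only [Bool.false_eq_true, if_false, zpow_zero, one_mul] at h
  rw [← h, FreeGroup.toWord_mk, (a.isReduced_twistWord FreeGroup.isReduced_toWord).reduce_eq]

lemma letterCount_base_twistHom (a : Cut α) (y : FreeGroup α) :
    letterCount a.base (twistHom a.base a.vec y) = crossings a.letters false y.toWord := by
  rw [letterCount, toWord_twistHom, count_base_twistWord]

lemma letterCount_twistHom_of_ne {a : Cut α} {j : α} (hj : j ≠ a.base) (y : FreeGroup α) :
    letterCount j (twistHom a.base a.vec y) = letterCount j y := by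
  rw [letterCount, toWord_twistHom, count_twistWord_of_ne hj, letterCount]

end Cut

/-- The set of letters `D` separates the generator `i` from its inverse and no other generator from
its inverse. -/
def SplitsOnly {α : Type*} (D : Finset (α × Bool)) (i : α) : Prop :=
  ∀ j, ((j, true) ∈ D ↔ (j, false) ∈ D) ↔ j ≠ i

section Corners

variable {α : Type*} [DecidableEq α] {D E : Finset (α × Bool)} {i j : α}

lemma SplitsOnly.corners_of_same (hD : SplitsOnly D i) (hE : SplitsOnly E i) :
    (SplitsOnly (D ∩ E) i ∧ SplitsOnly (D ∪ E) i) ∨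
      (SplitsOnly (D \ E) i ∧ SplitsOnly (E \ D) i) := by
  have hDi := hD i
  have hEi := hE i
  by_cases h : (i, true) ∈ D ↔ (i, true) ∈ E
  · refine Or.inl ⟨fun k => ?_, fun k => ?_⟩ <;>
    · have hDk := hD k
      have hEk := hE k
      simp only [Finset.mem_inter, Finset.mem_union]
      grind
  · refine Or.inr ⟨fun k => ?_, fun k => ?_⟩ <;>
    · have hDk := hD k
      have hEk := hE k
      simp only [Finset.mem_sdiff]
      grind

lemma SplitsOnly.corners_of_ne (hD : SplitsOnly D i) (hE : SplitsOnly E j) (hij : i ≠ j) :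
    (SplitsOnly (D ∩ E) i ∧ SplitsOnly (D ∪ E) j) ∨
    (SplitsOnly (D ∩ E) j ∧ SplitsOnly (D ∪ E) i) ∨
    (SplitsOnly (D \ E) i ∧ SplitsOnly (E \ D) j) ∨
      (SplitsOnly (D \ E) j ∧ SplitsOnly (E \ D) i) := by
  have hDi := hD i
  have hEi := hE i
  have hDj := hD j
  have hEj := hE j
  by_cases hiE : (i, true) ∈ E <;> by_cases hjD : (j, true) ∈ D
  on_goal 1 => right; right; right
  on_goal 2 => left
  on_goal 3 => right; left
  on_goal 4 => right; right; left
  all_goals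
    refine ⟨fun k => ?_, fun k => ?_⟩ <;>
    · have hDk := hD k
      have hEk := hE k
      simp only [Finset.mem_inter, Finset.mem_union, Finset.mem_sdiff]
      grind

end Corners

namespace Cut

section Corners

variable {α : Type*} [DecidableEq α]

lemma splitsOnly_letters (a : Cut α) : SplitsOnly a.letters a.base := by
  intro j
  by_cases hj : j = a.base
  · subst hj
    cases h : a.sign <;> simp [base_mem_letters, h]
  · rw [mem_letters_of_ne (b := (j, true)) hj, mem_letters_of_ne (b := (j, false)) hj]
    simp [hj]

lemma exists_letters_eq [Finite α] {D : Finset (α × Bool)} {i : α} (hD : SplitsOnly D i) :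
    ∃ a : Cut α, a.base = i ∧ a.letters = D := by
  have := Fintype.ofFinite α
  refine ⟨⟨i, decide ((i, true) ∈ D), {j | j ≠ i ∧ (j, true) ∈ D}, by simp⟩, rfl, ?_⟩
  ext ⟨j, s⟩
  have hj := hD j
  rw [mem_letters]
  simp only [Finset.mem_filter, Finset.mem_univ, true_and, Prod.mk.injEq]
  cases s <;> grind

lemma letters_injective : Function.Injective (letters : Cut α → Finset (α × Bool)) := by
  intro a b h
  have hbase : a.base = b.base := by
    by_contra hne
    have ha := (a.splitsOnly_letters a.base).not.2 (not_not.2 rfl)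
    rw [h] at ha
    exact ha ((b.splitsOnly_letters a.base).2 hne)
  have hsign : a.sign = b.sign := by
    rw [← base_mem_letters b a.sign, ← hbase, ← h, base_mem_letters]
  refine Cut.ext hbase hsign (Finset.ext fun j => ?_)
  have hj := Finset.ext_iff.1 h (j, !a.sign)
  simpa [mem_letters, ← hsign] using hj

/-- Two cuts are compatible if their sides are nested or disjoint. -/
def Compatible (a b : Cut α) : Prop :=
  a.letters ⊆ b.letters ∨ b.letters ⊆ a.letters ∨ Disjoint a.letters b.letters

instance : Std.Refl (Compatible : Cut α → Cut α → Prop) := ⟨fun _ => Or.inl subset_rfl⟩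

instance : Std.Symm (Compatible : Cut α → Cut α → Prop) :=
  ⟨fun _ _ h => h.elim (Or.inr ∘ Or.inl) (Or.imp_right fun h => Or.inr h.symm)⟩

/-- The cuts `c` and `d` are opposite corners of the crossing pair `a`, `b`. -/
structure AreCorners (a b c d : Cut α) : Prop where
  base : (c.base = a.base ∧ d.base = b.base) ∨ (c.base = b.base ∧ d.base = a.base)
  letters : (c.letters = a.letters ∩ b.letters ∧ d.letters = a.letters ∪ b.letters) ∨
    (c.letters = a.letters \ b.letters ∧ d.letters = b.letters \ a.letters)

lemma exists_areCorners [Finite α] (a b : Cut α) : ∃ c d, AreCorners a b c d := by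
  have of_splitsOnly : ∀ {i j P Q}, SplitsOnly P i ∧ SplitsOnly Q j →
      ((i = a.base ∧ j = b.base) ∨ (i = b.base ∧ j = a.base)) →
      ((P = a.letters ∩ b.letters ∧ Q = a.letters ∪ b.letters) ∨
        (P = a.letters \ b.letters ∧ Q = b.letters \ a.letters)) → ∃ c d, AreCorners a b c d := by
    rintro i j P Q ⟨hP, hQ⟩ hbase hletters
    obtain ⟨c, rfl, rfl⟩ := exists_letters_eq hP
    obtain ⟨d, rfl, rfl⟩ := exists_letters_eq hQ
    exact ⟨c, d, hbase, hletters⟩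
  by_cases hab : a.base = b.base
  · rcases a.splitsOnly_letters.corners_of_same (hab ▸ b.splitsOnly_letters) with h | h
    · exact of_splitsOnly h (Or.inl ⟨rfl, hab⟩) (Or.inl ⟨rfl, rfl⟩)
    · exact of_splitsOnly h (Or.inl ⟨rfl, hab⟩) (Or.inr ⟨rfl, rfl⟩)
  · rcases a.splitsOnly_letters.corners_of_ne b.splitsOnly_letters hab with h | h | h | h
    · exact of_splitsOnly h (Or.inl ⟨rfl, rfl⟩) (Or.inl ⟨rfl, rfl⟩)
    · exact of_splitsOnly h (Or.inr ⟨rfl, rfl⟩) (Or.inl ⟨rfl, rfl⟩)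
    · exact of_splitsOnly h (Or.inl ⟨rfl, rfl⟩) (Or.inr ⟨rfl, rfl⟩)
    · exact of_splitsOnly h (Or.inr ⟨rfl, rfl⟩) (Or.inr ⟨rfl, rfl⟩)

namespace AreCorners

variable {a b c d e : Cut α}

lemma letters_subset (h : AreCorners a b c d) : c.letters ⊆ a.letters := by
  rcases h.letters with ⟨hc, -⟩ | ⟨hc, -⟩ <;> rw [hc]
  exacts [Finset.inter_subset_left, Finset.sdiff_subset]

lemma compatible_right (h : AreCorners a b c d) : c.Compatible b := by
  rcases h.letters with ⟨hc, -⟩ | ⟨hc, -⟩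
  · exact Or.inl (hc ▸ Finset.inter_subset_right)
  · exact Or.inr (Or.inr (hc ▸ Finset.sdiff_disjoint))

lemma compatible_of_subset (h : AreCorners a b c d) (hab : ¬a.Compatible b)
    (hea : e.letters ⊆ a.letters) (heb : e.Compatible b) : e.Compatible c := by
  rcases heb with hsub | hsup | hdisj
  · rcases h.letters with ⟨hc, -⟩ | ⟨hc, -⟩
    · exact Or.inl (hc ▸ Finset.subset_inter hea hsub)
    · exact Or.inr (Or.inr (hc ▸ (Finset.sdiff_disjoint.mono_right hsub).symm))
  · exact absurd (Or.inr (Or.inl (hsup.trans hea))) hab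
  · rcases h.letters with ⟨hc, -⟩ | ⟨hc, -⟩
    · exact Or.inr (Or.inr (hc ▸ hdisj.mono_right Finset.inter_subset_right))
    · exact Or.inl (hc ▸ Finset.subset_sdiff.2 ⟨hea, hdisj⟩)

/- The smallest cuts crossing `b` have corners that inherit all their compatibilities. -/
lemma compatible_of_compatible (h : AreCorners a b c d) (hab : ¬a.Compatible b)
    (hea : e.Compatible a) (hne : e ≠ a)
    (hcard : ¬e.Compatible b → a.letters.card ≤ e.letters.card) : e.Compatible c := by
  rcases hea with hsub | hsup | hdisj
  · refine h.compatible_of_subset hab hsub (by_contra fun heb => (hcard heb).not_gt ?_)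
    exact Finset.card_lt_card (hsub.ssubset_of_ne fun heq => hne (letters_injective heq))
  · exact Or.inr (Or.inl (h.letters_subset.trans hsup))
  · exact Or.inr (Or.inr (hdisj.mono_right h.letters_subset))

end AreCorners

/-- The change of the word length of `y` under the twist of the cut `a`. -/
def lengthChange (a : Cut α) (y : FreeGroup α) : ℤ :=
  crossings a.letters false y.toWord - letterCount a.base y

lemma lengthChange_eq (a : Cut α) (y : FreeGroup α) :
    a.lengthChange y = letterCount a.base (twistHom a.base a.vec y) - letterCount a.base y := by
  rw [lengthChange, letterCount_base_twistHom]

lemma AreCorners.lengthChange_add_le {a b c d : Cut α} (h : AreCorners a b c d)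
    (y : FreeGroup α) :
    c.lengthChange y + d.lengthChange y ≤ a.lengthChange y + b.lengthChange y := by
  have hcrossings : crossings c.letters false y.toWord + crossings d.letters false y.toWord ≤
      crossings a.letters false y.toWord + crossings b.letters false y.toWord := by
    rcases h.letters with ⟨hc, hd⟩ | ⟨hc, hd⟩ <;> rw [hc, hd]
    · exact crossings_inter_add_crossings_union_le a.letters b.letters y.toWord false false
    · exact crossings_sdiff_add_crossings_sdiff_le a.letters b.letters y.toWord false false
  unfold lengthChange
  rcases h.base with ⟨hc, hd⟩ | ⟨hc, hd⟩ <;> rw [hc, hd] <;> omega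

end Corners

end Cut

section Reductivity

variable {n : ℕ}

/-- The values of an integer function on the free group, ordered lexicographically along an
enumeration of the group that is preceded by the sum of the values at the generators. -/
noncomputable def lexVector (n : ℕ) : (FG n → ℤ) →+ Lex (ℕ → ℤ) where
  toFun F := toLex fun k =>
    k.casesOn (∑ j, F (of j)) fun k => F ((exists_surjective_nat (FG n)).choose k)
  map_zero' := by
    refine congrArg toLex (funext fun k => ?_)
    cases k with
    | zero => exact Finset.sum_eq_zero fun _ _ => rfl
    | succ k => rfl
  map_add' F G := by
    refine congrArg toLex (funext fun k => ?_)
    cases k with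
    | zero => exact Finset.sum_add_distrib
    | succ k => rfl

lemma lexVector_mono {F G : FG n → ℤ} (h : F ≤ G) : lexVector n F ≤ lexVector n G := by
  refine Pi.toLex_monotone fun k => ?_
  cases k with
  | zero => exact Finset.sum_le_sum fun j _ => h _
  | succ k => exact h _

/-- The lengths of the preimages under `g` of all words, as a lexicographic vector: the height
function on `PΣ_n`. -/
noncomputable def normVector (g : PSigmaAut n) : Lex (ℕ → ℤ) :=
  lexVector n fun y => ((g⁻¹ • y).norm : ℤ)

/-- The change of `normVector g` when `g` is multiplied on the right by the inverse twist of the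
cut `a`. -/
noncomputable def reductivity (g : PSigmaAut n) (a : Cut (Fin n)) : Lex (ℕ → ℤ) :=
  lexVector n fun y => a.lengthChange (g⁻¹ • y)

open Classical in
/-- The cuts whose inverse twists decrease the height of `g`. -/
noncomputable def reductiveCuts (g : PSigmaAut n) : Finset (Cut (Fin n)) :=
  {a | reductivity g a < 0}

lemma mem_reductiveCuts {g : PSigmaAut n} {a : Cut (Fin n)} :
    a ∈ reductiveCuts g ↔ reductivity g a < 0 := by
  simp [reductiveCuts]

lemma Cut.AreCorners.reductivity_neg {g : PSigmaAut n} {a b c d : Cut (Fin n)}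
    (h : AreCorners a b c d) (ha : reductivity g a < 0) (hb : reductivity g b ≤ reductivity g d) :
    reductivity g c < 0 := by
  have hadd : reductivity g c + reductivity g d ≤ reductivity g a + reductivity g b := by
    rw [reductivity, reductivity, reductivity, reductivity, ← _root_.map_add, ← _root_.map_add]
    exact lexVector_mono fun y => h.lengthChange_add_le _
  exact (le_of_add_le_add_right ((add_le_add_right hb _).trans hadd)).trans_lt ha

theorem orderAcyclic_compatibleSubsets_reductiveCuts (g : PSigmaAut n)
    (hR : (reductiveCuts g).Nonempty) :
    OrderAcyclic (compatibleSubsets Cut.Compatible (reductiveCuts g)) := by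
  obtain ⟨b, hb, hmin⟩ := Finset.exists_min_image _ (reductivity g) hR
  have hmin : ∀ d, reductivity g b ≤ reductivity g d := fun d => by
    by_cases hd : d ∈ reductiveCuts g
    · exact hmin d hd
    · exact (mem_reductiveCuts.1 hb).le.trans (not_lt.1 (mem_reductiveCuts.not.1 hd))
  refine OrderAcyclic.compatibleSubsets (fun a => a.letters.card) hb fun a ha hab => ?_
  obtain ⟨c, d, h⟩ := Cut.exists_areCorners a b
  exact ⟨c, mem_reductiveCuts.2 (h.reductivity_neg (mem_reductiveCuts.1 ha) (hmin d)),
    h.compatible_right, Or.inl h.letters_subset,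
    fun e _ hea hne => h.compatible_of_compatible hab hea hne⟩

lemma side_nonempty_of_mem_reductiveCuts {g : PSigmaAut n} {a : Cut (Fin n)}
    (ha : a ∈ reductiveCuts g) : a.side.Nonempty := by
  by_contra h
  have hvec : a.vec = 0 := by
    funext b
    simp [Cut.vec, signVector, Finset.not_nonempty_iff_eq_empty.1 h]
  refine (mem_reductiveCuts.1 ha).ne ?_
  rw [reductivity, ← _root_.map_zero (lexVector n)]
  congr 1
  funext y
  simp [Cut.lengthChange_eq, hvec, twistHom_zero_apply]

end Reductivity

/-! ### Commuting twists -/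

/-- Vectors with entries `0` and `ε` for a sign `ε`. -/
def IsSignVector {α : Type*} [DecidableEq α] (u : α → ℤ) : Prop := ∃ ε B, u = signVector ε B

section SignVector

variable {α : Type*} [DecidableEq α] {u v : α → ℤ}

lemma isSignVector_zero : IsSignVector (0 : α → ℤ) := ⟨true, ∅, by funext; simp [signVector]⟩

lemma Cut.isSignVector_vec (a : Cut α) : IsSignVector a.vec := ⟨a.sign, a.side, rfl⟩

lemma signVector_ne_zero_iff {ε : Bool} {B : Finset α} {b : α} :
    signVector ε B b ≠ 0 ↔ b ∈ B := by
  cases ε <;> simp [signVector, boolSign]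

lemma IsSignVector.exists_cut_vec (hu : IsSignVector u) {i : α} (hi : u i = 0) :
    ∃ a : Cut α, a.base = i ∧ a.vec = u := by
  obtain ⟨ε, B, rfl⟩ := hu
  exact ⟨⟨i, ε, B, fun h => signVector_ne_zero_iff.2 h hi⟩, rfl, rfl⟩

lemma IsSignVector.neg (hu : IsSignVector u) : IsSignVector (-u) := by
  obtain ⟨ε, B, rfl⟩ := hu
  refine ⟨!ε, B, funext fun b => ?_⟩
  cases ε <;> by_cases h : b ∈ B <;> simp [signVector, boolSign, h]

lemma IsSignVector.eq_of_ne_zero (hu : IsSignVector u) {b c : α} (hb : u b ≠ 0) (hc : u c ≠ 0) :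
    u b = u c := by
  obtain ⟨ε, B, rfl⟩ := hu
  rw [signVector_ne_zero_iff] at hb hc
  simp [signVector, hb, hc]

lemma IsSignVector.eq_zero_or (hu : IsSignVector u) (b : α) : u b = 0 ∨ u b = 1 ∨ u b = -1 := by
  obtain ⟨ε, B, rfl⟩ := hu
  cases ε <;> by_cases h : b ∈ B <;> simp [signVector, boolSign, h]

lemma IsSignVector.support_sub (hu : IsSignVector u) (hv : IsSignVector v)
    (huv : IsSignVector (u - v)) :
    Function.support (u - v) = symmDiff (Function.support u) (Function.support v) := by
  ext b
  have hb := hu.eq_zero_or b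
  have hb' := hv.eq_zero_or b
  have hb'' := huv.eq_zero_or b
  simp only [Set.mem_symmDiff, Function.mem_support, Pi.sub_apply] at *
  omega

lemma letterCount_twistHom {i j : α} (hij : j ≠ i) (hu : IsSignVector u) (hui : u i = 0)
    (y : FreeGroup α) : letterCount j (twistHom i u y) = letterCount j y := by
  obtain ⟨a, rfl, rfl⟩ := hu.exists_cut_vec hui
  exact Cut.letterCount_twistHom_of_ne hij y

lemma norm_twistHom [Finite α] {i : α} (hu : IsSignVector u) (hui : u i = 0) (y : FreeGroup α) :
    ((twistHom i u y).norm : ℤ) = y.norm + (letterCount i (twistHom i u y) - letterCount i y) := by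
  have := Fintype.ofFinite α
  rw [norm_eq_sum_letterCount, norm_eq_sum_letterCount,
    ← Finset.add_sum_erase _ _ (Finset.mem_univ i),
    ← Finset.add_sum_erase _ (fun j => letterCount j y) (Finset.mem_univ i),
    Finset.sum_congr rfl fun j hj => letterCount_twistHom (Finset.ne_of_mem_erase hj) hu hui y]
  push_cast
  ring

end SignVector

section Compatible

variable {α : Type*}

/-- The supports `P` and `Q` of two twists, with bases `i` and `j`, are nested or disjoint in the
way that makes the twists commute. -/
def SupportsCompatible (i : α) (P : Set α) (j : α) (Q : Set α) : Prop :=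
  P = ∅ ∨ Q = ∅ ∨ (j ∉ P ∧ i ∉ Q ∧ Disjoint P Q) ∨ (j ∈ P ∧ Q ⊆ P) ∨ (i ∈ Q ∧ P ⊆ Q)

lemma SupportsCompatible.symm {i j : α} {P Q : Set α} (h : SupportsCompatible i P j Q) :
    SupportsCompatible j Q i P := by
  rcases h with h | h | ⟨hj, hi, h⟩ | h | h
  · exact Or.inr (Or.inl h)
  · exact Or.inl h
  · exact Or.inr (Or.inr (Or.inl ⟨hi, hj, h.symm⟩))
  · exact Or.inr (Or.inr (Or.inr (Or.inr h)))
  · exact Or.inr (Or.inr (Or.inr (Or.inl h)))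

lemma SupportsCompatible.symmDiff {i j : α} {P P' Q : Set α} (h : SupportsCompatible i P j Q)
    (h' : SupportsCompatible i P' j Q) (hi : i ∉ P) (hi' : i ∉ P') :
    SupportsCompatible i (symmDiff P P') j Q := by
  simp only [SupportsCompatible, Set.eq_empty_iff_forall_notMem, Set.disjoint_left,
    Set.subset_def, Set.mem_symmDiff] at *
  rcases h with h | h | ⟨h₁, h₂, h₃⟩ | ⟨h₁, h₂⟩ | ⟨h₁, h₂⟩ <;>
  rcases h' with k | k | ⟨k₁, k₂, k₃⟩ | ⟨k₁, k₂⟩ | ⟨k₁, k₂⟩ <;> grind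

variable [DecidableEq α] {i j : α} {u u' v : α → ℤ}

lemma SupportsCompatible.sub
    (h : SupportsCompatible i (Function.support u) j (Function.support v))
    (h' : SupportsCompatible i (Function.support u') j (Function.support v))
    (hu : IsSignVector u) (hu' : IsSignVector u') (huu' : IsSignVector (u - u'))
    (hi : u i = 0) (hi' : u' i = 0) :
    SupportsCompatible i (Function.support (u - u')) j (Function.support v) := by
  rw [hu.support_sub hu' huu']
  exact h.symmDiff h' (by simpa using hi) (by simpa using hi')

omit [DecidableEq α] in
lemma twistHom_comm_of_disjoint (huj : u j = 0) (hvi : v i = 0)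
    (h : Disjoint (Function.support u) (Function.support v)) (y : FreeGroup α) :
    twistHom i u (twistHom j v y) = twistHom j v (twistHom i u y) := by
  have key : (twistHom i u).comp (twistHom j v) = (twistHom j v).comp (twistHom i u) := by
    refine FreeGroup.ext_hom _ _ fun b => ?_
    simp only [MonoidHom.comp_apply, twistHom_of, _root_.map_mul, _root_.map_inv,
      _root_.map_zpow, huj, hvi]
    by_cases hb : v b = 0
    · simp [hb]
    · simp [not_not.1 fun hub => Set.disjoint_left.1 h hub hb]
  exact DFunLike.congr_fun key y

lemma twistHom_comm_of_subset (hu : IsSignVector u) (hui : u i = 0) (huj : u j ≠ 0)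
    (h : Function.support v ⊆ Function.support u) (y : FreeGroup α) :
    twistHom i u (twistHom j v y) = twistHom j v (twistHom i u y) := by
  have hvi : v i = 0 := by_contra fun hne => h hne hui
  have key : (twistHom i u).comp (twistHom j v) = (twistHom j v).comp (twistHom i u) := by
    refine FreeGroup.ext_hom _ _ fun b => ?_
    simp only [MonoidHom.comp_apply, twistHom_of, _root_.map_mul, _root_.map_inv,
      _root_.map_zpow, hvi]
    by_cases hb : v b = 0
    · simp [hb]
    · rw [hu.eq_of_ne_zero huj (h hb), conj_zpow]
      group
  exact DFunLike.congr_fun key y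

lemma SupportsCompatible.commute_twist {n : ℕ} {i j : Fin n} {u v : Fin n → ℤ}
    (h : SupportsCompatible i (Function.support u) j (Function.support v))
    (hu : IsSignVector u) (hv : IsSignVector v) (hui : u i = 0) (hvj : v j = 0) :
    Commute (twist i u) (twist j v) := by
  have of_comm : (∀ y, twistHom i u (twistHom j v y) = twistHom j v (twistHom i u y)) →
      Commute (twist i u) (twist j v) := fun h => Subtype.ext (MulEquiv.ext h)
  rcases h with h | h | ⟨huj, hvi, h⟩ | ⟨huj, h⟩ | ⟨hvi, h⟩
  · rw [Function.support_eq_empty_iff.1 h, twist_zero]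
    exact Commute.one_left _
  · rw [Function.support_eq_empty_iff.1 h, twist_zero]
    exact Commute.one_right _
  · exact of_comm (twistHom_comm_of_disjoint (Function.notMem_support.1 huj)
      (Function.notMem_support.1 hvi) h)
  · exact of_comm (twistHom_comm_of_subset hu hui huj h)
  · exact of_comm fun y => (twistHom_comm_of_subset hv hvj hvi h y).symm

end Compatible

section Exponent

variable {n : ℕ}

/-- The exponent sum of the generator `i`. -/
def exponent (i : Fin n) : FG n →* Multiplicative ℤ :=
  FreeGroup.lift (Pi.mulSingle i (Multiplicative.ofAdd 1))

lemma exponent_smul (i : Fin n) (g : PSigmaAut n) (y : FG n) :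
    exponent i (g • y) = exponent i y := by
  have h : (exponent i).comp (MulDistribMulAction.toMonoidHom (FG n) g) = exponent i := by
    refine FreeGroup.ext_hom _ _ fun b => ?_
    obtain ⟨w, hw⟩ := g.2 b
    change exponent i (g.1 (of b)) = _
    rw [hw, _root_.map_mul, _root_.map_mul, _root_.map_inv, mul_comm, inv_mul_cancel_left]
  exact DFunLike.congr_fun h y

/-- The action of the free group on `ℚ` in which the generator `i` doubles, the generator `b`
translates by `1`, and all other generators act trivially. -/
def affineAction (i b : Fin n) : FG n →* Equiv.Perm ℚ :=
  FreeGroup.lift fun k =>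
    if k = i then Equiv.mulLeft₀ 2 two_ne_zero else if k = b then Equiv.addRight 1 else 1

lemma affineAction_apply (i b : Fin n) (w : FG n) (t : ℚ) :
    affineAction i b w t = 2 ^ (exponent i w).toAdd * t + affineAction i b w 0 := by
  induction w using FreeGroup.induction_on generalizing t with
  | C1 => simp
  | of k =>
    by_cases hki : k = i
    · subst hki
      simp [affineAction, exponent]
    · have hk : exponent i (of k) = 1 := by simp [exponent, hki]
      by_cases hkb : k = b
      · simp [affineAction, hk, hki, if_pos hkb]
      · simp [affineAction, hk, hki, hkb]
  | inv_of k ih =>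
    have hinv : ∀ s, affineAction i b (of k) (affineAction i b (of k)⁻¹ s) = s := fun s => by simp
    have ht := (ih _).symm.trans (hinv t)
    have h0 := (ih _).symm.trans (hinv 0)
    change affineAction i b (of k)⁻¹ t =
      2 ^ (exponent i (of k)⁻¹).toAdd * t + affineAction i b (of k)⁻¹ 0
    rw [_root_.map_inv (exponent i), toAdd_inv, zpow_neg]
    field_simp
    linear_combination ht - h0
  | mul v w hv hw =>
    rw [_root_.map_mul, Equiv.Perm.mul_apply, Equiv.Perm.mul_apply, hw, hv,
      hv (affineAction i b w 0), _root_.map_mul, toAdd_mul, zpow_add₀ two_ne_zero]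
    ring

lemma affineAction_conj {i b : Fin n} (hib : i ≠ b) (w : FG n) :
    affineAction i b (w * of b * w⁻¹) 0 = 2 ^ (exponent i w).toAdd := by
  have hb : ∀ t, affineAction i b (of b) t = t + 1 := fun t => by
    simp [affineAction, hib.symm]
  have hw : affineAction i b w (affineAction i b w⁻¹ 0) = 0 := by simp
  rw [affineAction_apply] at hw
  rw [_root_.map_mul, _root_.map_mul, Equiv.Perm.mul_apply, Equiv.Perm.mul_apply, hb,
    affineAction_apply]
  linear_combination hw

/-- The exponent sum of `i` in a word that conjugates the generator `b` to its image under `g`; by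
convention it is `0` for `i = b`, where it is not determined by `g`. -/
noncomputable def conjExponent (g : PSigmaAut n) (i b : Fin n) : ℤ :=
  if i = b then 0 else (exponent i (g.2 b).choose).toAdd

lemma conjExponent_self (g : PSigmaAut n) (i : Fin n) : conjExponent g i i = 0 := if_pos rfl

lemma conjExponent_eq {g : PSigmaAut n} {i b : Fin n} (hib : i ≠ b) {w : FG n}
    (hw : g • of b = w * of b * w⁻¹) : conjExponent g i b = (exponent i w).toAdd := by
  have hconj := congrArg (affineAction i b · 0) ((g.2 b).choose_spec.symm.trans hw)
  simp only [affineAction_conj hib] at hconj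
  rw [conjExponent, if_neg hib]
  exact zpow_right_injective₀ two_pos (by norm_num) hconj

lemma conjExponent_mul (g h : PSigmaAut n) :
    conjExponent (g * h) = conjExponent g + conjExponent h := by
  funext i b
  by_cases hib : i = b
  · subst hib
    simp [conjExponent_self]
  obtain ⟨w, hw⟩ : ∃ w, g • of b = w * of b * w⁻¹ := g.2 b
  obtain ⟨v, hv⟩ : ∃ v, h • of b = v * of b * v⁻¹ := h.2 b
  have hgh : (g * h) • of b = (g • v * w) * of b * (g • v * w)⁻¹ := by
    rw [mul_smul, hv, smul_mul', smul_mul', smul_inv', hw]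
    group
  rw [Pi.add_apply, Pi.add_apply, conjExponent_eq hib hgh, conjExponent_eq hib hw,
    conjExponent_eq hib hv, _root_.map_mul, exponent_smul, toAdd_mul, add_comm]

lemma conjExponent_one : conjExponent (1 : PSigmaAut n) = 0 := by
  simpa using conjExponent_mul (1 : PSigmaAut n) 1

lemma conjExponent_twist {i : Fin n} {u : Fin n → ℤ} (hu : u i = 0) :
    conjExponent (twist i u) = Pi.single i u := by
  funext k b
  by_cases hkb : k = b
  · subst hkb
    rw [conjExponent_self]
    by_cases hki : k = i
    · subst hki
      simp [hu]
    · simp [hki]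
  · rw [conjExponent_eq hkb (twistHom_of i u b), _root_.map_zpow]
    by_cases hki : k = i
    · subst hki
      simp [exponent]
    · simp [exponent, hki]

end Exponent

section MultiTwist

variable {n : ℕ}

/-- The product of the twists by the rows `δ i`, in the order of the list `l`. -/
def listTwist (δ : Fin n → Fin n → ℤ) (l : List (Fin n)) : PSigmaAut n :=
  (l.map fun i => twist i (δ i)).prod

/-- The ordered product of the twists by all rows of the matrix `δ`. -/
def multiTwist (δ : Fin n → Fin n → ℤ) : PSigmaAut n := listTwist δ (List.finRange n)

lemma listTwist_cons (δ : Fin n → Fin n → ℤ) (i : Fin n) (l : List (Fin n)) :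
    listTwist δ (i :: l) = twist i (δ i) * listTwist δ l := by
  simp [listTwist]

lemma commute_listTwist {δ : Fin n → Fin n → ℤ} {g : PSigmaAut n} {l : List (Fin n)}
    (h : ∀ i ∈ l, Commute g (twist i (δ i))) : Commute g (listTwist δ l) :=
  Commute.list_prod_right _ _ (by simpa using h)

lemma multiTwist_zero : multiTwist (0 : Fin n → Fin n → ℤ) = 1 := by
  simp [multiTwist, listTwist, twist_zero]

lemma listTwist_add {δ ε : Fin n → Fin n → ℤ}
    (hc : ∀ i j, i ≠ j → Commute (twist i (ε i)) (twist j (δ j))) {l : List (Fin n)}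
    (hl : l.Nodup) : listTwist (δ + ε) l = listTwist δ l * listTwist ε l := by
  induction l with
  | nil => simp [listTwist]
  | cons i l ih =>
    rw [List.nodup_cons] at hl
    have hcomm : Commute (twist i (ε i)) (listTwist δ l) :=
      commute_listTwist fun j hj => hc i j fun h => hl.1 (h ▸ hj)
    rw [listTwist_cons, listTwist_cons, listTwist_cons, ih hl.2, Pi.add_apply, twist_add]
    calc twist i (δ i) * twist i (ε i) * (listTwist δ l * listTwist ε l)
        = twist i (δ i) * (twist i (ε i) * listTwist δ l) * listTwist ε l := by group
      _ = twist i (δ i) * listTwist δ l * (twist i (ε i) * listTwist ε l) := by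
        rw [hcomm.eq]
        group

lemma multiTwist_add {δ ε : Fin n → Fin n → ℤ}
    (hc : ∀ i j, i ≠ j → Commute (twist i (ε i)) (twist j (δ j))) :
    multiTwist (δ + ε) = multiTwist δ * multiTwist ε :=
  listTwist_add hc (List.nodup_finRange n)

lemma conjExponent_multiTwist {δ : Fin n → Fin n → ℤ} (hδ : ∀ i, δ i i = 0) :
    conjExponent (multiTwist δ) = δ := by
  have hlist : ∀ l : List (Fin n), conjExponent (listTwist δ l) =
      (l.map fun i => Pi.single i (δ i)).sum := fun l => by
    induction l with
    | nil => exact conjExponent_one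
    | cons i l ih =>
      rw [listTwist_cons, conjExponent_mul, ih, conjExponent_twist (hδ i), List.map_cons,
        List.sum_cons]
  rw [multiTwist, hlist, ← List.ofFn_eq_map, List.sum_ofFn, Finset.univ_sum_single]

lemma listTwist_single {i : Fin n} (u : Fin n → ℤ) {l : List (Fin n)} (hl : l.Nodup) :
    listTwist (Pi.single i u) l = if i ∈ l then twist i u else 1 := by
  induction l with
  | nil => simp [listTwist]
  | cons k l ih =>
    rw [List.nodup_cons] at hl
    rw [listTwist_cons, ih hl.2]
    by_cases hik : i = k
    · subst hik
      simp [hl.1]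
    · simp [hik, twist_zero]

lemma multiTwist_single (i : Fin n) (u : Fin n → ℤ) :
    multiTwist (Pi.single i u) = twist i u := by
  rw [multiTwist, listTwist_single u (List.nodup_finRange n), if_pos (List.mem_finRange i)]

variable {δ : Fin n → Fin n → ℤ} (hδ : ∀ i, IsSignVector (δ i)) (hδ₀ : ∀ i, δ i i = 0)
  (hc : ∀ i j, i ≠ j → Commute (twist i (δ i)) (twist j (δ j)))

include hδ hδ₀ in
lemma letterCount_listTwist_smul {l : List (Fin n)} {j : Fin n} (hj : j ∉ l) (y : FG n) :
    letterCount j (listTwist δ l • y) = letterCount j y := by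
  induction l with
  | nil => simp [listTwist]
  | cons i l ih =>
    rw [List.mem_cons, not_or] at hj
    rw [listTwist_cons, mul_smul, twist_smul, letterCount_twistHom hj.1 (hδ i) (hδ₀ i), ih hj.2]

include hδ hδ₀ hc in
lemma norm_listTwist_smul {l : List (Fin n)} (hl : l.Nodup) (y : FG n) :
    ((listTwist δ l • y).norm : ℤ) = y.norm +
      (l.map fun i => (letterCount i (twistHom i (δ i) y) - letterCount i y : ℤ)).sum := by
  induction l with
  | nil => simp [listTwist]
  | cons i l ih =>
    rw [List.nodup_cons] at hl
    have hcomm : Commute (twist i (δ i)) (listTwist δ l) :=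
      commute_listTwist fun j hj => hc i j fun h => hl.1 (h ▸ hj)
    have hcount := letterCount_listTwist_smul hδ hδ₀ hl.1 y
    have hcount' := letterCount_listTwist_smul hδ hδ₀ hl.1 (twist i (δ i) • y)
    rw [← mul_smul, ← hcomm.eq, mul_smul, twist_smul, twist_smul] at hcount'
    rw [listTwist_cons, mul_smul, twist_smul, norm_twistHom (hδ i) (hδ₀ i), hcount, hcount',
      ih hl.2, List.map_cons, List.sum_cons]
    ring

include hδ hδ₀ hc in
lemma norm_multiTwist_smul (y : FG n) :
    ((multiTwist δ • y).norm : ℤ) = y.norm +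
      ∑ i, (letterCount i (twistHom i (δ i) y) - letterCount i y : ℤ) := by
  rw [multiTwist, norm_listTwist_smul hδ hδ₀ hc (List.nodup_finRange n), ← List.ofFn_eq_map,
    List.sum_ofFn]

end MultiTwist

/-! ### Cells of commuting twists -/

section Cells

open scoped Classical Pointwise

variable {n : ℕ}

/-- The sets `V i` of exponent vectors are such that the twists by their differences commute for
distinct `i`. -/
structure IsBox (V : Fin n → Finset (Fin n → ℤ)) : Prop where
  diag : ∀ i, ∀ u ∈ V i, u i = 0
  isSignVector : ∀ i, ∀ u ∈ V i, ∀ u' ∈ V i, IsSignVector (u - u')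
  compatible : ∀ i j, i ≠ j → ∀ u ∈ V i, ∀ u' ∈ V i, ∀ v ∈ V j, ∀ v' ∈ V j,
    SupportsCompatible i (Function.support (u - u')) j (Function.support (v - v'))

/-- The exponent vectors of the elements of `c` at the generator `i`. -/
noncomputable def coords (c : Finset (PSigmaAut n)) (i : Fin n) : Finset (Fin n → ℤ) :=
  c.image fun x => conjExponent x i

/-- A cell is a set of automorphisms that is parametrized through `conjExponent` by a box, distinct
points differing by products of commuting twists. -/
structure IsCell (c : Finset (PSigmaAut n)) : Prop where
  nonempty : c.Nonempty
  isBox : IsBox (coords c)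
  mem_iff : ∀ {x}, x ∈ c → ∀ {y}, y ∈ c ↔
    (∀ i, conjExponent y i ∈ coords c i) ∧ y = x * multiTwist (conjExponent y - conjExponent x)

/-- The points with exponent vectors in `V` that are obtained from `g` by twisting. -/
noncomputable def cell (g : PSigmaAut n) (V : Fin n → Finset (Fin n → ℤ)) :
    Finset (PSigmaAut n) :=
  (Fintype.piFinset V).image fun v => g * multiTwist (v - conjExponent g)

lemma mem_coords {c : Finset (PSigmaAut n)} {x : PSigmaAut n} (hx : x ∈ c) (i : Fin n) :
    conjExponent x i ∈ coords c i :=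
  Finset.mem_image_of_mem _ hx

lemma coords_mono {c d : Finset (PSigmaAut n)} (h : c ⊆ d) (i : Fin n) :
    coords c i ⊆ coords d i :=
  Finset.image_subset_image h

/-- The change of `normVector g` when `g` is multiplied on the right by `twist i (-u)`. -/
noncomputable def normChange (g : PSigmaAut n) (i : Fin n) (u : Fin n → ℤ) : Lex (ℕ → ℤ) :=
  lexVector n fun y => letterCount i (twistHom i u (g⁻¹ • y)) - letterCount i (g⁻¹ • y)

lemma normChange_zero (g : PSigmaAut n) (i : Fin n) : normChange g i 0 = 0 := by
  rw [normChange, ← _root_.map_zero (lexVector n)]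
  congr 1
  funext y
  rw [twistHom_zero_apply, sub_self, Pi.zero_apply]

lemma normChange_vec (g : PSigmaAut n) (a : Cut (Fin n)) :
    normChange g a.base a.vec = reductivity g a := by
  simp only [normChange, reductivity, Cut.lengthChange_eq]

namespace IsBox

variable {V W : Fin n → Finset (Fin n → ℤ)}

lemma of_sub_mem (h : IsBox V) (t : Fin n → Fin n → ℤ) (ht : ∀ i, t i i = 0)
    (hW : ∀ i, ∀ u ∈ W i, u - t i ∈ V i) : IsBox W where
  diag i u hu := by simpa [ht] using h.diag i _ (hW i u hu)
  isSignVector i u hu v hv := by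
    simpa using h.isSignVector i _ (hW i u hu) _ (hW i v hv)
  compatible i j hij u hu u' hu' v hv v' hv' := by
    simpa using h.compatible i j hij _ (hW i u hu) _ (hW i u' hu') _ (hW j v hv) _ (hW j v' hv')

lemma mono (h : IsBox V) (hW : ∀ i, W i ⊆ V i) : IsBox W :=
  h.of_sub_mem 0 (fun _ => rfl) fun i u hu => by simpa using hW i hu

lemma commute (h : IsBox V) {i j : Fin n} (hij : i ≠ j) {u u' v v' : Fin n → ℤ}
    (hu : u ∈ V i) (hu' : u' ∈ V i) (hv : v ∈ V j) (hv' : v' ∈ V j) :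
    Commute (twist i (u - u')) (twist j (v - v')) :=
  (h.compatible i j hij u hu u' hu' v hv v' hv').commute_twist (h.isSignVector i u hu u' hu')
    (h.isSignVector j v hv v' hv') (by simp [h.diag i u hu, h.diag i u' hu'])
    (by simp [h.diag j v hv, h.diag j v' hv'])

lemma multiTwist_sub (h : IsBox V) {a b c : Fin n → Fin n → ℤ} (ha : ∀ i, a i ∈ V i)
    (hb : ∀ i, b i ∈ V i) (hc : ∀ i, c i ∈ V i) :
    multiTwist (c - a) = multiTwist (b - a) * multiTwist (c - b) := by
  rw [← multiTwist_add, add_comm, sub_add_sub_cancel]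
  exact fun i j hij => h.commute hij (hc i) (hb i) (hb j) (ha j)

lemma conjExponent_mul_multiTwist (h : IsBox V) {g : PSigmaAut n}
    (hg : ∀ i, conjExponent g i ∈ V i) {v : Fin n → Fin n → ℤ} (hv : ∀ i, v i ∈ V i) :
    conjExponent (g * multiTwist (v - conjExponent g)) = v := by
  rw [conjExponent_mul, conjExponent_multiTwist, add_sub_cancel]
  exact fun i => by simp [h.diag i _ (hv i), h.diag i _ (hg i)]

lemma mem_cell (h : IsBox V) {g : PSigmaAut n} (hg : ∀ i, conjExponent g i ∈ V i)
    {x : PSigmaAut n} : x ∈ cell g V ↔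
      (∀ i, conjExponent x i ∈ V i) ∧ x = g * multiTwist (conjExponent x - conjExponent g) := by
  simp only [cell, Finset.mem_image, Fintype.mem_piFinset]
  constructor
  · rintro ⟨v, hv, rfl⟩
    rw [h.conjExponent_mul_multiTwist hg hv]
    exact ⟨hv, rfl⟩
  · rintro ⟨hx, hxg⟩
    exact ⟨_, hx, hxg.symm⟩

lemma self_mem_cell (h : IsBox V) {g : PSigmaAut n} (hg : ∀ i, conjExponent g i ∈ V i) :
    g ∈ cell g V := by
  rw [h.mem_cell hg, sub_self, multiTwist_zero, mul_one]
  exact ⟨hg, rfl⟩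

lemma coords_cell (h : IsBox V) {g : PSigmaAut n} (hg : ∀ i, conjExponent g i ∈ V i) :
    coords (cell g V) = V := by
  funext i
  ext u
  simp only [coords, Finset.mem_image]
  constructor
  · rintro ⟨x, hx, rfl⟩
    exact ((h.mem_cell hg).1 hx).1 i
  · intro hu
    have hv : ∀ j, Function.update (conjExponent g) i u j ∈ V j :=
      (Function.forall_update_iff _ fun j w => w ∈ V j).2 ⟨hu, fun j _ => hg j⟩
    refine ⟨_, Finset.mem_image_of_mem _ (Fintype.mem_piFinset.2 hv), ?_⟩
    rw [h.conjExponent_mul_multiTwist hg hv, Function.update_self]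

lemma isCell_cell (h : IsBox V) {g : PSigmaAut n} (hg : ∀ i, conjExponent g i ∈ V i) :
    IsCell (cell g V) where
  nonempty := ⟨g, h.self_mem_cell hg⟩
  isBox := (h.coords_cell hg).symm ▸ h
  mem_iff {x} hx {y} := by
    obtain ⟨hxV, hxg⟩ := (h.mem_cell hg).1 hx
    rw [h.coords_cell hg, h.mem_cell hg]
    refine and_congr_right fun hy => ?_
    rw [h.multiTwist_sub hg hxV hy, ← mul_assoc, ← hxg]

end IsBox

namespace IsCell

variable {c F : Finset (PSigmaAut n)}

lemma eq_of_conjExponent_eq (hc : IsCell c) {x y : PSigmaAut n} (hx : x ∈ c) (hy : y ∈ c)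
    (h : conjExponent x = conjExponent y) : x = y := by
  have hyx := ((hc.mem_iff hx).1 hy).2
  rw [h, sub_self, multiTwist_zero, mul_one] at hyx
  exact hyx.symm

lemma exists_conjExponent_eq (hc : IsCell c) {v : Fin n → Fin n → ℤ}
    (hv : ∀ i, v i ∈ coords c i) : ∃ y ∈ c, conjExponent y = v := by
  obtain ⟨g, hg⟩ := hc.nonempty
  have hy := hc.isBox.conjExponent_mul_multiTwist (mem_coords hg) hv
  exact ⟨_, (hc.mem_iff hg).2 ⟨hy.symm ▸ hv, by rw [hy]⟩, hy⟩

lemma eq_cell (hc : IsCell c) {g : PSigmaAut n} (hg : g ∈ c) : c = cell g (coords c) := by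
  ext x
  rw [hc.isBox.mem_cell (mem_coords hg), hc.mem_iff hg]

lemma mem_of_conjExponent_mem (hc : IsCell c) (hF : IsCell F) (hFc : F ⊆ c) {g : PSigmaAut n}
    (hg : g ∈ c) (h : ∀ i, conjExponent g i ∈ coords F i) : g ∈ F := by
  obtain ⟨y, hy, hyg⟩ := hF.exists_conjExponent_eq h
  rwa [← hc.eq_of_conjExponent_eq (hFc hy) hg hyg]

protected lemma filter (hc : IsCell c) (W : Fin n → Finset (Fin n → ℤ)) {g : PSigmaAut n}
    (hg : g ∈ c) (hW : ∀ i, conjExponent g i ∈ W i) :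
    IsCell {x ∈ c | ∀ i, conjExponent x i ∈ W i} := by
  have hbox : IsBox fun i => coords c i ∩ W i := hc.isBox.mono fun i => Finset.inter_subset_left
  have hgV : ∀ i, conjExponent g i ∈ coords c i ∩ W i := fun i =>
    Finset.mem_inter.2 ⟨mem_coords hg i, hW i⟩
  convert hbox.isCell_cell hgV using 1
  ext x
  rw [hbox.mem_cell hgV, Finset.mem_filter, hc.mem_iff hg]
  simp only [Finset.mem_inter, forall_and]
  tauto

protected lemma singleton (g : PSigmaAut n) : IsCell {g} where
  nonempty := Finset.singleton_nonempty g
  isBox := by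
    have hcoords : coords {g} = fun i => {conjExponent g i} :=
      funext fun i => Finset.image_singleton _ _
    rw [hcoords]
    constructor
    · simp [conjExponent_self]
    · simp [isSignVector_zero]
    · simp only [Finset.mem_singleton]
      rintro i j - _ rfl _ rfl - - - -
      exact Or.inl (by simp)
  mem_iff {x} hx {y} := by
    obtain rfl := Finset.mem_singleton.1 hx
    simp only [coords, Finset.image_singleton, Finset.mem_singleton]
    refine ⟨?_, fun ⟨hyx, h⟩ => ?_⟩
    · rintro rfl
      simp [multiTwist_zero]
    · rwa [show conjExponent y = conjExponent x from funext hyx, sub_self, multiTwist_zero,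
        mul_one] at h

lemma mem_coords_smul {γ : PSigmaAut n} {i : Fin n} {u : Fin n → ℤ} :
    u ∈ coords (γ • c) i ↔ u - conjExponent γ i ∈ coords c i := by
  simp only [coords, Finset.mem_image, Finset.mem_smul_finset]
  constructor
  · rintro ⟨_, ⟨x, hx, rfl⟩, rfl⟩
    exact ⟨x, hx, by rw [smul_eq_mul, conjExponent_mul, Pi.add_apply, add_sub_cancel_left]⟩
  · rintro ⟨x, hx, h⟩
    exact ⟨_, ⟨x, hx, rfl⟩, by rw [smul_eq_mul, conjExponent_mul, Pi.add_apply, h, add_sub_cancel]⟩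

protected lemma smul (hc : IsCell c) (γ : PSigmaAut n) : IsCell (γ • c) where
  nonempty := hc.nonempty.smul_finset
  isBox := hc.isBox.of_sub_mem (conjExponent γ) (conjExponent_self γ) fun _ _ => mem_coords_smul.1
  mem_iff {x} hx {y} := by
    rw [← Finset.inv_smul_mem_iff] at hx ⊢
    have hconj : ∀ x, conjExponent (γ⁻¹ * x) = conjExponent x - conjExponent γ := fun x => by
      rw [eq_sub_iff_add_eq', ← conjExponent_mul, mul_inv_cancel_left]
    simp only [hc.mem_iff hx, smul_eq_mul, hconj, mem_coords_smul, Pi.sub_apply,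
      sub_sub_sub_cancel_right, mul_assoc, mul_right_inj]

lemma normVector_eq (hc : IsCell c) {g h : PSigmaAut n} (hg : g ∈ c) (hh : h ∈ c) :
    normVector h = normVector g + ∑ i, normChange g i (conjExponent g i - conjExponent h i) := by
  have hinv : h⁻¹ = multiTwist (conjExponent g - conjExponent h) * g⁻¹ := by
    rw [eq_mul_inv_iff_mul_eq, inv_mul_eq_iff_eq_mul]
    exact ((hc.mem_iff hh).1 hg).2
  have hnorm := norm_multiTwist_smul (δ := conjExponent g - conjExponent h)
    (fun i => hc.isBox.isSignVector i _ (mem_coords hg i) _ (mem_coords hh i))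
    (fun i => by simp [conjExponent_self])
    (fun i j hij => hc.isBox.commute hij (mem_coords hg i) (mem_coords hh i)
      (mem_coords hg j) (mem_coords hh j))
  simp only [normVector, normChange, ← _root_.map_sum, ← _root_.map_add]
  congr 1
  funext y
  rw [hinv, mul_smul, hnorm, Pi.add_apply, Finset.sum_apply]
  rfl

end IsCell

end Cells

/-! ### Cells and laminar families of cuts -/

namespace Cut

variable {α : Type*} [DecidableEq α] {a b : Cut α}

lemma vec_ne_zero_iff {k : α} : a.vec k ≠ 0 ↔ k ∈ a.side := signVector_ne_zero_iff

lemma support_vec (a : Cut α) : Function.support a.vec = a.side :=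
  Set.ext fun _ => vec_ne_zero_iff

lemma side_nonempty_iff : a.side.Nonempty ↔ a.vec ≠ 0 := by
  rw [← Function.support_nonempty_iff, support_vec, Finset.coe_nonempty]

lemma eq_of_vec_eq (ha : a.side.Nonempty) (hbase : a.base = b.base) (h : a.vec = b.vec) :
    a = b := by
  have hside : a.side = b.side := Finset.ext fun k => by
    rw [← vec_ne_zero_iff, h, vec_ne_zero_iff]
  obtain ⟨k, hk⟩ := ha
  refine Cut.ext hbase ?_ hside
  have hval := congrFun h k
  simp only [vec, signVector, if_pos hk, if_pos (hside ▸ hk)] at hval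
  revert hval
  cases a.sign <;> cases b.sign <;> simp [boolSign]

lemma letters_subset_iff_of_ne (h : a.base ≠ b.base) :
    a.letters ⊆ b.letters ↔ a.base ∈ b.side ∧ a.side ⊆ b.side := by
  constructor
  · intro hab
    have mem_side_of_mem_letters : ∀ k, (∀ s, (k, s) ∈ b.letters) → k ∈ b.side := fun k hk => by
      by_cases hkb : k = b.base
      · have hs := hk (!b.sign)
        rw [hkb, base_mem_letters] at hs
        exact absurd hs (Bool.not_ne_self _)
      · exact (mem_letters_of_ne hkb).1 (hk true)
    refine ⟨(mem_letters_of_ne h).1 (hab (Finset.mem_insert_self _ _)), fun k hk => ?_⟩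
    exact mem_side_of_mem_letters k fun s => hab (mem_letters.2 (Or.inl hk))
  · rintro ⟨hbase, hside⟩ x hx
    rw [mem_letters] at hx ⊢
    rcases hx with hx | rfl
    exacts [Or.inl (hside hx), Or.inl hbase]

lemma disjoint_letters_iff_of_ne (h : a.base ≠ b.base) :
    Disjoint a.letters b.letters ↔ b.base ∉ a.side ∧ a.base ∉ b.side ∧ Disjoint a.side b.side := by
  simp only [Finset.disjoint_left, mem_letters, not_or]
  constructor
  · intro hab
    exact ⟨fun hb => (hab (a := (b.base, b.sign)) (Or.inl hb)).2 rfl,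
      (hab (a := (a.base, a.sign)) (Or.inr rfl)).1,
      fun k hk => (hab (a := (k, true)) (Or.inl hk)).1⟩
  · rintro ⟨hb, ha, hab⟩ x (hx | rfl)
    · exact ⟨hab hx, fun hxb => hb (by subst hxb; exact hx)⟩
    · exact ⟨ha, fun hxb => h (congrArg Prod.fst hxb)⟩

lemma compatible_iff_of_base_ne (ha : a.side.Nonempty) (hb : b.side.Nonempty)
    (h : a.base ≠ b.base) : a.Compatible b ↔
      SupportsCompatible a.base (Function.support a.vec) b.base (Function.support b.vec) := by
  simp only [Compatible, SupportsCompatible, letters_subset_iff_of_ne h,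
    letters_subset_iff_of_ne h.symm, disjoint_letters_iff_of_ne h, support_vec,
    Finset.coe_eq_empty, Finset.mem_coe, Finset.disjoint_coe, Finset.coe_subset,
    ha.ne_empty, hb.ne_empty, false_or]
  tauto

lemma letters_subset_iff_of_sign_eq (hbase : a.base = b.base) (hsign : a.sign = b.sign) :
    a.letters ⊆ b.letters ↔ a.side ⊆ b.side := by
  constructor
  · intro h k hk
    have hka : k ≠ b.base := fun hkb => a.base_notMem_side (hbase ▸ hkb ▸ hk)
    exact (mem_letters_of_ne hka).1 (h (mem_letters.2 (Or.inl hk) : (k, true) ∈ a.letters))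
  · intro h x hx
    rw [mem_letters] at hx ⊢
    exact hx.imp (fun hxa => h hxa) fun hxa => by rw [hxa, hbase, hsign]

lemma compatible_iff_of_sign_eq (hbase : a.base = b.base) (hsign : a.sign = b.sign) :
    a.Compatible b ↔ a.side ⊆ b.side ∨ b.side ⊆ a.side := by
  have hdisj : ¬Disjoint a.letters b.letters :=
    Finset.not_disjoint_iff.2 ⟨(a.base, a.sign), (a.base_mem_letters _).2 rfl,
      hbase ▸ (b.base_mem_letters _).2 hsign⟩
  rw [Compatible, letters_subset_iff_of_sign_eq hbase hsign,
    letters_subset_iff_of_sign_eq hbase.symm hsign.symm]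
  tauto

lemma compatible_iff_of_sign_ne (hbase : a.base = b.base) (hsign : a.sign ≠ b.sign) :
    a.Compatible b ↔ Disjoint a.side b.side := by
  have not_subset : ∀ {a b : Cut α}, a.base = b.base → a.sign ≠ b.sign →
      ¬a.letters ⊆ b.letters := fun {a b} hbase hsign h => hsign <|
    (b.base_mem_letters _).1 (hbase ▸ h ((a.base_mem_letters _).2 rfl))
  simp only [Compatible, not_subset hbase hsign, not_subset hbase.symm hsign.symm, false_or,
    Finset.disjoint_left, mem_letters, not_or]
  refine ⟨fun h k hk => (h (a := (k, true)) (Or.inl hk)).1, ?_⟩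
  rintro h x (hx | rfl)
  · exact ⟨h hx, fun hxb => a.base_notMem_side (by subst hxb; exact hbase ▸ hx)⟩
  · exact ⟨hbase ▸ b.base_notMem_side, fun hxb => hsign (congrArg Prod.snd hxb)⟩

lemma isSignVector_sub_iff_of_sign_eq (hsign : a.sign = b.sign) :
    IsSignVector (a.vec - b.vec) ↔ a.side ⊆ b.side ∨ b.side ⊆ a.side := by
  constructor
  · intro h
    by_contra hne
    simp only [not_or, Finset.not_subset] at hne
    obtain ⟨⟨k, hka, hkb⟩, l, hlb, hla⟩ := hne
    have hkl := h.eq_of_ne_zero (b := k) (c := l)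
    simp only [Pi.sub_apply, vec, signVector, hka, hkb, hla, hlb, hsign, if_true, if_false] at hkl
    cases hs : b.sign <;> simp [boolSign, hs] at hkl
  · rintro (h | h)
    · refine ⟨!b.sign, b.side \ a.side, funext fun k => ?_⟩
      have hk := @h k
      cases hs : b.sign <;> by_cases hka : k ∈ a.side <;> by_cases hkb : k ∈ b.side <;>
        simp_all [vec, signVector, boolSign]
    · refine ⟨b.sign, a.side \ b.side, funext fun k => ?_⟩
      have hk := @h k
      by_cases hka : k ∈ a.side <;> by_cases hkb : k ∈ b.side <;> simp_all [vec, signVector]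

lemma isSignVector_sub_iff_of_sign_ne (hsign : a.sign ≠ b.sign) :
    IsSignVector (a.vec - b.vec) ↔ Disjoint a.side b.side := by
  have hnot : b.sign = !a.sign := by cases h : a.sign <;> cases h' : b.sign <;> simp_all
  constructor
  · intro h
    refine Finset.disjoint_left.2 fun k hka hkb => ?_
    have hk := h.eq_zero_or k
    simp only [Pi.sub_apply, vec, signVector, hka, hkb, hnot, if_true] at hk
    cases hs : a.sign <;> simp [boolSign, hs] at hk
  · intro h
    refine ⟨a.sign, a.side ∪ b.side, funext fun k => ?_⟩
    have hk : k ∈ a.side → k ∉ b.side := fun hka => Finset.disjoint_left.1 h hka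
    clear h
    cases hs : a.sign <;> by_cases hka : k ∈ a.side <;> by_cases hkb : k ∈ b.side <;>
      simp_all [vec, signVector, boolSign]

lemma compatible_iff_of_base_eq (hbase : a.base = b.base) :
    a.Compatible b ↔ IsSignVector (a.vec - b.vec) := by
  by_cases hsign : a.sign = b.sign
  · rw [compatible_iff_of_sign_eq hbase hsign, isSignVector_sub_iff_of_sign_eq hsign]
  · rw [compatible_iff_of_sign_ne hbase hsign, isSignVector_sub_iff_of_sign_ne hsign]

end Cut

section Laminar

open scoped Classical

variable {n : ℕ} {V W : Fin n → Finset (Fin n → ℤ)}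

lemma IsBox.of_const_sub_mem (h : IsBox V) (t : Fin n → Fin n → ℤ) (ht : ∀ i, t i i = 0)
    (hW : ∀ i, ∀ u ∈ W i, t i - u ∈ V i) : IsBox W where
  diag i u hu := by simpa [ht] using h.diag i _ (hW i u hu)
  isSignVector i u hu v hv := by
    simpa using h.isSignVector i _ (hW i v hv) _ (hW i u hu)
  compatible i j hij u hu u' hu' v hv v' hv' := by
    simpa using h.compatible i j hij _ (hW i u' hu') _ (hW i u hu) _ (hW j v' hv') _ (hW j v hv)

lemma IsBox.of_zero_mem (hV : ∀ i, 0 ∈ V i) (hdiag : ∀ i, ∀ u ∈ V i, u i = 0)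
    (hsign : ∀ i, ∀ u ∈ V i, ∀ u' ∈ V i, IsSignVector (u - u'))
    (hcomp : ∀ i j, i ≠ j → ∀ u ∈ V i, ∀ v ∈ V j,
      SupportsCompatible i (Function.support u) j (Function.support v)) : IsBox V where
  diag := hdiag
  isSignVector := hsign
  compatible i j hij u hu u' hu' v hv v' hv' := by
    have hsign₀ : ∀ i, ∀ u ∈ V i, IsSignVector u := fun i u hu => by
      simpa using hsign i u hu 0 (hV i)
    have hsub : ∀ w ∈ V j,
        SupportsCompatible i (Function.support (u - u')) j (Function.support w) := fun w hw =>
      (hcomp i j hij u hu w hw).sub (hcomp i j hij u' hu' w hw) (hsign₀ i u hu) (hsign₀ i u' hu')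
        (hsign i u hu u' hu') (hdiag i u hu) (hdiag i u' hu')
    exact ((hsub v hv).symm.sub (hsub v' hv').symm (hsign₀ j v hv) (hsign₀ j v' hv')
      (hsign j v hv v' hv') (hdiag j v hv) (hdiag j v' hv')).symm

/-- A laminar family consists of nontrivial, pairwise compatible cuts. -/
structure IsLaminar (σ : Finset (Cut (Fin n))) : Prop where
  side_nonempty : ∀ a ∈ σ, a.side.Nonempty
  compatible : ∀ a ∈ σ, ∀ b ∈ σ, a.Compatible b

/-- The exponent vectors at the generator `i` of the cuts in `σ`, together with `0`. -/
noncomputable def twistVectors (σ : Finset (Cut (Fin n))) (i : Fin n) : Finset (Fin n → ℤ) :=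
  insert 0 ({a ∈ σ | a.base = i}.image Cut.vec)

lemma mem_twistVectors {σ : Finset (Cut (Fin n))} {i : Fin n} {t : Fin n → ℤ} :
    t ∈ twistVectors σ i ↔ t = 0 ∨ ∃ a ∈ σ, a.base = i ∧ a.vec = t := by
  simp only [twistVectors, Finset.mem_insert, Finset.mem_image, Finset.mem_filter, and_assoc]

/-- The cell at `g` spanned by the inverses of the twists along the cuts in `σ`. -/
noncomputable def cutCell (g : PSigmaAut n) (σ : Finset (Cut (Fin n))) : Finset (PSigmaAut n) :=
  cell g fun i => (twistVectors σ i).image fun t => conjExponent g i - t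

lemma mem_image_const_sub {A : Type*} [AddCommGroup A] [DecidableEq A] {T : Finset A} {a u : A} :
    u ∈ T.image (fun t => a - t) ↔ a - u ∈ T := by
  rw [Finset.mem_image]
  exact ⟨by rintro ⟨t, ht, rfl⟩; rwa [sub_sub_cancel], fun h => ⟨_, h, sub_sub_cancel _ _⟩⟩

lemma conjExponent_mem_image_sub (g : PSigmaAut n) (σ : Finset (Cut (Fin n))) (i : Fin n) :
    conjExponent g i ∈ (twistVectors σ i).image fun t => conjExponent g i - t :=
  mem_image_const_sub.2 (by rw [sub_self]; exact Finset.mem_insert_self _ _)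

/-- The cuts `a` such that the cell `c` contains the result of twisting `g` by the inverse of the
twist along `a`. -/
noncomputable def cellCuts (g : PSigmaAut n) (c : Finset (PSigmaAut n)) :
    Finset (Cut (Fin n)) :=
  {a | a.side.Nonempty ∧ conjExponent g a.base - a.vec ∈ coords c a.base}

lemma mem_cellCuts {g : PSigmaAut n} {c : Finset (PSigmaAut n)} {a : Cut (Fin n)} :
    a ∈ cellCuts g c ↔ a.side.Nonempty ∧ conjExponent g a.base - a.vec ∈ coords c a.base := by
  simp [cellCuts]

lemma cellCuts_mono (g : PSigmaAut n) {c d : Finset (PSigmaAut n)} (h : c ⊆ d) :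
    cellCuts g c ⊆ cellCuts g d := fun _ ha =>
  mem_cellCuts.2 ((mem_cellCuts.1 ha).imp_right fun hc => coords_mono h _ hc)

lemma cutCell_mono (g : PSigmaAut n) {σ τ : Finset (Cut (Fin n))} (h : σ ⊆ τ) :
    cutCell g σ ⊆ cutCell g τ :=
  Finset.image_subset_image <| Fintype.piFinset_subset _ _ fun _ => Finset.image_subset_image <|
    Finset.insert_subset_insert _ <| Finset.image_subset_image <| Finset.filter_subset_filter _ h

namespace IsLaminar

variable {σ : Finset (Cut (Fin n))}

lemma isBox_twistVectors (hσ : IsLaminar σ) : IsBox (twistVectors σ) := by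
  refine .of_zero_mem (fun i => Finset.mem_insert_self _ _) ?_ ?_ ?_ <;>
    simp only [mem_twistVectors]
  · rintro i - (rfl | ⟨a, -, rfl, rfl⟩)
    exacts [rfl, a.vec_base]
  · rintro i - (rfl | ⟨a, ha, rfl, rfl⟩) - (rfl | ⟨b, hb, hba, rfl⟩)
    · simpa using isSignVector_zero
    · simpa using b.isSignVector_vec.neg
    · simpa using a.isSignVector_vec
    · exact (Cut.compatible_iff_of_base_eq hba.symm).1 (hσ.compatible a ha b hb)
  · rintro i j hij - (rfl | ⟨a, ha, rfl, rfl⟩) - (rfl | ⟨b, hb, rfl, rfl⟩)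
    · exact Or.inl Function.support_zero
    · exact Or.inl Function.support_zero
    · exact Or.inr (Or.inl Function.support_zero)
    · exact (Cut.compatible_iff_of_base_ne (hσ.side_nonempty a ha) (hσ.side_nonempty b hb) hij).1
        (hσ.compatible a ha b hb)

lemma isBox_image_sub (hσ : IsLaminar σ) (g : PSigmaAut n) :
    IsBox fun i => (twistVectors σ i).image fun t => conjExponent g i - t :=
  hσ.isBox_twistVectors.of_const_sub_mem (conjExponent g) (conjExponent_self g)
    fun _ _ => mem_image_const_sub.1

lemma isCell_cutCell (hσ : IsLaminar σ) (g : PSigmaAut n) : IsCell (cutCell g σ) :=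
  (hσ.isBox_image_sub g).isCell_cell (conjExponent_mem_image_sub g σ)

lemma self_mem_cutCell (hσ : IsLaminar σ) (g : PSigmaAut n) : g ∈ cutCell g σ :=
  (hσ.isBox_image_sub g).self_mem_cell (conjExponent_mem_image_sub g σ)

lemma mem_coords_cutCell (hσ : IsLaminar σ) {g : PSigmaAut n} {i : Fin n} {u : Fin n → ℤ} :
    u ∈ coords (cutCell g σ) i ↔ conjExponent g i - u ∈ twistVectors σ i := by
  rw [cutCell, (hσ.isBox_image_sub g).coords_cell (conjExponent_mem_image_sub g σ),
    mem_image_const_sub]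

lemma cellCuts_cutCell (hσ : IsLaminar σ) (g : PSigmaAut n) : cellCuts g (cutCell g σ) = σ := by
  ext a
  rw [mem_cellCuts, hσ.mem_coords_cutCell, sub_sub_cancel, mem_twistVectors]
  constructor
  · rintro ⟨ha, h | ⟨b, hb, hba, h⟩⟩
    · exact absurd h (Cut.side_nonempty_iff.1 ha)
    · rwa [← Cut.eq_of_vec_eq (hσ.side_nonempty b hb) hba h]
  · exact fun ha => ⟨hσ.side_nonempty a ha, Or.inr ⟨a, ha, rfl, rfl⟩⟩

end IsLaminar

namespace IsCell

variable {c : Finset (PSigmaAut n)} {g : PSigmaAut n}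

lemma isLaminar_cellCuts (hc : IsCell c) (hg : g ∈ c) : IsLaminar (cellCuts g c) := by
  refine ⟨fun a ha => (mem_cellCuts.1 ha).1, fun a ha b hb => ?_⟩
  obtain ⟨ha₀, ha⟩ := mem_cellCuts.1 ha
  obtain ⟨hb₀, hb⟩ := mem_cellCuts.1 hb
  by_cases h : a.base = b.base
  · rw [Cut.compatible_iff_of_base_eq h]
    rw [← sub_sub_sub_cancel_left]
    exact hc.isBox.isSignVector b.base _ hb _ (h ▸ ha)
  · rw [Cut.compatible_iff_of_base_ne ha₀ hb₀ h]
    simpa using hc.isBox.compatible a.base b.base h _ (mem_coords hg _) _ ha _ (mem_coords hg _)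
      _ hb

lemma cutCell_cellCuts (hc : IsCell c) (hg : g ∈ c) : cutCell g (cellCuts g c) = c := by
  suffices h : (fun i => (twistVectors (cellCuts g c) i).image fun t => conjExponent g i - t) =
      coords c by rw [cutCell, h, ← hc.eq_cell hg]
  funext i
  ext u
  rw [mem_image_const_sub, mem_twistVectors]
  constructor
  · rintro (h | ⟨a, ha, rfl, h⟩)
    · rw [← sub_eq_zero.1 h]
      exact mem_coords hg i
    · have hu := (mem_cellCuts.1 ha).2
      rwa [h, sub_sub_cancel] at hu
  · intro hu
    refine or_iff_not_imp_left.2 fun h => ?_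
    obtain ⟨a, rfl, ha⟩ := (hc.isBox.isSignVector i _ (mem_coords hg i) u hu).exists_cut_vec
      (i := i) (by rw [Pi.sub_apply, conjExponent_self, hc.isBox.diag i u hu, sub_zero])
    refine ⟨a, mem_cellCuts.2 ⟨Cut.side_nonempty_iff.2 (ha ▸ h), ?_⟩, rfl, ha⟩
    rwa [ha, sub_sub_cancel]

end IsCell

end Laminar

/-! ### The height function and the McCool generators -/

section NormVector

variable {n : ℕ}

lemma lexVector_injective : Function.Injective (lexVector n) := by
  intro F G h
  funext y
  obtain ⟨k, rfl⟩ := (exists_surjective_nat (FG n)).choose_spec y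
  exact congrFun (congrArg ofLex h) (k + 1)

lemma eq_of_of_norm_eq_one {y : FG n} {j : Fin n} (hnorm : y.norm = 1)
    (hexp : exponent j y = Multiplicative.ofAdd 1) : y = of j := by
  obtain ⟨⟨k, ε⟩, hk⟩ := List.length_eq_one_iff.1 (show y.toWord.length = 1 from hnorm)
  have hy : y = of k ^ boolSign ε := by
    rw [← mk_toWord (x := y), hk, mk_cons, ← FreeGroup.one_eq_mk, mul_one]
  subst hy
  rw [_root_.map_zpow, exponent, FreeGroup.lift_apply_of] at hexp
  by_cases hkj : k = j
  · subst hkj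
    cases ε
    · rw [Pi.mulSingle_eq_same] at hexp
      exact absurd (congrArg Multiplicative.toAdd hexp) (by simp [boolSign])
    · simp [boolSign]
  · rw [Pi.mulSingle_eq_of_ne hkj, one_zpow] at hexp
    exact absurd (congrArg Multiplicative.toAdd hexp) (by simp)

lemma eq_of_smul_of_eq {g h : PSigmaAut n} (hgh : ∀ j, g • (of j : FG n) = h • of j) : g = h :=
  Subtype.ext <| MulEquiv.ext fun y => DFunLike.congr_fun
    (FreeGroup.ext_hom (MulDistribMulAction.toMonoidHom (FG n) g)
      (MulDistribMulAction.toMonoidHom (FG n) h) hgh) y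

/- Only the generators are sent by `g⁻¹ * h` to elements of the same length and the same exponent
sums as themselves. -/
lemma normVector_injective : Function.Injective (normVector (n := n)) := by
  intro g h hgh
  have hnorm : ∀ y : FG n, (g⁻¹ • y).norm = (h⁻¹ • y).norm := fun y =>
    Nat.cast_injective (congrFun (lexVector_injective hgh) y)
  refine inv_mul_eq_one.1 (eq_of_smul_of_eq fun j => ?_)
  rw [one_smul]
  refine eq_of_of_norm_eq_one ?_ ?_
  · rw [mul_smul, hnorm, inv_smul_smul, FreeGroup.norm_of]
  · rw [exponent_smul, exponent, FreeGroup.lift_apply_of, Pi.mulSingle_eq_same]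

lemma finite_setOf_norm_le {α : Type*} [DecidableEq α] [Finite α] (N : ℕ) :
    {y : FreeGroup α | y.norm ≤ N}.Finite :=
  .of_finite_image ((List.finite_length_le (α × Bool) N).subset (Set.image_subset_iff.2
    fun _ hy => hy)) (FreeGroup.toWord_injective.injOn)

lemma finite_setOf_normVector_le (g : PSigmaAut n) :
    {h : PSigmaAut n | normVector h ≤ normVector g}.Finite := by
  refine .of_finite_image (f := fun h j => h⁻¹ • (of j : FG n)) (.subset
    (Set.Finite.pi fun _ => finite_setOf_norm_le (∑ j, (g⁻¹ • (of j : FG n)).norm)) ?_) ?_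
  · rintro _ ⟨h, hh, rfl⟩ j -
    have hsum : ∑ j, ((h⁻¹ • (of j : FG n)).norm : ℤ) ≤ ∑ j, ((g⁻¹ • (of j : FG n)).norm : ℤ) :=
      Pi.apply_le_of_toLex (i := 0) hh fun _ hk => absurd hk (Nat.not_lt_zero _)
    refine (Finset.single_le_sum (f := fun j => (h⁻¹ • (of j : FG n)).norm)
      (fun _ _ => Nat.zero_le _) (Finset.mem_univ j)).trans ?_
    exact_mod_cast hsum
  · exact fun a _ b _ hab => inv_injective (eq_of_smul_of_eq (congrFun hab))

end NormVector

section Generators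

variable {n : ℕ} {i : Fin n} {u : FG n}

lemma isReduced_toWord_append (hu : ∀ s, ¬[(i, s)] <:+ u.toWord) {s : Bool}
    {L : List (Fin n × Bool)} (hL : FreeGroup.IsReduced ((i, s) :: L)) :
    FreeGroup.IsReduced (u.toWord ++ (i, s) :: L) := by
  refine List.isChain_append.2 ⟨isReduced_toWord, hL, ?_⟩
  rintro ⟨k, t⟩ hx y hy hxy
  obtain rfl : (i, s) = y := by simpa using hy
  obtain rfl : k = i := hxy
  obtain ⟨L', hL'⟩ := List.getLast?_eq_some_iff.1 (Option.mem_def.1 hx)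
  exact absurd ⟨L', hL'.symm⟩ (hu t)

lemma prefix_toWord_conj_mul (hu : ∀ s, ¬[(i, s)] <:+ u.toWord) {ε : Bool} {y : FG n}
    (h : ¬u.toWord ++ [(i, !ε)] <+: y.toWord) :
    u.toWord ++ [(i, ε)] <+: (u * of i ^ boolSign ε * u⁻¹ * y).toWord := by
  obtain ⟨z, rfl⟩ : ∃ z, y = u * z := ⟨u⁻¹ * y, by group⟩
  have toWord_eq : ∀ {s Z}, FreeGroup.IsReduced ((i, s) :: Z) →
      (u * FreeGroup.mk ((i, s) :: Z)).toWord = u.toWord ++ (i, s) :: Z := fun h => by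
    rw [← (isReduced_toWord_append hu h).reduce_eq, ← toWord_mk, ← FreeGroup.mul_mk, mk_toWord]
  have hz : FreeGroup.IsReduced ((i, ε) :: z.toWord) := by
    rcases hZ : z.toWord with _ | ⟨⟨j, s⟩, Z⟩
    · exact .singleton
    have hred : FreeGroup.IsReduced ((j, s) :: Z) := hZ ▸ isReduced_toWord
    refine FreeGroup.isReduced_cons_cons.2 ⟨fun hij => by_contra fun hs => h ⟨Z, ?_⟩, hred⟩
    obtain rfl : i = j := hij
    obtain rfl : s = !ε := by cases ε <;> cases s <;> simp_all
    rw [← mk_toWord (x := z), hZ, toWord_eq hred, List.append_assoc, List.singleton_append]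
  have hmul : u * of i ^ boolSign ε * u⁻¹ * (u * z) =
      u * FreeGroup.mk ((i, ε) :: z.toWord) := by
    rw [mk_cons, mk_toWord]
    group
  exact ⟨z.toWord, by rw [hmul, toWord_eq hz, List.append_assoc, List.singleton_append]⟩

lemma smul_mk_cons {f : PSigmaAut n} {u : Fin n → FG n}
    (hf : ∀ i, f • (of i : FG n) = u i * of i * (u i)⁻¹) (i : Fin n) (ε : Bool)
    (L : List (Fin n × Bool)) : f • (FreeGroup.mk ((i, ε) :: L) : FG n) =
      u i * of i ^ boolSign ε * (u i)⁻¹ * f • (FreeGroup.mk L : FG n) := by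
  rw [mk_cons, smul_mul', smul_zpow', hf, conj_zpow]

section PrefixFree

variable {f : PSigmaAut n} {u : Fin n → FG n}
  (hf : ∀ i, f • (of i : FG n) = u i * of i * (u i)⁻¹)
  (hsuffix : ∀ i s, ¬[(i, s)] <:+ (u i).toWord)
  (hprefix : ∀ i j s, ¬(u i).toWord ++ [(i, s)] <+: (u j).toWord)

include hprefix in
lemma eq_of_prefix_append_singleton {x y : Fin n × Bool}
    (h : (u x.1).toWord ++ [x] <+: (u y.1).toWord ++ [y]) : x = y := by
  rcases List.prefix_concat_iff.1 h with h | h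
  · simpa using (List.append_inj' h rfl).2
  · exact absurd h (hprefix _ _ _)

include hf hsuffix hprefix

/- If no generator can absorb a part of the conjugating words, then no cancellation reaches the
beginning of the image of a word. -/
lemma prefix_toWord_smul (L : List (Fin n × Bool)) (i : Fin n) (ε : Bool)
    (hL : FreeGroup.IsReduced ((i, ε) :: L)) :
    (u i).toWord ++ [(i, ε)] <+: (f • (FreeGroup.mk ((i, ε) :: L) : FG n)).toWord := by
  induction L generalizing i ε with
  | nil =>
    rw [smul_mk_cons hf]
    refine prefix_toWord_conj_mul (hsuffix i) fun h => ?_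
    rw [← FreeGroup.one_eq_mk, smul_one] at h
    simp at h
  | cons l L ih =>
    rw [smul_mk_cons hf]
    refine prefix_toWord_conj_mul (hsuffix i) fun h => ?_
    obtain ⟨hl, hL⟩ := FreeGroup.isReduced_cons_cons.1 hL
    have hil : (i, !ε) = l := by
      rcases List.prefix_or_prefix_of_prefix h (ih l.1 l.2 hL) with h | h
      · exact eq_of_prefix_append_singleton hprefix h
      · exact (eq_of_prefix_append_singleton hprefix h).symm
    subst hil
    exact absurd (hl rfl) (Bool.self_ne_not ε)

lemma eq_one_of_not_prefix : f = 1 := by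
  refine eq_of_smul_of_eq fun k => ?_
  suffices hk : u k = 1 by rw [hf, hk, one_smul, one_mul, inv_one, mul_one]
  have hfk : f • f⁻¹ • (of k : FG n) = of k := smul_inv_smul f _
  rcases hw : (f⁻¹ • (of k : FG n)).toWord with _ | ⟨⟨i, ε⟩, L⟩
  · rw [toWord_eq_nil_iff.1 hw, smul_one] at hfk
    exact absurd hfk.symm (of_ne_one k)
  · have h := prefix_toWord_smul hf hsuffix hprefix L i ε (hw ▸ isReduced_toWord)
    rw [← hw, mk_toWord, hfk, toWord_of] at h
    have hui : u i = 1 := by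
      have hlen := h.length_le
      rw [List.length_append, List.length_singleton, List.length_singleton] at hlen
      rw [← toWord_eq_nil_iff, ← List.length_eq_zero_iff]
      omega
    rw [hui, toWord_one, List.nil_append, List.singleton_prefix_cons_iff] at h
    obtain rfl : i = k := congrArg Prod.fst h
    exact hui

end PrefixFree

/-- The minimal length of a word that conjugates the generator `j` to its image under `f`. -/
noncomputable def conjLength (f : PSigmaAut n) (j : Fin n) : ℕ :=
  sInf {m | ∃ w : FG n, f • (of j : FG n) = w * of j * w⁻¹ ∧ w.norm = m}

lemma exists_norm_eq_conjLength (f : PSigmaAut n) (j : Fin n) :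
    ∃ w : FG n, f • (of j : FG n) = w * of j * w⁻¹ ∧ w.norm = conjLength f j :=
  Nat.sInf_mem (s := {m | ∃ w : FG n, f • (of j : FG n) = w * of j * w⁻¹ ∧ w.norm = m})
    ((f.2 j).imp' FreeGroup.norm fun w hw => ⟨w, hw, rfl⟩)

lemma conjLength_le {f : PSigmaAut n} {j : Fin n} {w : FG n}
    (h : f • (of j : FG n) = w * of j * w⁻¹) : conjLength f j ≤ w.norm :=
  Nat.sInf_le ⟨w, h, rfl⟩

lemma not_suffix_of_norm_eq_conjLength {f : PSigmaAut n}
    (hf : f • (of i : FG n) = u * of i * u⁻¹) (hu : u.norm = conjLength f i) (s : Bool) :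
    ¬[(i, s)] <:+ u.toWord := by
  rintro ⟨V, hV⟩
  have hmul : u = FreeGroup.mk V * of i ^ boolSign s := by
    rw [← mk_toWord (x := u), ← hV, ← FreeGroup.mul_mk, mk_cons, ← FreeGroup.one_eq_mk, mul_one]
  have hle : conjLength f i ≤ (FreeGroup.mk V).norm := conjLength_le <| by
    rw [hf, hmul]
    group
  have hlen : u.norm = V.length + 1 := by
    rw [FreeGroup.norm, ← hV, List.length_append, List.length_singleton]
  have := norm_mk_le (L₁ := V)
  omega

lemma twist_single_smul_of_ne {i j b : Fin n} (hb : b ≠ j) (m : ℤ) :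
    twist i (Pi.single j m) • (of b : FG n) = of b := by
  rw [twist_smul, twistHom_of, Pi.single_eq_of_ne hb, zpow_zero, one_mul, inv_one, mul_one]

/- A prefix `u i * x_i ^ ε` of the word conjugating `x_j` is shortened to `u i` when `f` is
precomposed with the conjugation of `x_j` by `x_i ^ (-ε)`. -/
lemma sum_conjLength_mul_twist_lt {f : PSigmaAut n} {u : Fin n → FG n}
    (hf : ∀ i, f • (of i : FG n) = u i * of i * (u i)⁻¹)
    (hu : ∀ i, (u i).norm = conjLength f i) {i j : Fin n} {ε : Bool}
    (h : (u i).toWord ++ [(i, ε)] <+: (u j).toWord) :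
    ∑ b, conjLength (f * twist i (Pi.single j (-boolSign ε))) b < ∑ b, conjLength f b := by
  obtain ⟨T, hT⟩ := h
  have huj : u j = u i * of i ^ boolSign ε * FreeGroup.mk T := by
    rw [← mk_toWord (x := u j), ← hT, ← FreeGroup.mul_mk, ← FreeGroup.mul_mk, mk_toWord, mk_cons,
      ← FreeGroup.one_eq_mk, mul_one]
  have hconj : (f * twist i (Pi.single j (-boolSign ε))) • (of j : FG n) =
      u i * FreeGroup.mk T * of j * (u i * FreeGroup.mk T)⁻¹ := by
    rw [mul_smul, twist_smul, twistHom_of, Pi.single_eq_same, smul_mul', smul_mul', smul_inv',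
      smul_zpow', hf i, hf j, conj_zpow, huj]
    group
  have hlt : conjLength (f * twist i (Pi.single j (-boolSign ε))) j < conjLength f j := by
    have hlen : (u j).norm = (u i).norm + 1 + T.length := by
      rw [FreeGroup.norm, ← hT, List.length_append, List.length_append, List.length_singleton,
        FreeGroup.norm]
    have hle := conjLength_le hconj
    have hmul := norm_mul_le (u i) (FreeGroup.mk T)
    have hmk := norm_mk_le (L₁ := T)
    rw [← hu j]
    omega
  refine Finset.sum_lt_sum (fun b _ => ?_) ⟨j, Finset.mem_univ j, hlt⟩
  by_cases hb : b = j
  · exact hb ▸ hlt.le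
  · rw [← hu b]
    exact conjLength_le (by rw [mul_smul, twist_single_smul_of_ne hb, hf])

lemma twist_single_one {i j : Fin n} (hij : i ≠ j) : twist j (Pi.single i 1) = alphaP n i j := by
  refine eq_of_smul_of_eq fun b => ?_
  rw [twist_smul, twistHom_of]
  change _ = alphaAut n i j (of b)
  rw [alphaAut_apply_of n hij]
  by_cases hb : b = i <;> simp [hb]

theorem closure_alphaP :
    Subgroup.closure {s | ∃ i j, i ≠ j ∧ alphaP n i j = s} = (⊤ : Subgroup (PSigmaAut n)) := by
  refine eq_top_iff.2 fun f _ => ?_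
  induction hN : ∑ b, conjLength f b using Nat.strong_induction_on generalizing f with
  | _ N ih =>
    choose u hf hu using exists_norm_eq_conjLength f
    by_cases hprefix : ∀ i j s, ¬(u i).toWord ++ [(i, s)] <+: (u j).toWord
    · rw [eq_one_of_not_prefix hf (fun i => not_suffix_of_norm_eq_conjLength (hf i) (hu i)) hprefix]
      exact one_mem _
    push Not at hprefix
    obtain ⟨i, j, ε, hε⟩ := hprefix
    have hij : j ≠ i := by
      rintro rfl
      simpa using hε.length_le
    have htwist : twist i (Pi.single j (-boolSign ε)) ∈
        Subgroup.closure {s | ∃ i j, i ≠ j ∧ alphaP n i j = s} := by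
      have hα := Subgroup.subset_closure (k := {s | ∃ i j, i ≠ j ∧ alphaP n i j = s})
        ⟨j, i, hij, rfl⟩
      rw [← twist_single_one hij] at hα
      cases ε
      · simpa [boolSign] using hα
      · simpa [boolSign, Pi.single_neg, twist_neg] using hα
    refine (Subgroup.mul_mem_cancel_right _ htwist).1 (ih _ ?_ _ (Subgroup.mem_top _) rfl)
    exact hN ▸ sum_conjLength_mul_twist_lt hf hu hε

end Generators

/-! ### Dimension and stabilizers of chains of cells -/

lemma Cut.side_subset_of_letters_subset {α : Type*} [DecidableEq α] {a b : Cut α}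
    (h : a.letters ⊆ b.letters) : a.side ⊆ b.side := fun j hj => by
  have hmem : ∀ s, j ∈ b.side ∨ (j, s) = (b.base, b.sign) := fun s =>
    mem_letters.1 (h ((mem_letters (b := (j, s))).2 (Or.inl hj)))
  refine (hmem !b.sign).resolve_right fun hs => ?_
  exact Bool.not_ne_self _ (congrArg Prod.snd hs)

section Dimension

open scoped Classical

variable {n : ℕ}

namespace IsLaminar

variable {σ : Finset (Cut (Fin n))} {a b : Cut (Fin n)}

lemma letters_ssubset_of_base_mem_side (hσ : IsLaminar σ) (ha : a ∈ σ) (hb : b ∈ σ)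
    (h : a.base ∈ b.side) : a.letters ⊂ b.letters := by
  have hnot : ¬b.letters ⊆ a.letters := fun hba =>
    a.base_notMem_side (Cut.side_subset_of_letters_subset hba h)
  rcases hσ.compatible a ha b hb with hab | hba | hdisj
  · exact ⟨hab, hnot⟩
  · exact absurd hba hnot
  · exact absurd (Cut.mem_letters.2 (Or.inl h)) (Finset.disjoint_left.1 hdisj
      ((a.base_mem_letters _).2 rfl))

lemma letters_subset_or_subset (hσ : IsLaminar σ) (ha : a ∈ σ) (hb : b ∈ σ) {l : Fin n × Bool}
    (hla : l ∈ a.letters) (hlb : l ∈ b.letters) :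
    a.letters ⊆ b.letters ∨ b.letters ⊆ a.letters :=
  (hσ.compatible a ha b hb).imp_right fun h => h.resolve_right fun hdisj =>
    Finset.disjoint_left.1 hdisj hla hlb

lemma exists_base_mem_letters (hσ : IsLaminar σ)
    (hcover : ∀ j ∈ a.side, ∃ b ∈ σ, b.letters ⊂ a.letters ∧ j ∈ b.side) {j : Fin n}
    (hj : j ∈ a.side) :
    ∃ b ∈ σ, b.letters ⊂ a.letters ∧ j ∈ b.side ∧ (a.base, a.sign) ∈ b.letters := by
  obtain ⟨b₀, hb₀⟩ := hcover j hj
  obtain ⟨b, hb, hmax⟩ := Finset.exists_maximalFor Cut.letters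
    {b ∈ σ | b.letters ⊂ a.letters ∧ j ∈ b.side} ⟨b₀, Finset.mem_filter.2 hb₀⟩
  simp only [Finset.mem_filter] at hb hmax
  obtain ⟨hbσ, hba, hjb⟩ := hb
  refine ⟨b, hbσ, hba, hjb, ?_⟩
  have hbase := (b.base_mem_letters _).2 rfl
  rcases Cut.mem_letters.1 (hba.subset hbase) with hside | heq
  · obtain ⟨c, hcσ, hca, hbc⟩ := hcover _ hside
    have hlt := hσ.letters_ssubset_of_base_mem_side hbσ hcσ hbc
    exact absurd (hmax ⟨hcσ, hca, Cut.side_subset_of_letters_subset hlt.subset hjb⟩ hlt.subset)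
      hlt.not_subset
  · rwa [← heq]

lemma exists_mem_side_forall_notMem (hσ : IsLaminar σ) (ha : a ∈ σ) :
    ∃ j ∈ a.side, ∀ b ∈ σ, b.letters ⊂ a.letters → j ∉ b.side := by
  by_contra! hcover
  obtain ⟨j₀, hj₀⟩ := hσ.side_nonempty a ha
  obtain ⟨b₀, hb₀, hb₀a, -, hbase₀⟩ := hσ.exists_base_mem_letters hcover hj₀
  obtain ⟨c, hc, hmax⟩ := Finset.exists_maximalFor Cut.letters
    {b ∈ σ | b.letters ⊂ a.letters ∧ (a.base, a.sign) ∈ b.letters}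
    ⟨b₀, Finset.mem_filter.2 ⟨hb₀, hb₀a, hbase₀⟩⟩
  simp only [Finset.mem_filter] at hc hmax
  obtain ⟨hcσ, hca, hbase⟩ := hc
  refine hca.not_subset fun l hl => ?_
  rcases Cut.mem_letters.1 hl with hl | rfl
  · obtain ⟨b, hb, hba, hlb, hbase'⟩ := hσ.exists_base_mem_letters hcover hl
    have hbc : b.letters ⊆ c.letters := (hσ.letters_subset_or_subset hb hcσ hbase' hbase).elim id
      fun hcb => hmax ⟨hb, hba, hbase'⟩ hcb
    exact hbc (Cut.mem_letters.2 (Or.inl hlb))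
  · exact hbase

lemma exists_forall_notMem_side (hσ : IsLaminar σ) (hn : 0 < n) : ∃ j, ∀ a ∈ σ, j ∉ a.side := by
  rcases σ.eq_empty_or_nonempty with rfl | hne
  · exact ⟨⟨0, hn⟩, fun _ ha => absurd ha (Finset.notMem_empty _)⟩
  obtain ⟨a, ha, hmax⟩ := Finset.exists_maximalFor Cut.letters σ hne
  refine ⟨a.base, fun b hb h => ?_⟩
  have hlt := hσ.letters_ssubset_of_base_mem_side ha hb h
  exact hlt.not_subset (hmax hb hlt.subset)

theorem card_lt (hσ : IsLaminar σ) (hn : 0 < n) : σ.card < n := by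
  obtain ⟨r, hr⟩ := hσ.exists_forall_notMem_side hn
  have : NeZero n := ⟨hn.ne'⟩
  choose! J hJ hJ' using fun a (ha : a ∈ σ) => hσ.exists_mem_side_forall_notMem ha
  have hinj : Set.InjOn J σ := fun a ha b hb hab => by
    rcases hσ.letters_subset_or_subset ha hb (l := (J a, true))
      (Cut.mem_letters.2 (Or.inl (hJ a ha))) (Cut.mem_letters.2 (Or.inl (hab ▸ hJ b hb))) with h | h
    · by_contra hne
      exact hJ' b hb a ha (h.ssubset_of_ne (Cut.letters_injective.ne hne)) (hab ▸ hJ a ha)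
    · by_contra hne
      exact hJ' a ha b hb (h.ssubset_of_ne (Cut.letters_injective.ne (Ne.symm hne)))
        (hab ▸ hJ b hb)
  have hcard := Finset.card_le_card_of_injOn (t := Finset.univ.erase r) J
    (fun a ha => Finset.mem_coe.2 (Finset.mem_erase.2
      ⟨fun h => hr a ha (h ▸ hJ a ha), Finset.mem_univ _⟩)) hinj
  rw [Finset.card_erase_of_mem (Finset.mem_univ r), Finset.card_univ, Fintype.card_fin] at hcard
  omega

end IsLaminar

theorem card_le_of_isChain {s : Finset (Finset (PSigmaAut n))} (hn : 0 < n)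
    (hs : ∀ c ∈ s, IsCell c) (hchain : ∀ c ∈ s, ∀ d ∈ s, c ≤ d ∨ d ≤ c) : s.card ≤ n := by
  rcases s.eq_empty_or_nonempty with rfl | hne
  · exact n.zero_le
  obtain ⟨c₀, hc₀, hmin⟩ := Finset.exists_minimal hne
  obtain ⟨g, hg₀⟩ := (hs c₀ hc₀).nonempty
  have hg : ∀ c ∈ s, g ∈ c := fun c hc =>
    (hchain c₀ hc₀ c hc).elim (· hg₀) fun h => hmin hc h hg₀
  have hinj : Set.InjOn (fun c => (cellCuts g c).card) s := by
    intro c hc d hd (hcd : (cellCuts g c).card = (cellCuts g d).card)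
    have hcuts : cellCuts g c = cellCuts g d := (hchain c hc d hd).elim
      (fun h => Finset.eq_of_subset_of_card_le (cellCuts_mono g h) hcd.ge)
      fun h => (Finset.eq_of_subset_of_card_le (cellCuts_mono g h) hcd.le).symm
    rw [← (hs c hc).cutCell_cellCuts (hg c hc), hcuts, (hs d hd).cutCell_cellCuts (hg d hd)]
  refine (Finset.card_le_card_of_injOn (t := Finset.range n) _ (fun c hc => ?_) hinj).trans_eq
    (Finset.card_range n)
  exact Finset.mem_coe.2 (Finset.mem_range.2
    (((hs c hc).isLaminar_cellCuts (hg c hc)).card_lt hn))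

end Dimension

section Stabilizers

open scoped Classical Pointwise

variable {n : ℕ} {γ : PSigmaAut n}

/- The barycentre of the exponent vectors of a cell is translated by the exponent vector of `γ`. -/
lemma IsCell.eq_one_of_smul_eq {c : Finset (PSigmaAut n)} (hc : IsCell c) (h : γ • c = c) :
    γ = 1 := by
  have hsum : c.card • conjExponent γ + ∑ x ∈ c, conjExponent x = ∑ x ∈ c, conjExponent x := by
    conv_rhs => rw [← h]
    rw [← Finset.sum_const, ← Finset.sum_add_distrib, Finset.smul_finset_def,
      Finset.sum_image (MulAction.injective γ).injOn]
    simp only [smul_eq_mul, conjExponent_mul]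
  have hγ : conjExponent γ = 0 := (smul_eq_zero.1 (add_eq_right.1 hsum)).resolve_left
    (Finset.card_ne_zero.2 hc.nonempty)
  obtain ⟨x, hx⟩ := hc.nonempty
  have hγx : γ * x ∈ c := h ▸ Finset.smul_mem_smul_finset hx
  refine mul_eq_right.1 (hc.eq_of_conjExponent_eq hγx hx ?_)
  rw [conjExponent_mul, hγ, zero_add]

theorem eq_one_of_smul_chain_eq {s : Finset (Finset (PSigmaAut n))} (hne : s.Nonempty)
    (hs : ∀ c ∈ s, IsCell c) (hchain : ∀ c ∈ s, ∀ d ∈ s, c ≤ d ∨ d ≤ c) (h : γ • s = s) :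
    γ = 1 := by
  obtain ⟨c, hc⟩ := hne
  have hγc : γ • c ∈ s := h ▸ Finset.smul_mem_smul_finset hc
  refine (hs c hc).eq_one_of_smul_eq ((hchain _ hγc c hc).elim (fun hle => ?_) fun hle => ?_)
  · exact Finset.eq_of_subset_of_card_le hle (Finset.card_smul_finset γ c).ge
  · exact (Finset.eq_of_subset_of_card_le hle (Finset.card_smul_finset γ c).le).symm

end Stabilizers

/-! ### Descending and ascending links of a vertex -/

section Sublevel

open scoped Classical

variable {n : ℕ}

/-- The poset of the cells all of whose points belong to `U`. -/
def cellsIn (U : Set (PSigmaAut n)) : Set (Finset (PSigmaAut n)) := {c | IsCell c ∧ ↑c ⊆ U}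

/-- The automorphisms that are at most as high as `g`. -/
def sublevel (g : PSigmaAut n) : Set (PSigmaAut n) := {h | normVector h ≤ normVector g}

variable {U V : Set (PSigmaAut n)} {c : Finset (PSigmaAut n)} {g : PSigmaAut n}

lemma cellsIn_mono (h : U ⊆ V) : cellsIn U ⊆ cellsIn V := fun _ hc => ⟨hc.1, hc.2.trans h⟩

lemma finite_cellsIn (hU : U.Finite) : (cellsIn U).Finite :=
  hU.toFinset.powerset.finite_toSet.subset fun _ hc => Finset.mem_coe.2 <| Finset.mem_powerset.2
    fun _ hx => hU.mem_toFinset.2 (hc.2 hx)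

lemma mem_cellsIn_sdiff_singleton : c ∈ cellsIn (U \ {g}) ↔ c ∈ cellsIn U ∧ g ∉ c := by
  rw [cellsIn, Set.mem_ofPred_eq, Set.subset_sdiff, Set.disjoint_singleton_right, Finset.mem_coe,
    ← and_assoc]
  rfl

lemma IsCell.exists_normVector_eq_add (hc : IsCell c) (hg : g ∈ c) {a : Cut (Fin n)}
    (ha : a ∈ cellCuts g c) :
    ∃ y ∈ c, y ≠ g ∧ normVector y = normVector g + reductivity g a := by
  obtain ⟨hside, ha⟩ := mem_cellCuts.1 ha
  obtain ⟨y, hy, hgy⟩ := hc.exists_conjExponent_eq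
    (v := Function.update (conjExponent g) a.base (conjExponent g a.base - a.vec)) fun i => by
      by_cases hi : i = a.base
      · subst hi
        rwa [Function.update_self]
      · rw [Function.update_of_ne hi]
        exact mem_coords hg i
  refine ⟨y, hy, ?_, ?_⟩
  · rintro rfl
    have hbase := congrFun hgy a.base
    rw [Function.update_self] at hbase
    exact Cut.side_nonempty_iff.1 hside (sub_eq_self.1 hbase.symm)
  · rw [hc.normVector_eq hg hy, hgy, Finset.sum_eq_single a.base, Function.update_self,
      sub_sub_cancel, normChange_vec]
    · intro i _ hi
      rw [Function.update_of_ne hi, sub_self, normChange_zero]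
    · exact fun h => absurd (Finset.mem_univ _) h

lemma cellCuts_subset_reductiveCuts (hc : c ∈ cellsIn (sublevel g)) (hg : g ∈ c) :
    cellCuts g c ⊆ reductiveCuts g := by
  intro a ha
  obtain ⟨y, hy, hyg, hnorm⟩ := hc.1.exists_normVector_eq_add hg ha
  have hlt : normVector y < normVector g := (hc.2 hy).lt_of_ne (normVector_injective.ne hyg)
  rw [hnorm] at hlt
  exact mem_reductiveCuts.2 (add_lt_iff_neg_left.1 hlt)

lemma IsLaminar.cutCell_mem_cellsIn {σ : Finset (Cut (Fin n))} (hσ : IsLaminar σ)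
    (h : σ ⊆ reductiveCuts g) : cutCell g σ ∈ cellsIn (sublevel g) := by
  refine ⟨hσ.isCell_cutCell g, fun y hy => ?_⟩
  change normVector y ≤ normVector g
  rw [(hσ.isCell_cutCell g).normVector_eq (hσ.self_mem_cutCell g) hy, add_le_iff_nonpos_right]
  refine Finset.sum_nonpos fun i _ => ?_
  rcases mem_twistVectors.1 (hσ.mem_coords_cutCell.1 (mem_coords hy i)) with h0 | ⟨a, ha, rfl, hvec⟩
  · rw [h0, normChange_zero]
  · rw [← hvec, normChange_vec]
    exact (mem_reductiveCuts.1 (h ha)).le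

lemma cellCuts_singleton (g : PSigmaAut n) : cellCuts g {g} = ∅ := by
  refine Finset.eq_empty_of_forall_notMem fun a ha => ?_
  obtain ⟨y, hy, hyg, -⟩ :=
    (IsCell.singleton g).exists_normVector_eq_add (Finset.mem_singleton_self g) ha
  exact hyg (Finset.mem_singleton.1 hy)

lemma IsCell.cellCuts_eq_empty_iff (hc : IsCell c) (hg : g ∈ c) :
    cellCuts g c = ∅ ↔ c = {g} := by
  constructor
  · intro h
    rw [← hc.cutCell_cellCuts hg, h, ← cellCuts_singleton g,
      (IsCell.singleton g).cutCell_cellCuts (Finset.mem_singleton_self g)]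
  · rintro rfl
    exact cellCuts_singleton g

lemma isLaminar_of_mem_compatibleSubsets {σ : Finset (Cut (Fin n))}
    (hσ : σ ∈ compatibleSubsets Cut.Compatible (reductiveCuts g)) : IsLaminar σ :=
  ⟨fun _ ha => side_nonempty_of_mem_reductiveCuts (hσ.2.1 ha), hσ.2.2⟩

lemma link_singleton_eq_image_cutCell (g : PSigmaAut n) :
    link (cellsIn (sublevel g)) {g} =
      cutCell g '' compatibleSubsets Cut.Compatible (reductiveCuts g) := by
  refine subset_antisymm (fun c hc => ?_) (Set.image_subset_iff.2 fun σ hσ => ?_)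
  · have hgc : {g} < c := hc.2.resolve_left fun h =>
      hc.1.1.nonempty.ne_empty (Finset.ssubset_singleton_iff.1 h)
    have hg : g ∈ c := Finset.singleton_subset_iff.1 hgc.le
    refine ⟨cellCuts g c, ⟨?_, cellCuts_subset_reductiveCuts hc.1 hg,
      (hc.1.1.isLaminar_cellCuts hg).compatible⟩, hc.1.1.cutCell_cellCuts hg⟩
    rw [Finset.nonempty_iff_ne_empty, Ne, hc.1.1.cellCuts_eq_empty_iff hg]
    exact hgc.ne'
  · have hlam := isLaminar_of_mem_compatibleSubsets hσ
    refine ⟨hlam.cutCell_mem_cellsIn hσ.2.1, Or.inr (lt_of_le_of_ne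
      (Finset.singleton_subset_iff.2 (hlam.self_mem_cutCell g)) fun h => ?_)⟩
    rw [eq_comm, ← (hlam.isCell_cutCell g).cellCuts_eq_empty_iff (hlam.self_mem_cutCell g),
      hlam.cellCuts_cutCell] at h
    exact hσ.1.ne_empty h

lemma orderAcyclic_link_singleton (hR : (reductiveCuts g).Nonempty) :
    OrderAcyclic (link (cellsIn (sublevel g)) {g}) := by
  rw [link_singleton_eq_image_cutCell]
  refine (orderAcyclic_compatibleSubsets_reductiveCuts g hR).image fun σ hσ τ hτ =>
    ⟨fun h => ?_, cutCell_mono g⟩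
  have hcuts := cellCuts_mono g h
  rwa [(isLaminar_of_mem_compatibleSubsets hσ).cellCuts_cutCell,
    (isLaminar_of_mem_compatibleSubsets hτ).cellCuts_cutCell] at hcuts

end Sublevel

section FaceSpan

open scoped Classical

variable {n : ℕ} {c F F' : Finset (PSigmaAut n)} {g h : PSigmaAut n}

/-- The smallest face of the cell `c` containing `F` and `h`. -/
noncomputable def faceSpan (c : Finset (PSigmaAut n)) (h : PSigmaAut n)
    (F : Finset (PSigmaAut n)) : Finset (PSigmaAut n) :=
  {x ∈ c | ∀ i, conjExponent x i ∈ insert (conjExponent h i) (coords F i)}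

lemma mem_faceSpan {x : PSigmaAut n} : x ∈ faceSpan c h F ↔
    x ∈ c ∧ ∀ i, conjExponent x i = conjExponent h i ∨ conjExponent x i ∈ coords F i := by
  simp only [faceSpan, Finset.mem_filter, Finset.mem_insert]

lemma faceSpan_subset (c : Finset (PSigmaAut n)) (h : PSigmaAut n) (F : Finset (PSigmaAut n)) :
    faceSpan c h F ⊆ c := Finset.filter_subset _ _

lemma faceSpan_mono (c : Finset (PSigmaAut n)) (h : PSigmaAut n) (hF : F ⊆ F') :
    faceSpan c h F ⊆ faceSpan c h F' := fun _ hx =>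
  mem_faceSpan.2 ((mem_faceSpan.1 hx).imp_right fun hi i => (hi i).imp_right
    fun hm => coords_mono hF i hm)

lemma subset_faceSpan (hF : F ⊆ c) (h : PSigmaAut n) : F ⊆ faceSpan c h F := fun _ hx =>
  mem_faceSpan.2 ⟨hF hx, fun i => Or.inr (mem_coords hx i)⟩

lemma mem_faceSpan_self (hh : h ∈ c) (F : Finset (PSigmaAut n)) : h ∈ faceSpan c h F :=
  mem_faceSpan.2 ⟨hh, fun _ => Or.inl rfl⟩

lemma faceSpan_faceSpan (c : Finset (PSigmaAut n)) (h : PSigmaAut n) (F : Finset (PSigmaAut n)) :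
    faceSpan c h (faceSpan c h F) = faceSpan c h F := by
  refine subset_antisymm (fun x hx => ?_) (subset_faceSpan (faceSpan_subset c h F) h)
  refine mem_faceSpan.2 ((mem_faceSpan.1 hx).imp_right fun hi i => (hi i).elim Or.inl fun hm => ?_)
  obtain ⟨y, hy, hyx⟩ := Finset.mem_image.1 hm
  exact hyx ▸ (mem_faceSpan.1 hy).2 i

namespace IsCell

lemma faceSpan (hc : IsCell c) (hh : h ∈ c) (F : Finset (PSigmaAut n)) :
    IsCell (faceSpan c h F) :=
  hc.filter _ hh fun _ => Finset.mem_insert_self _ _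

lemma faceSpan_singleton (hc : IsCell c) (hh : h ∈ c) : _root_.faceSpan c h {h} = {h} := by
  refine Finset.eq_singleton_iff_unique_mem.2 ⟨mem_faceSpan_self hh _, fun x hx => ?_⟩
  obtain ⟨hxc, hx⟩ := mem_faceSpan.1 hx
  refine hc.eq_of_conjExponent_eq hxc hh (funext fun i => (hx i).elim id fun hm => ?_)
  rwa [coords, Finset.image_singleton, Finset.mem_singleton] at hm

lemma exists_opposite (hc : IsCell c) (hg : g ∈ c) (hne : c ≠ {g}) : ∃ h ∈ c, h ≠ g ∧
    ∀ i, conjExponent h i = conjExponent g i → ∀ u ∈ coords c i, u = conjExponent g i := by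
  have hcoord : ∀ i, ∃ v ∈ coords c i,
      v = conjExponent g i → ∀ u ∈ coords c i, u = conjExponent g i := fun i => by
    by_cases hi : ∃ u ∈ coords c i, u ≠ conjExponent g i
    · obtain ⟨u, hu, hug⟩ := hi
      exact ⟨u, hu, fun h => absurd h hug⟩
    · push Not at hi
      exact ⟨conjExponent g i, mem_coords hg i, fun _ => hi⟩
  choose v hv hvg using hcoord
  obtain ⟨h, hh, rfl⟩ := hc.exists_conjExponent_eq hv
  refine ⟨h, hh, ?_, hvg⟩
  rintro rfl
  exact hne (Finset.eq_singleton_iff_unique_mem.2 ⟨hg, fun x hx =>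
    hc.eq_of_conjExponent_eq hx hg (funext fun i => hvg i rfl _ (mem_coords hx i))⟩)

lemma notMem_faceSpan (hc : IsCell c) (hF : IsCell F) (hFc : F ⊆ c) (hg : g ∈ c) (hgF : g ∉ F)
    (hopp : ∀ i, conjExponent h i = conjExponent g i → ∀ u ∈ coords c i, u = conjExponent g i) :
    g ∉ _root_.faceSpan c h F := by
  refine fun hgs => hgF (hc.mem_of_conjExponent_mem hF hFc hg fun i => ?_)
  refine ((mem_faceSpan.1 hgs).2 i).elim (fun hi => ?_) id
  obtain ⟨x, hx⟩ := hF.nonempty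
  rw [← hopp i hi.symm _ (coords_mono hFc i (mem_coords hx i))]
  exact mem_coords hx i

end IsCell

section Link

variable {U : Set (PSigmaAut n)} {S : Set (Finset (PSigmaAut n))}

lemma mem_link_iff_of_forall_notMem (hUS : cellsIn (U \ {g}) ⊆ S) (hSU : S ⊆ cellsIn U)
    (hc : c ∈ S) (hg : g ∈ c) (hmin : ∀ F ∈ S, F < c → g ∉ F) :
    F ∈ link S c ↔ IsCell F ∧ F ⊆ c ∧ g ∉ F ∨ F ∈ S ∧ c < F := by
  constructor
  · rintro ⟨hF, hlt | hlt⟩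
    · exact Or.inl ⟨(hSU hF).1, hlt.le, hmin F hF hlt⟩
    · exact Or.inr ⟨hF, hlt⟩
  · rintro (⟨hF, hFc, hgF⟩ | ⟨hF, hlt⟩)
    · have hFU : F ∈ cellsIn U := ⟨hF, (Finset.coe_subset.2 hFc).trans (hSU hc).2⟩
      exact ⟨hUS (mem_cellsIn_sdiff_singleton.2 ⟨hFU, hgF⟩),
        Or.inl (hFc.lt_of_ne fun h => hgF (h ▸ hg))⟩
    · exact ⟨hF, Or.inr hlt⟩

/- The faces of `c` avoiding `g` can be pushed away from `g`, towards the opposite vertex `h`. -/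
lemma orderAcyclic_link_of_forall_notMem (hU : U.Finite) (hUS : cellsIn (U \ {g}) ⊆ S)
    (hSU : S ⊆ cellsIn U) (hc : c ∈ S) (hg : g ∈ c) (hne : c ≠ {g})
    (hmin : ∀ F ∈ S, F < c → g ∉ F) : OrderAcyclic (link S c) := by
  have hC := (hSU hc).1
  obtain ⟨h, hh, hhg, hopp⟩ := hC.exists_opposite hg hne
  have hlink {F} := mem_link_iff_of_forall_notMem (F := F) hUS hSU hc hg hmin
  have hlower {F} (hF : F ⊆ c) : F ∪ faceSpan c h F = faceSpan c h F :=
    Finset.union_eq_right.2 (subset_faceSpan hF h)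
  have hupper {F} (hF : c < F) : F ∪ faceSpan c h F = F :=
    Finset.union_eq_left.2 ((faceSpan_subset c h F).trans hF.le)
  have hretract : IsMonotoneRetraction (fun F => F ∪ faceSpan c h F) (link S c) :=
    { mapsTo := fun F hF => by
        rcases hlink.1 hF with ⟨hcell, hFc, hgF⟩ | ⟨-, hcF⟩
        · simp only [hlower hFc]
          exact hlink.2 (Or.inl ⟨hC.faceSpan hh F, faceSpan_subset c h F,
            hC.notMem_faceSpan hcell hFc hg hgF hopp⟩)
        · simpa only [hupper hcF] using hF
      monotoneOn := fun _ _ _ _ hle => Finset.union_subset_union hle (faceSpan_mono c h hle)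
      idem := fun F hF => by
        rcases hlink.1 hF with ⟨-, hFc, -⟩ | ⟨-, hcF⟩
        · simp only [hlower hFc, faceSpan_faceSpan, Finset.union_self]
        · simp only [hupper hcF]
      le_or_ge := Or.inl fun _ _ => Finset.subset_union_left }
  have hfin : (link S c).Finite := (finite_cellsIn hU).subset fun F hF => hSU hF.1
  refine .of_pushesInto (Set.sep_subset _ _)
    (hretract.pushesInto (hfin.subset (Set.sep_subset _ _)))
    (.of_comparable (c := {h}) ⟨hlink.2 (Or.inl ?_), ?_⟩ fun F hF => Or.inr ?_)
  · exact ⟨.singleton h, Finset.singleton_subset_iff.2 hh, Finset.notMem_singleton.2 hhg.symm⟩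
  · simp only [hC.faceSpan_singleton hh, Finset.union_self]
  · rw [← hF.2]
    exact Finset.singleton_subset_iff.2 (Finset.mem_union_right _ (mem_faceSpan_self hh F))

lemma pushesInto_cellsIn_sdiff_singleton (hU : U.Finite) (hUS : cellsIn (U \ {g}) ⊆ S)
    (hSU : S ⊆ cellsIn U) (hg : {g} ∉ S) : PushesInto S (cellsIn (U \ {g})) := by
  have hfin : (S \ cellsIn (U \ {g})).Finite := ((finite_cellsIn hU).subset hSU).sdiff
  induction hN : (S \ cellsIn (U \ {g})).ncard generalizing S with
  | zero =>
    rw [Set.ncard_eq_zero hfin, Set.sdiff_eq_empty] at hN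
    rw [subset_antisymm hN hUS]
    exact .refl _
  | succ N ih =>
    obtain ⟨c, ⟨hc, hcU⟩, hmin⟩ := hfin.exists_minimal ((Set.ncard_pos hfin).1 (by omega))
    have hgc : g ∈ c := by_contra fun h => hcU (mem_cellsIn_sdiff_singleton.2 ⟨hSU hc, h⟩)
    have hlink := orderAcyclic_link_of_forall_notMem hU hUS hSU hc hgc
      (fun h => hg (h ▸ hc)) fun F hF hFc hgF =>
        hFc.not_ge (hmin ⟨hF, fun h => (mem_cellsIn_sdiff_singleton.1 h).2 hgF⟩ hFc.le)
    have hcomm : (S \ {c}) \ cellsIn (U \ {g}) = (S \ cellsIn (U \ {g})) \ {c} :=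
      sdiff_right_comm _ _ _
    refine .trans Set.sdiff_subset (.sdiff_singleton hlink) (ih ?_ ?_ ?_ ?_ ?_)
    · exact fun F hF => ⟨hUS hF, fun h => hcU (Set.mem_singleton_iff.1 h ▸ hF)⟩
    · exact Set.sdiff_subset.trans hSU
    · exact fun h => hg h.1
    · exact hcomm ▸ hfin.sdiff
    · have hmem : c ∈ S \ cellsIn (U \ {g}) := ⟨hc, hcU⟩
      rw [hcomm, Set.ncard_sdiff_singleton_of_mem hmem, hN, Nat.add_sub_cancel]

end Link

end FaceSpan

section Acyclicity

open scoped Classical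

variable {n : ℕ} {g : PSigmaAut n}

lemma pushesInto_sublevel_sdiff_singleton (hR : (reductiveCuts g).Nonempty) :
    PushesInto (cellsIn (sublevel g)) (cellsIn (sublevel g \ {g})) := by
  refine .trans Set.sdiff_subset (.sdiff_singleton (orderAcyclic_link_singleton hR))
    (pushesInto_cellsIn_sdiff_singleton (finite_setOf_normVector_le g) (fun c hc => ⟨?_, ?_⟩)
      Set.sdiff_subset fun h => h.2 rfl)
  · exact cellsIn_mono Set.sdiff_subset hc
  · rintro rfl
    exact (mem_cellsIn_sdiff_singleton.1 hc).2 (Finset.mem_singleton_self g)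

/- Without reductive cuts, `{g}` is the only cell at `g`, so it belongs to no edge. -/
lemma orderChains_sublevel_le_of_reductiveCuts_eq_empty (hR : reductiveCuts g = ∅) {k : ℕ}
    (hk : 2 ≤ k) :
    orderChains (cellsIn (sublevel g)) k ≤ orderChains (cellsIn (sublevel g \ {g})) k := by
  have heq : ∀ c ∈ cellsIn (sublevel g), g ∈ c → c = {g} := fun c hc hg =>
    (hc.1.cellCuts_eq_empty_iff hg).1
      (Finset.subset_empty.1 (hR ▸ cellCuts_subset_reductiveCuts hc hg))
  refine Finsupp.supported_mono fun s hs => ⟨fun c hc => ?_, hs.2⟩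
  refine mem_cellsIn_sdiff_singleton.2 ⟨hs.1 hc, fun hg => ?_⟩
  obtain ⟨d, hd, hdc⟩ := Finset.exists_mem_ne (by have := hs.2.2; omega : 1 < s.card) c
  obtain rfl := heq c (hs.1 hc) hg
  obtain ⟨x, hx⟩ := (hs.1 hd).1.nonempty
  refine hdc (heq d (hs.1 hd) ?_)
  rcases hs.2.1.total hd hc with h | h
  · exact Finset.mem_singleton.1 (h hx) ▸ hx
  · exact h (Finset.mem_singleton_self g)

lemma eq_zero_of_mem_orderChains_cellsIn_empty {k : ℕ} (hk : k ≠ 0)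
    {z : Finset (Finset (PSigmaAut n)) →₀ ℤ}
    (hz : z ∈ orderChains (cellsIn (∅ : Set (PSigmaAut n))) k) : z = 0 := by
  refine Finsupp.support_eq_empty.1 (Finset.eq_empty_of_forall_notMem fun s hs => ?_)
  obtain ⟨hcells, -, hcard⟩ := hz hs
  obtain ⟨c, hc⟩ := Finset.card_pos.1 (hcard ▸ Nat.pos_of_ne_zero hk)
  obtain ⟨x, hx⟩ := (hcells hc).1.nonempty
  exact (hcells hc).2 hx

lemma sublevel_mono {h : PSigmaAut n} (hhg : normVector h ≤ normVector g) :
    sublevel h ⊆ sublevel g := fun _ => (le_trans · hhg)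

lemma sublevel_eq_insert_of_forall_le {U : Set (PSigmaAut n)} (hg : sublevel g ⊆ insert g U)
    (hmax : ∀ h ∈ U, normVector h ≤ normVector g) : sublevel g = insert g U :=
  hg.antisymm (Set.insert_subset (show normVector g ≤ normVector g from le_rfl) hmax)

/- The vertices of `U` are added in order of increasing height. -/
lemma exists_boundary_eq_of_sublevel_subset (U : Finset (PSigmaAut n))
    (hU : ∀ g ∈ U, sublevel g ⊆ U) {k : ℕ} (hk : 2 ≤ k) {z : Finset (Finset (PSigmaAut n)) →₀ ℤ}
    (hz : z ∈ orderChains (cellsIn (U : Set (PSigmaAut n))) k) (hdz : boundary z = 0) :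
    ∃ w ∈ orderChains (cellsIn (U : Set (PSigmaAut n))) (k + 1), boundary w = z := by
  induction U using Finset.induction_on_max_value (ι := PSigmaAut n) (f := normVector)
    generalizing z with
  | empty =>
    rw [Finset.coe_empty] at hz
    refine ⟨0, Submodule.zero_mem _, ?_⟩
    rw [_root_.map_zero, eq_zero_of_mem_orderChains_cellsIn_empty (by omega) hz]
  | insert g U hgU hmax ih =>
    rw [Finset.coe_insert] at hz hU ⊢
    have hsublevel := sublevel_eq_insert_of_forall_le (hU g (Finset.mem_insert_self g U)) hmax
    have hsdiff : sublevel g \ {g} = U := by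
      rw [hsublevel, Set.insert_sdiff_self_of_notMem (Finset.mem_coe.not.2 hgU)]
    have hlower : ∀ h ∈ U, sublevel h ⊆ U := fun h hh x hx =>
      (hU h (Finset.mem_insert_of_mem hh) hx).resolve_left fun hxg => hgU
        (normVector_injective ((hmax h hh).antisymm (hxg ▸ hx)) ▸ hh)
    have hle := orderChains_mono (cellsIn_mono (Set.subset_insert g U)) (k + 1)
    rw [← hsublevel] at hz hle ⊢
    obtain hR | hR := (reductiveCuts g).eq_empty_or_nonempty
    · have hzU := orderChains_sublevel_le_of_reductiveCuts_eq_empty hR hk hz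
      rw [hsdiff] at hzU
      obtain ⟨w, hw, hdw⟩ := ih hlower hzU hdz
      exact ⟨w, hle hw, hdw⟩
    · obtain ⟨w, hw, hzw, hdzw⟩ := pushesInto_sublevel_sdiff_singleton hR k z hz hdz
      rw [hsdiff] at hzw
      obtain ⟨v, hv, hdv⟩ := ih hlower hzw hdzw
      exact ⟨v - w, Submodule.sub_mem _ (hle hv) hw,
        by rw [_root_.map_sub, hdv, add_sub_cancel_right]⟩

/-- The poset of all cells. -/
def cells (n : ℕ) : Set (Finset (PSigmaAut n)) := {c | IsCell c}

lemma exists_boundary_eq_of_two_le {k : ℕ} (hk : 2 ≤ k) {z : Finset (Finset (PSigmaAut n)) →₀ ℤ}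
    (hz : z ∈ orderChains (cells n) k) (hdz : boundary z = 0) :
    ∃ w ∈ orderChains (cells n) (k + 1), boundary w = z := by
  let vertices := insert 1 (z.support.biUnion fun s => s.biUnion id)
  obtain ⟨g, -, hmax⟩ := vertices.exists_max_image normVector ⟨1, Finset.mem_insert_self _ _⟩
  let U := (finite_setOf_normVector_le g).toFinset
  have hU : (U : Set (PSigmaAut n)) = sublevel g := Set.Finite.coe_toFinset _
  have hzU : z ∈ orderChains (cellsIn (U : Set (PSigmaAut n))) k := fun s hs =>
    ⟨fun c hc => ⟨(hz hs).1 hc, fun h hh => hU ▸ hmax h (Finset.mem_insert_of_mem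
      (Finset.mem_biUnion.2 ⟨s, hs, Finset.mem_biUnion.2 ⟨c, hc, hh⟩⟩))⟩, (hz hs).2⟩
  obtain ⟨w, hw, hdw⟩ := exists_boundary_eq_of_sublevel_subset U
    (fun h hh => hU ▸ sublevel_mono (hU ▸ hh : h ∈ sublevel g)) hk hzU hdz
  exact ⟨w, orderChains_mono (fun _ hc => hc.1) _ hw, hdw⟩

end Acyclicity

/-! ### Connectivity -/

section Homologous

open scoped Classical

variable {P : Type*} [PartialOrder P] {S : Set P} {x y z : P}

/-- Two vertices are homologous if their difference bounds a `1`-chain of the order complex of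
`S`; over `ℤ` this is a substitute for being joined by an edge path. -/
def Homologous (S : Set P) (x y : P) : Prop :=
  Finsupp.single {x} (1 : ℤ) - Finsupp.single {y} 1 ∈ (orderChains S 2).map boundary

lemma Homologous.symm (h : Homologous S x y) : Homologous S y x := by
  rw [Homologous, ← neg_sub]
  exact Submodule.neg_mem _ h

lemma Homologous.trans (hxy : Homologous S x y) (hyz : Homologous S y z) : Homologous S x z := by
  rw [Homologous, ← sub_add_sub_cancel]
  exact Submodule.add_mem _ hxy hyz

lemma boundary_single_singleton (x : P) (a : ℤ) :
    boundary (Finsupp.single {x} a) = Finsupp.single ∅ a := by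
  simp [boundary, simplexSign, Finset.filter_singleton]

lemma singleton_mem_orderSimplices (hx : x ∈ S) : {x} ∈ orderSimplices S 1 :=
  ⟨by rwa [Finset.coe_singleton, Set.singleton_subset_iff],
    by rw [Finset.coe_singleton]; exact Set.subsingleton_singleton.isChain,
    Finset.card_singleton x⟩

lemma homologous_of_le (hx : x ∈ S) (hy : y ∈ S) (h : x ≤ y) : Homologous S x y := by
  have hacyclic : OrderAcyclic {x, y} :=
    .of_comparable (Set.mem_insert x {y}) fun z hz => hz.elim (fun hzx => .inl hzx.le)
      fun hzy => .inr (h.trans (Set.mem_singleton_iff.1 hzy).ge)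
  have hy' : y ∈ ({x, y} : Set P) := Set.mem_insert_of_mem x (Set.mem_singleton y)
  obtain ⟨w, hw, hdw⟩ := hacyclic 1 (Finsupp.single {x} 1 - Finsupp.single {y} 1)
    (Submodule.sub_mem _
      (single_mem_orderChains (singleton_mem_orderSimplices (Set.mem_insert x {y})) 1)
      (single_mem_orderChains (singleton_mem_orderSimplices hy') 1))
    (by rw [_root_.map_sub, boundary_single_singleton, boundary_single_singleton, sub_self])
  exact ⟨w, orderChains_mono (Set.insert_subset hx (Set.singleton_subset_iff.2 hy)) 2 hw, hdw⟩

/- Moving every vertex to `x` turns a `0`-cycle into its augmentation, that is, into `0`. -/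
lemma exists_boundary_eq_of_homologous (hS : ∀ y ∈ S, Homologous S y x) {c : Finset P →₀ ℤ}
    (hc : c ∈ orderChains S 1) (hdc : boundary c = 0) :
    ∃ w ∈ orderChains S 2, boundary w = c := by
  let subAugmentation : (Finset P →₀ ℤ) →ₗ[ℤ] (Finset P →₀ ℤ) :=
    LinearMap.id - LinearMap.toSpanSingleton ℤ _ (Finsupp.single {x} 1) ∘ₗ Finsupp.lapply ∅ ∘ₗ
      boundary
  have heq : subAugmentation c = c := by simp [subAugmentation, hdc]
  have hmem : subAugmentation c ∈ (orderChains S 2).map boundary := by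
    refine map_mem_of_mem_orderChains (fun s hs => ?_) hc
    obtain ⟨y, rfl⟩ := Finset.card_eq_one.1 hs.2.2
    simpa [subAugmentation, boundary_single_singleton] using!
      hS y (hs.1 (Finset.mem_coe.2 (Finset.mem_singleton_self y)))
  rwa [heq] at hmem

lemma exists_boundary_eq_of_mem_orderChains_zero (hx : x ∈ S) {c : Finset P →₀ ℤ}
    (hc : c ∈ orderChains S 0) : ∃ w ∈ orderChains S 1, boundary w = c := by
  refine ⟨Finsupp.single {x} (c ∅), single_mem_orderChains (singleton_mem_orderSimplices hx) _, ?_⟩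
  rw [boundary_single_singleton]
  refine (Finsupp.eq_single_iff.2 ⟨fun s hs => ?_, rfl⟩).symm
  exact Finset.mem_singleton.2 (Finset.card_eq_zero.1 (hc hs).2.2)

end Homologous

section Cells

open scoped Classical

variable {n : ℕ}

lemma homologous_of_mem {c : Finset (PSigmaAut n)} (hc : IsCell c) {g : PSigmaAut n}
    (hg : g ∈ c) : Homologous (cells n) {g} c :=
  homologous_of_le (IsCell.singleton g) hc (Finset.singleton_subset_iff.2 hg)

lemma IsLaminar.singleton {a : Cut (Fin n)} (ha : a.side.Nonempty) : IsLaminar {a} where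
  side_nonempty b hb := Finset.mem_singleton.1 hb ▸ ha
  compatible b hb d hd := by
    rw [Finset.mem_singleton.1 hb, Finset.mem_singleton.1 hd]
    exact refl a

lemma mul_twist_inv_mem_cutCell (g : PSigmaAut n) {a : Cut (Fin n)} (ha : a.side.Nonempty) :
    g * (twist a.base a.vec)⁻¹ ∈ cutCell g {a} := by
  have hσ := IsLaminar.singleton ha
  have hcell := hσ.isCell_cutCell g
  obtain ⟨y, hy, hgy⟩ := hcell.exists_conjExponent_eq
    (v := conjExponent g + Pi.single a.base (-a.vec)) fun i => by
      rw [hσ.mem_coords_cutCell, Pi.add_apply, sub_add_cancel_left, mem_twistVectors]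
      obtain rfl | hi := eq_or_ne i a.base
      · exact Or.inr ⟨a, Finset.mem_singleton_self a, rfl, by rw [Pi.single_eq_same, neg_neg]⟩
      · exact Or.inl (by rw [Pi.single_eq_of_ne hi, neg_zero])
  have hmul := ((hcell.mem_iff (hσ.self_mem_cutCell g)).1 hy).2
  rw [hgy, add_sub_cancel_left, multiTwist_single, twist_neg] at hmul
  rwa [← hmul]

lemma homologous_mul_alphaP (g : PSigmaAut n) {i j : Fin n} (hij : i ≠ j) :
    Homologous (cells n) {g} {g * alphaP n i j} := by
  let a : Cut (Fin n) := ⟨j, false, {i}, Finset.notMem_singleton.2 hij.symm⟩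
  have ha : a.side.Nonempty := Finset.singleton_nonempty i
  have hvec : a.vec = -Pi.single i 1 := by
    ext b
    obtain rfl | hb := eq_or_ne b i <;> simp [a, Cut.vec, signVector, boolSign, *]
  have hmem := mul_twist_inv_mem_cutCell g ha
  rw [hvec, twist_neg, inv_inv, twist_single_one hij] at hmem
  have hσ := IsLaminar.singleton ha
  have hcell := hσ.isCell_cutCell g
  exact (homologous_of_mem hcell (hσ.self_mem_cutCell g)).trans (homologous_of_mem hcell hmem).symm

lemma homologous_mul (γ g : PSigmaAut n) : Homologous (cells n) {g} {g * γ} := by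
  have hγ : γ ∈ Subgroup.closure {s | ∃ i j, i ≠ j ∧ alphaP n i j = s} :=
    closure_alphaP ▸ Subgroup.mem_top γ
  induction hγ using Subgroup.closure_induction generalizing g with
  | mem _ hs =>
    obtain ⟨i, j, hij, rfl⟩ := hs
    exact homologous_mul_alphaP g hij
  | one =>
    rw [mul_one]
    exact homologous_of_le (IsCell.singleton g) (IsCell.singleton g) le_rfl
  | mul γ δ _ _ hγ hδ => exact mul_assoc g γ δ ▸ (hγ g).trans (hδ (g * γ))
  | inv γ _ hγ => simpa only [inv_mul_cancel_right] using (hγ (g * γ⁻¹)).symm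

theorem orderAcyclic_cells (n : ℕ) : OrderAcyclic (cells n)
  | 0, _, hz, _ => exists_boundary_eq_of_mem_orderChains_zero (IsCell.singleton 1) hz
  | 1, _, hz, hdz => by
    refine exists_boundary_eq_of_homologous (x := {1}) (fun c hc => ?_) hz hdz
    obtain ⟨g, hg⟩ := hc.nonempty
    simpa only [mul_inv_cancel] using (homologous_of_mem hc hg).symm.trans (homologous_mul g⁻¹ g)
  | _ + 2, _, hz, hdz => exists_boundary_eq_of_two_le (Nat.le_add_left 2 _) hz hdz

end Cells

/-! ### Group cohomology from a free acyclic action -/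

section FreeResolution

open CategoryTheory Limits

universe u

variable {k G : Type u} [CommRing k] [Group G]

lemma exists_equivariant_of_free {T : Type*} [MulAction G T]
    (hfree : ∀ (g : G) (t : T), g • t = t → g = 1) :
    ∃ p : T → G, ∀ (g : G) (t : T), p (g • t) = g * p t := by
  let rep : T → T := fun t => Quotient.out (Quotient.mk (MulAction.orbitRel G T) t)
  have hrep : ∀ (g : G) (t : T), rep (g • t) = rep t := fun g t =>
    congrArg Quotient.out (Quotient.sound ⟨g, rfl⟩)
  have hmem : ∀ t, ∃ g : G, g • rep t = t := fun t =>
    Quotient.exact (s := MulAction.orbitRel G T) (Quotient.out_eq _).symm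
  choose p hp using hmem
  refine ⟨p, fun g t => (inv_mul_eq_one.1 (hfree _ (rep t) ?_)).symm⟩
  rw [mul_smul, ← hrep g t, hp, hrep, mul_inv_rev, mul_smul, inv_smul_smul, inv_smul_eq_iff, hp]

lemma projective_of_permuted_basis {T : Type*} [MulAction G T] {X : Rep.{u} k G}
    (b : Module.Basis T k X) (hb : ∀ (g : G) (t : T), X.ρ g (b t) = b (g • t))
    (hfree : ∀ (g : G) (t : T), g • t = t → g = 1) : Projective X where
  factors {E Z} f e he := by
    choose preimage hpreimage using (Rep.epi_iff_surjective e).1 he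
    obtain ⟨p, hp⟩ := exists_equivariant_of_free hfree
    let lift : X →ₗ[k] E :=
      b.constr k fun t => E.ρ (p t) (preimage (f.hom (b ((p t)⁻¹ • t))))
    have hlift : ∀ t, lift (b t) = E.ρ (p t) (preimage (f.hom (b ((p t)⁻¹ • t)))) :=
      b.constr_basis k _
    have hequivariant : ∀ g : G, lift ∘ₗ X.ρ g = E.ρ g ∘ₗ lift := fun g => b.ext fun t => by
      rw [LinearMap.comp_apply, LinearMap.comp_apply, hb, hlift, hlift, hp, mul_inv_rev, mul_smul,
        inv_smul_smul, _root_.map_mul, Module.End.mul_apply]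
    refine ⟨Rep.ofHom ⟨lift, hequivariant⟩, ?_⟩
    refine Rep.hom_ext (Representation.IntertwiningMap.ext (b.ext fun t => ?_))
    change e.hom (lift (b t)) = f.hom (b t)
    rw [hlift, Rep.hom_comm_apply, hpreimage, ← Rep.hom_comm_apply, hb, smul_inv_smul]

lemma rep_exact_iff_function_exact (S : ShortComplex (Rep.{u} k G)) :
    S.Exact ↔ Function.Exact S.f.hom S.g.hom := by
  rw [← S.exact_map_iff_of_faithful (forget₂ _ (ModuleCat k)),
    ShortComplex.ShortExact.moduleCat_exact_iff_function_exact]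
  rfl

section Resolution

variable {X : ℕ → Rep.{u} k G} {Y : Rep.{u} k G} (d : ∀ i, X (i + 1) ⟶ X i) (ε : X 0 ⟶ Y)
  (hX : ∀ i, Projective (X i)) (hd : ∀ i, Function.Exact (d (i + 1)).hom (d i).hom)
  (hε : Function.Exact (d 0).hom ε.hom) (hsurj : Function.Surjective ε.hom)

/-- The chain complex underlying an exact sequence `⋯ ⟶ X 1 ⟶ X 0` of representations. -/
noncomputable def complexOfExact : ChainComplex (Rep.{u} k G) ℕ :=
  ChainComplex.of X d fun i => Rep.hom_ext <| Representation.IntertwiningMap.ext <|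
    LinearMap.ext fun x => (hd i).apply_apply_eq_zero x

lemma complexOfExact_d (i : ℕ) : (complexOfExact d hd).d (i + 1) i = d i :=
  ChainComplex.of_d _ _ _

/-- The augmentation of `complexOfExact` as a morphism to a complex concentrated in degree `0`. -/
noncomputable def augmentationOfExact :
    complexOfExact d hd ⟶ (ChainComplex.single₀ (Rep.{u} k G)).obj Y :=
  ((complexOfExact d hd).toSingle₀Equiv Y).symm ⟨ε, by
    rw [complexOfExact_d]
    exact Rep.hom_ext <| Representation.IntertwiningMap.ext <|
      LinearMap.ext fun x => hε.apply_apply_eq_zero x⟩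

include hsurj in
lemma quasiIso_augmentationOfExact : QuasiIso (augmentationOfExact d ε hd hε) where
  quasiIsoAt
    | 0 => by
      rw [ChainComplex.quasiIsoAt₀_iff, ShortComplex.quasiIso_iff_of_zeros' _ rfl rfl rfl,
        rep_exact_iff_function_exact, Rep.epi_iff_surjective]
      constructor
      · simpa [augmentationOfExact, ChainComplex.toSingle₀Equiv, complexOfExact_d] using! hε
      · simpa [augmentationOfExact, ChainComplex.toSingle₀Equiv] using! hsurj
    | i + 1 => by
      rw [quasiIsoAt_iff_exactAt' (hL := ChainComplex.exactAt_succ_single_obj ..),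
        HomologicalComplex.exactAt_iff' _ (i + 2) (i + 1) i (by simp) (by simp),
        rep_exact_iff_function_exact]
      simpa [complexOfExact_d] using! hd i

/-- The projective resolution given by an exact sequence `⋯ ⟶ X 1 ⟶ X 0 ⟶ Y ⟶ 0` of
representations. -/
noncomputable def projectiveResolutionOfExact : ProjectiveResolution Y where
  complex := complexOfExact d hd
  projective := hX
  π := augmentationOfExact d ε hd hε
  quasiIso := quasiIso_augmentationOfExact d ε hd hε hsurj

end Resolution

lemma subsingleton_groupCohomology_of_isZero (R : ProjectiveResolution (Rep.trivial k G k))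
    {i : ℕ} (hi : IsZero (R.complex.X i)) (M : Rep.{u} k G) :
    Subsingleton (groupCohomology M i) := by
  have : Subsingleton (R.complex.X i ⟶ M) := ⟨hi.eq_of_src⟩
  have hzero : IsZero ((R.complex.linearYonedaObj k M).X i) :=
    ModuleCat.isZero_of_subsingleton (ModuleCat.of k (R.complex.X i ⟶ M))
  exact ModuleCat.subsingleton_of_isZero
    ((ShortComplex.isZero_homology_of_isZero_X₂ _ hzero).of_iso (groupCohomologyIso M i R))

end FreeResolution

section ChainRepresentation

open CategoryTheory Limits
open scoped Pointwise

variable {G P : Type} [Group G] [PartialOrder P] [MulAction G P] [DecidableEq P] {S : Set P}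

omit [PartialOrder P] in
lemma chainMap_smul_single (g : G) (s : Finset P) (a : ℤ) :
    chainMap (g • ·) (Finsupp.single s a) = Finsupp.single (g • s) a := by
  rw [chainMap_single]
  exact congrArg (Finsupp.single · a) (Finset.ext fun x => by simp only [Finset.mem_image,
    Finset.mem_smul_finset])

omit [PartialOrder P] [DecidableEq P] in
lemma chainMap_one_smul (z : Finset P →₀ ℤ) : chainMap ((1 : G) • ·) z = z := by
  classical
  have h : chainMap ((1 : G) • · : P → P) = LinearMap.id := Finsupp.lhom_ext fun s a => by
    rw [chainMap_smul_single, one_smul, LinearMap.id_apply]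
  exact LinearMap.congr_fun h z

omit [PartialOrder P] [DecidableEq P] in
lemma chainMap_mul_smul (g h : G) (z : Finset P →₀ ℤ) :
    chainMap ((g * h) • ·) z = chainMap (g • ·) (chainMap (h • ·) z) := by
  classical
  have hcomp : chainMap ((g * h) • · : P → P) = chainMap (g • ·) ∘ₗ chainMap (h • ·) :=
    Finsupp.lhom_ext fun s a => by
      rw [LinearMap.comp_apply, chainMap_smul_single, chainMap_smul_single, chainMap_smul_single,
        mul_smul]
  exact LinearMap.congr_fun hcomp z

variable (hG : ∀ (g : G) (x y : P), g • x ≤ g • y ↔ x ≤ y)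
  (hS : ∀ g : G, Set.MapsTo (g • ·) S S)

/-- The simplices with `k` vertices in an invariant subset of a partially ordered set with an
action of `G`, as an invariant set of simplices. -/
def orderSimplicesAction (k : ℕ) : SubMulAction G (Finset P) where
  carrier := orderSimplices S k
  smul_mem' g s hs := by
    refine ⟨?_, ?_, ?_⟩
    · rw [Finset.coe_smul_finset]
      exact ((hS g).mono_left hs.1).image_subset
    · rw [Finset.coe_smul_finset]
      exact hs.2.1.image_of_map_rel _ _ _ fun x y h => (hG g x y).2 h
    · rw [Finset.card_smul_finset, hs.2.2]

/-- The simplicial chains with `k` vertices in an invariant subset, as a representation. -/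
noncomputable def chainRepresentation (k : ℕ) : Representation ℤ G (orderChains S k) where
  toFun g := (chainMap (g • ·)).restrict fun _ hz =>
    chainMap_mem_orderChains (fun x _ y _ => hG g x y) (hS g) hz
  map_one' := LinearMap.ext fun z => Subtype.ext (chainMap_one_smul z.1)
  map_mul' g h := LinearMap.ext fun z => Subtype.ext (chainMap_mul_smul g h z.1)

/-- The chains of dimension `i`, that is, with `i + 1` vertices, as an object of `Rep ℤ G`. -/
noncomputable def chainRep (i : ℕ) : Rep ℤ G := Rep.of (chainRepresentation hG hS (i + 1))

/-- The boundary as a morphism of representations. -/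
noncomputable def chainRepBoundary (i : ℕ) : chainRep hG hS (i + 1) ⟶ chainRep hG hS i :=
  Rep.ofHom ((boundary.restrict fun _ hz =>
    boundary_mem_orderChains hz).intertwiningMap_of_isIntertwiningMap _ _ fun g z =>
      Subtype.ext (boundary_chainMap (fun x _ y _ => hG g x y) z.2))

/-- The augmentation, which reads off the coefficient of the empty simplex in the boundary. -/
noncomputable def chainRepAugmentation : chainRep hG hS 0 ⟶ Rep.trivial ℤ G ℤ :=
  Rep.ofHom (((Finsupp.lapply ∅ ∘ₗ boundary) ∘ₗ
    (orderChains S 1).subtype).intertwiningMap_of_isIntertwiningMap _ _ fun g z => by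
      change boundary (chainMap (g • ·) z.1) ∅ = boundary z.1 ∅
      rw [boundary_chainMap (fun x _ y _ => hG g x y) z.2]
      refine eqOn_orderChains (f := Finsupp.lapply ∅ ∘ₗ chainMap (g • ·)) (g := Finsupp.lapply ∅)
        (fun s hs => ?_) (boundary_mem_orderChains z.2)
      rw [Finset.card_eq_zero.1 hs.2.2, LinearMap.comp_apply, chainMap_smul_single,
        Finset.smul_finset_empty])

lemma projective_chainRep {i : ℕ}
    (hfree : ∀ s ∈ orderSimplices S (i + 1), ∀ g : G, g • s = s → g = 1) :
    Projective (chainRep hG hS i) := by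
  let b : Module.Basis (orderSimplicesAction hG hS (i + 1)) ℤ (orderChains S (i + 1)) :=
    .ofRepr (Finsupp.supportedEquivFinsupp (orderSimplices S (i + 1)))
  have hb : ∀ s, (b s).1 = Finsupp.single s.1 1 := fun s =>
    Finsupp.supportedEquivFinsupp_symm_single (orderSimplices S (i + 1)) s 1
  refine projective_of_permuted_basis (X := chainRep hG hS i) b (fun g s => Subtype.ext ?_)
    fun g s h => hfree s.1 s.2 g (congrArg Subtype.val h)
  change chainMap (g • ·) (b s).1 = (b (g • s)).1
  rw [hb, hb, chainMap_smul_single]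
  rfl

omit [DecidableEq P] in
lemma exact_chainRepBoundary (hacyclic : OrderAcyclic S) (i : ℕ) :
    Function.Exact (chainRepBoundary hG hS (i + 1)).hom (chainRepBoundary hG hS i).hom := by
  refine fun z => ⟨fun hz => ?_, ?_⟩
  · obtain ⟨w, hw, hdw⟩ := hacyclic _ z.1 z.2 (congrArg Subtype.val hz)
    exact ⟨⟨w, hw⟩, Subtype.ext hdw⟩
  · rintro ⟨w, rfl⟩
    exact Subtype.ext (boundary_boundary w.2)

omit [DecidableEq P] in
lemma boundary_eq_zero_iff {z : Finset P →₀ ℤ} (hz : z ∈ orderChains S 1) :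
    boundary z = 0 ↔ boundary z ∅ = 0 := by
  refine ⟨fun h => by rw [h]; rfl, fun h => Finsupp.ext fun s => ?_⟩
  by_contra hs
  obtain rfl := Finset.card_eq_zero.1
    (boundary_mem_orderChains hz (Finsupp.mem_support_iff.2 hs)).2.2
  exact hs h

lemma exact_chainRepAugmentation (hacyclic : OrderAcyclic S) :
    Function.Exact (chainRepBoundary hG hS 0).hom (chainRepAugmentation hG hS).hom := by
  refine fun z => ⟨fun hz => ?_, ?_⟩
  · obtain ⟨w, hw, hdw⟩ := hacyclic _ z.1 z.2 ((boundary_eq_zero_iff z.2).2 hz)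
    exact ⟨⟨w, hw⟩, Subtype.ext hdw⟩
  · rintro ⟨w, rfl⟩
    exact DFunLike.congr_fun (boundary_boundary w.2) ∅

lemma surjective_chainRepAugmentation (hacyclic : OrderAcyclic S) :
    Function.Surjective (chainRepAugmentation hG hS).hom := fun a => by
  have hempty : ∅ ∈ orderSimplices S 0 := ⟨by simp, by simp, rfl⟩
  have ha := single_mem_orderChains hempty a
  obtain ⟨w, hw, hdw⟩ := hacyclic 0 _ ha (boundary_eq_zero_of_mem_orderChains_zero ha)
  refine ⟨⟨w, hw⟩, ?_⟩
  change boundary w ∅ = a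
  rw [hdw, Finsupp.single_eq_same]

include hG hS in
theorem subsingleton_groupCohomology_of_orderAcyclic (hacyclic : OrderAcyclic S) {d : ℕ}
    (hdim : ∀ k, ∀ s ∈ orderSimplices S k, k ≤ d)
    (hfree : ∀ k, ∀ s ∈ orderSimplices S (k + 1), ∀ g : G, g • s = s → g = 1)
    (M : Rep ℤ G) {i : ℕ} (hi : d ≤ i) : Subsingleton (groupCohomology M i) := by
  refine subsingleton_groupCohomology_of_isZero
    (projectiveResolutionOfExact (chainRepBoundary hG hS) (chainRepAugmentation hG hS)
      (fun j => projective_chainRep hG hS (hfree j)) (exact_chainRepBoundary hG hS hacyclic)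
      (exact_chainRepAugmentation hG hS hacyclic) (surjective_chainRepAugmentation hG hS hacyclic))
    ((Rep.isZero_iff ℤ G (chainRep hG hS i)).2 ⟨fun z w => Subtype.ext ?_⟩) M
  have hempty : orderSimplices S (i + 1) = ∅ := Set.eq_empty_of_forall_notMem fun s hs =>
    absurd (hdim _ s hs) (by omega)
  have hzero : ∀ z ∈ orderChains S (i + 1), z = 0 := fun z hz =>
    eqOn_orderChains (f := LinearMap.id) (g := 0) (fun s hs => by simp [hempty] at hs) hz
  rw [hzero z.1 z.2, hzero w.1 w.2]

end ChainRepresentation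

section UpperBound

open scoped Classical Pointwise

theorem subsingleton_groupCohomology_subgroup {n : ℕ} (hn : 0 < n)
    (H : Subgroup (PSigmaAut n)) (M : Rep ℤ H) {i : ℕ} (hi : n ≤ i) :
    Subsingleton (groupCohomology M i) := by
  refine subsingleton_groupCohomology_of_orderAcyclic (G := H) (S := cells n)
    (fun γ _ _ => Finset.smul_finset_subset_smul_finset_iff (a := γ.1))
    (fun γ c hc => IsCell.smul hc γ.1) (orderAcyclic_cells n)
    (fun k s hs => ?_) (fun k s hs γ hγ => Subtype.ext ?_) M hi
  · rw [← hs.2.2]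
    exact card_le_of_isChain hn (fun c hc => hs.1 hc) fun c hc d hd => hs.2.1.total hc hd
  · refine eq_one_of_smul_chain_eq (Finset.card_pos.1 ?_) (fun c hc => hs.1 hc)
      (fun c hc d hd => hs.2.1.total hc hd) hγ
    rw [hs.2.2]
    exact k.succ_pos

end UpperBound

/-! ### The fundamental class of a family of commuting elements -/

section TorusCycle

open CategoryTheory Limits Finset groupCohomology

lemma add_sum_neg_one_pow_mul_castSucc_add_succ {R : Type*} [CommRing R] {m : ℕ}
    (T : Fin (m + 1) → R) :
    T 0 + ∑ j : Fin m, (-1) ^ ((j : ℕ) + 1) * (T j.castSucc + T j.succ) +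
      (-1) ^ (m + 1) * T (Fin.last m) = 0 := by
  induction m with
  | zero => simp
  | succ m ih =>
    rw [Fin.sum_univ_castSucc]
    have h := ih fun j => T j.castSucc
    simp only [Fin.castSucc_zero, Fin.val_castSucc, Fin.succ_castSucc, Fin.val_last,
      Fin.succ_last] at h ⊢
    linear_combination h

lemma contractNth_last {α : Type*} {m : ℕ} (op : α → α → α) (g : Fin (m + 1) → α) (i : Fin m) :
    Fin.contractNth (Fin.last m) op g i = g i.castSucc :=
  Fin.contractNth_apply_of_lt _ _ _ _ i.isLt

lemma contractNth_castSucc_self {α : Type*} {m : ℕ} (op : α → α → α) (g : Fin (m + 1) → α)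
    (j : Fin m) : Fin.contractNth j.castSucc op g j = op (g j.castSucc) (g j.succ) :=
  Fin.contractNth_apply_of_eq _ _ _ _ rfl

lemma contractNth_castSucc_of_ne {α : Type*} {m : ℕ} (op : α → α → α) (g : Fin (m + 1) → α)
    {i j : Fin m} (hij : i ≠ j) :
    Fin.contractNth j.castSucc op g i = g (j.castSucc.succAbove i) := by
  rcases lt_or_gt_of_ne hij with h | h
  · rw [Fin.contractNth_apply_of_lt _ _ _ _ h, Fin.succAbove_of_castSucc_lt _ _ h]
  · rw [Fin.contractNth_apply_of_gt _ _ _ _ h, Fin.succAbove_of_le_castSucc _ _ h.le]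

lemma succAbove_castSucc_eq_succAbove_succ {m : ℕ} {i j : Fin m} (hij : i ≠ j) :
    j.castSucc.succAbove i = j.succ.succAbove i := by
  rcases lt_or_gt_of_ne hij with h | h
  · rw [Fin.succAbove_of_castSucc_lt _ _ h,
      Fin.succAbove_of_castSucc_lt _ _ (Fin.castSucc_lt_succ_iff.2 h.le)]
  · rw [Fin.succAbove_of_le_castSucc _ _ h.le, Fin.succAbove_of_le_castSucc _ _ h]

universe u

variable {k G : Type u} [CommRing k] [Group G] {m : ℕ}

lemma prod_contractNth_castSucc (χ : Fin m → Additive G →+ k) (g : Fin (m + 1) → G) (j : Fin m) :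
    ∏ i, χ i (.ofMul (Fin.contractNth j.castSucc (· * ·) g i)) =
      ∏ i, χ i (.ofMul (g (j.castSucc.succAbove i))) +
        ∏ i, χ i (.ofMul (g (j.succ.succAbove i))) := by
  symm
  rw [add_comm]
  refine prod_add_prod_eq (mem_univ j) ?_ (fun i _ hij => ?_) fun i _ hij => ?_
  · rw [contractNth_castSucc_self, ofMul_mul, _root_.map_add, Fin.succAbove_succ_self,
      Fin.succAbove_castSucc_self]
  · rw [contractNth_castSucc_of_ne _ _ hij, succAbove_castSucc_eq_succAbove_succ hij]
  · rw [contractNth_castSucc_of_ne _ _ hij]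

lemma d_prod_characters (χ : Fin m → Additive G →+ k) :
    inhomogeneousCochains.d (Rep.trivial k G k) m (fun g => ∏ i, χ i (.ofMul (g i))) = 0 := by
  funext g
  have htelescope := add_sum_neg_one_pow_mul_castSucc_add_succ
    fun j => ∏ i, χ i (.ofMul (g (j.succAbove i)))
  rw [inhomogeneousCochains.d_hom_apply, Fin.sum_univ_castSucc, ← add_assoc]
  simpa only [smul_eq_mul, prod_contractNth_castSucc, contractNth_last, Fin.succAbove_zero,
    Fin.succAbove_last, Fin.val_castSucc, Fin.val_last] using! htelescope

/-- Evaluation of inhomogeneous cochains on the chain `∑ σ, sign σ • [a (σ 0) | ⋯ | a (σ (m - 1))]`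
of the bar complex. If the `a i` commute, this chain is the image of the fundamental cycle of the
torus under the homomorphism `ℤ ^ m → G` given by `a`. -/
def torusEval (k : Type u) [CommRing k] (a : Fin m → G) (f : (Fin m → G) → k) : k :=
  ∑ σ : Equiv.Perm (Fin m), Equiv.Perm.sign σ • f fun i => a (σ i)

lemma torusEval_prod_characters {a : Fin m → G} {χ : Fin m → Additive G →+ k}
    (hdual : ∀ i j, χ i (.ofMul (a j)) = if i = j then 1 else 0) :
    torusEval k a (fun g => ∏ i, χ i (.ofMul (g i))) = 1 := by
  rw [← Matrix.det_one (n := Fin m) (R := k), ← Matrix.det_transpose, Matrix.det_apply]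
  simp only [torusEval, hdual, Matrix.transpose_apply, Matrix.one_apply]

lemma contractNth_castSucc_comp_swap {g : Fin (m + 1) → G} {j : Fin m}
    (hcomm : Commute (g j.castSucc) (g j.succ)) :
    Fin.contractNth j.castSucc (· * ·) (fun i => g (Equiv.swap j.castSucc j.succ i)) =
      Fin.contractNth j.castSucc (· * ·) g := by
  funext i
  obtain rfl | hij := eq_or_ne i j
  · rw [contractNth_castSucc_self, contractNth_castSucc_self, Equiv.swap_apply_left,
      Equiv.swap_apply_right, hcomm.eq]
  · rw [contractNth_castSucc_of_ne _ _ hij, contractNth_castSucc_of_ne _ _ hij,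
      Equiv.swap_apply_of_ne_of_ne (Fin.succAbove_ne _ _)]
    rw [succAbove_castSucc_eq_succAbove_succ hij]
    exact Fin.succAbove_ne _ _

lemma sum_sign_smul_contractNth_castSucc {a : Fin (m + 1) → G} (ha : ∀ i j, Commute (a i) (a j))
    (b : (Fin m → G) → k) (j : Fin m) :
    ∑ σ : Equiv.Perm (Fin (m + 1)),
      Equiv.Perm.sign σ • b (Fin.contractNth j.castSucc (· * ·) fun i => a (σ i)) = 0 := by
  have hne : j.castSucc ≠ j.succ := j.castSucc_lt_succ.ne
  refine sum_involution (fun σ _ => σ * Equiv.swap j.castSucc j.succ) (fun σ _ => ?_)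
    (fun σ _ _ h => hne (Equiv.swap_eq_one_iff.1 (mul_eq_left.1 h))) (fun _ _ => mem_univ _)
    fun σ _ => Equiv.mul_swap_involutive _ _ σ
  have hswap := contractNth_castSucc_comp_swap (g := fun i => a (σ i)) (j := j) (ha _ _)
  simp only [Equiv.Perm.mul_apply, Equiv.Perm.sign_mul, Equiv.Perm.sign_swap hne, hswap, mul_neg,
    mul_one, neg_smul, Units.smul_def, Units.val_neg, add_neg_cancel]

lemma sum_sign_smul_contractNth_last (a : Fin (m + 1) → G) (b : (Fin m → G) → k) :
    ∑ σ : Equiv.Perm (Fin (m + 1)),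
      Equiv.Perm.sign σ • b (Fin.contractNth (Fin.last m) (· * ·) fun i => a (σ i)) =
    (-1) ^ m * ∑ σ : Equiv.Perm (Fin (m + 1)), Equiv.Perm.sign σ • b fun i => a (σ i.succ) := by
  rw [← Equiv.sum_comp (Equiv.mulRight (finRotate (m + 1))), mul_sum]
  refine sum_congr rfl fun σ _ => ?_
  have hrotate : Fin.contractNth (Fin.last m) (· * ·)
      (fun i => a ((σ * finRotate (m + 1)) i)) = fun i => a (σ i.succ) := by
    funext i
    rw [contractNth_last, Equiv.Perm.mul_apply, finRotate_apply, Fin.coeSucc_eq_succ]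
  rw [Equiv.coe_mulRight, hrotate, Equiv.Perm.sign_mul, sign_finRotate, Units.smul_def,
    Units.smul_def]
  push_cast [zsmul_eq_mul]
  ring

lemma torusEval_d {a : Fin (m + 1) → G} (ha : ∀ i j, Commute (a i) (a j))
    (b : (Fin m → G) → k) :
    torusEval k a (inhomogeneousCochains.d (Rep.trivial k G k) m b) = 0 := by
  have hd : ∀ g : Fin (m + 1) → G, inhomogeneousCochains.d (Rep.trivial k G k) m b g =
      b (fun i => g i.succ) +
        ∑ j : Fin (m + 1), (-1 : k) ^ ((j : ℕ) + 1) * b (Fin.contractNth j (· * ·) g) :=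
    inhomogeneousCochains.d_hom_apply (Rep.trivial k G k) m b
  have hsign : (-1 : k) ^ (m + 1) * (-1) ^ m = -1 := by
    rw [← pow_add]
    exact Odd.neg_one_pow ⟨m, by ring⟩
  simp only [torusEval, hd, smul_add, sum_add_distrib, smul_sum]
  rw [sum_comm, Fin.sum_univ_castSucc]
  simp only [← mul_smul_comm, ← mul_sum, sum_sign_smul_contractNth_castSucc ha,
    sum_sign_smul_contractNth_last, mul_zero, sum_const_zero, zero_add, Fin.val_last]
  rw [← mul_assoc, hsign]
  ring

theorem nontrivial_groupCohomology_of_commute [Nontrivial k] {a : Fin (m + 1) → G}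
    (ha : ∀ i j, Commute (a i) (a j)) {χ : Fin (m + 1) → Additive G →+ k}
    (hdual : ∀ i j, χ i (.ofMul (a j)) = if i = j then 1 else 0) :
    Nontrivial (groupCohomology (Rep.trivial k G k) (m + 1)) := by
  by_contra htrivial
  rw [not_nontrivial_iff_subsingleton] at htrivial
  have hexact : (inhomogeneousCochains (Rep.trivial k G k)).ExactAt (m + 1) :=
    (HomologicalComplex.exactAt_iff_isZero_homology _ _).2
      (ModuleCat.isZero_of_subsingleton (groupCohomology (Rep.trivial k G k) (m + 1)))
  rw [HomologicalComplex.exactAt_iff' _ m (m + 1) (m + 2) (by simp) (by simp),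
    ShortComplex.moduleCat_exact_iff] at hexact
  have hd := inhomogeneousCochains.d_def (Rep.trivial k G k)
  obtain ⟨b, hb⟩ := hexact (fun g => ∏ i, χ i (.ofMul (g i)))
    ((congrArg (fun f => f.hom fun g => ∏ i, χ i (.ofMul (g i))) (hd (m + 1))).trans
      (d_prod_characters χ))
  have hcoboundary : inhomogeneousCochains.d (Rep.trivial k G k) m b =
      fun g => ∏ i, χ i (.ofMul (g i)) :=
    (congrArg (fun f => f.hom b) (hd m)).symm.trans hb
  refine zero_ne_one (α := k) ?_
  rw [← torusEval_prod_characters hdual, ← hcoboundary]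
  exact (torusEval_d ha b).symm

end TorusCycle

section LowerBound

lemma desc_twist_last {m : ℕ} (u : Fin (m + 1) → ℤ) :
    desc (m + 1) (twist (Fin.last m) u).1 = MonoidHom.id _ := by
  refine FreeGroup.ext_hom _ _ fun b => ?_
  have hlast : projHom (m + 1) (of (Fin.last m)) = 1 := by simp [projHom]
  have hcast : projHom (m + 1) (of (Fin.castSucc b)) = of b := by
    rw [projHom, FreeGroup.lift_apply_of, dif_pos (show (b.castSucc : ℕ) < m + 1 - 1 from b.isLt)]
    rfl
  calc desc (m + 1) (twist (Fin.last m) u).1 (of b)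
      = projHom (m + 1) (twistHom (Fin.last m) u (of b.castSucc)) := by
        rw [desc, MonoidHom.comp_apply, MonoidHom.comp_apply, castHom, FreeGroup.lift_apply_of]
        rfl
    _ = of b := by
        rw [twistHom_of, _root_.map_mul, _root_.map_mul, _root_.map_inv, _root_.map_zpow, hlast,
          hcast, one_zpow, inv_one, mul_one, one_mul]

lemma twist_last_mem_Kn {m : ℕ} (u : Fin (m + 1) → ℤ) : twist (Fin.last m) u ∈ Kn (m + 1) :=
  MonoidHom.mem_ker.2 (Subtype.ext (MulEquiv.ext fun x => DFunLike.congr_fun (desc_twist_last u) x))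

/-- The homomorphism `φ ↦ conjExponent φ i j` from `PΣ_n` to `ℤ`. -/
noncomputable def conjExponentHom {n : ℕ} (i j : Fin n) : Additive (PSigmaAut n) →+ ℤ where
  toFun φ := conjExponent φ.toMul i j
  map_zero' := by rw [toMul_zero, conjExponent_one]; rfl
  map_add' φ ψ := by rw [toMul_add, conjExponent_mul]; rfl

theorem nontrivial_groupCohomology_of_Kn_le {m : ℕ} {H : Subgroup (PSigmaAut (m + 2))}
    (hH : Kn (m + 2) ≤ H) : Nontrivial (groupCohomology (Rep.trivial ℤ H ℤ) (m + 1)) := by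
  refine nontrivial_groupCohomology_of_commute
    (a := fun i => ⟨twist (Fin.last (m + 1)) (Pi.single i.castSucc 1), hH (twist_last_mem_Kn _)⟩)
    (χ := fun i => (conjExponentHom (Fin.last (m + 1)) i.castSucc).comp
      (MonoidHom.toAdditive H.subtype)) (fun i j => Subtype.ext ?_) fun i j => ?_
  · change twist _ _ * twist _ _ = twist _ _ * twist _ _
    rw [← twist_add, ← twist_add, add_comm (Pi.single (M := fun _ => ℤ) _ _)]
  · change conjExponent (twist _ _) _ _ = _
    rw [conjExponent_twist (Pi.single_eq_of_ne (Fin.castSucc_lt_last j).ne' _), Pi.single_eq_same,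
      Pi.single_apply]
    simp only [Fin.castSucc_inj]

end LowerBound

theorem statement0_general (n : ℕ) (hn : 2 ≤ n) (H : Subgroup (PSigmaAut n)) (hH : Kn n ≤ H) :
    (∀ (M : Rep ℤ H) (i : ℕ), n ≤ i → Subsingleton (groupCohomology M i)) ∧
      ∃ M : Rep ℤ H, Nontrivial (groupCohomology M (n - 1)) := by
  refine ⟨fun M i hi => subsingleton_groupCohomology_subgroup (by omega) H M hi, ?_⟩
  obtain ⟨m, rfl⟩ := Nat.exists_eq_add_of_le' hn
  exact ⟨Rep.trivial ℤ H ℤ, nontrivial_groupCohomology_of_Kn_le hH⟩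

/-- For every `n ≥ 2`, the group `K_n` has cohomological dimension `n - 1`:
`H^i(K_n; M)` vanishes for every `ℤ`-linear representation `M` and every `i ≥ n`, and
there is a `ℤ`-linear representation `M` with `H^{n-1}(K_n; M) ≠ 0`. -/
theorem statement0 (n : ℕ) (hn : 2 ≤ n) :
    (∀ (M : Rep ℤ ↥(Kn n)) (i : ℕ), n ≤ i → Subsingleton (groupCohomology M i)) ∧
      ∃ M : Rep ℤ ↥(Kn n), Nontrivial (groupCohomology M (n - 1)) :=
  statement0_general n hn (Kn n) le_rfl
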